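/- arXiv:1401.0041 — 4 statements merged into one kernel-verified Lean document; each statement's English description precedes it below -/
import Mathlib

section
/- Let S ⊆ ℝ² be a simple closed curve and let X ⊆ ℝ² be a set with S ⊆ X. If there exists a point a in the bounded connected component of ℝ² ∖ S with a ∉ X, then S is a retract of X, i.e., there exists a continuous map r : X → S with r(s) = s for all s ∈ S. -/
/-- A space has the fixed point property: every continuous self-map has a fixed point. -/
def HasFPP (Y : Type*) [TopologicalSpace Y] : Prop :=
  ∀ f : Y → Y, Continuous f → ∃ x, f x = x

/-- A space has the periodic point property: every continuous self-map has a periodic point. -/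
def HasPPP (Y : Type*) [TopologicalSpace Y] : Prop :=
  ∀ f : Y → Y, Continuous f → ∃ x, ∃ n : ℕ, 1 ≤ n ∧ f^[n] x = x

/-- Local fixed point property: there is an open basis whose members have closures with FPP. -/
def HasLFPP (Y : Type*) [TopologicalSpace Y] : Prop :=
  ∃ 𝓑 : Set (Set Y), TopologicalSpace.IsTopologicalBasis 𝓑 ∧
    ∀ B ∈ 𝓑, HasFPP ↥(closure B)

/-- Weak local fixed point property. -/
def HasWLFPP (Y : Type*) [TopologicalSpace Y] : Prop :=
  ∃ 𝓑 : Set (Set Y), TopologicalSpace.IsTopologicalBasis 𝓑 ∧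
    ∀ B ∈ 𝓑, ∀ f : Y → Y, Continuous f → f '' closure B ⊆ B → ∃ x ∈ B, f x = x

/-- Local periodic point property. -/
def HasLPPP (Y : Type*) [TopologicalSpace Y] : Prop :=
  ∃ 𝓑 : Set (Set Y), TopologicalSpace.IsTopologicalBasis 𝓑 ∧
    ∀ B ∈ 𝓑, HasPPP ↥(closure B)

/-- Weak local periodic point property. -/
def HasWLPPP (Y : Type*) [TopologicalSpace Y] : Prop :=
  ∃ 𝓑 : Set (Set Y), TopologicalSpace.IsTopologicalBasis 𝓑 ∧
    ∀ B ∈ 𝓑, ∀ f : Y → Y, Continuous f → f '' closure B ⊆ B →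
      ∃ x ∈ B, ∃ n : ℕ, 1 ≤ n ∧ f^[n] x = x

/-- A subset is a simple closed curve if it is homeomorphic to the unit circle. -/
def IsSimpleClosedCurve {α : Type*} [TopologicalSpace α] (S : Set α) : Prop :=
  Nonempty (↥S ≃ₜ ↥(Metric.sphere (0 : EuclideanSpace ℝ (Fin 2)) 1))

/-- Covering dimension at most `n`: every finite open cover admits an open shrinking
of order at most `n + 1`. -/
def CoveringDimLE (Y : Type*) [TopologicalSpace Y] (n : ℕ) : Prop :=
  ∀ (ι : Type) [Finite ι] (U : ι → Set Y), (∀ i, IsOpen (U i)) → (⋃ i, U i) = Set.univ →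
    ∃ V : ι → Set Y, (∀ i, IsOpen (V i)) ∧ (∀ i, V i ⊆ U i) ∧ (⋃ i, V i) = Set.univ ∧
      ∀ y : Y, {i | y ∈ V i}.ncard ≤ n + 1

/-- A dendrite: a locally connected (metric) continuum containing no simple closed curve. -/
def IsDendrite {α : Type*} [TopologicalSpace α] (D : Set α) : Prop :=
  IsCompact D ∧ IsConnected D ∧ LocallyConnectedSpace ↥D ∧ ∀ S ⊆ D, ¬ IsSimpleClosedCurve S

/-- A local dendrite: every point has a closed neighborhood which is a dendrite. -/
def IsLocalDendrite (Y : Type*) [TopologicalSpace Y] : Prop :=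
  ∀ y : Y, ∃ N : Set Y, N ∈ nhds y ∧ IsClosed N ∧ IsDendrite N

open Complex in
lemma exp_one_const {X : Type*} [TopologicalSpace X] [PreconnectedSpace X] (φ : X → ℂ)
    (hφ : Continuous φ) (h : ∀ x, exp (φ x) = 1) (x y : X) : φ x = φ y := by
  have := Complex.isCoveringMap_exp.eq_of_comp_eq hφ (continuous_const (y := φ y))
    (by funext z; simp [h]) y rfl
  exact congrFun this x

open Complex in
lemma exists_log {X : Type*} [TopologicalSpace X] [SimplyConnectedSpace X]
    [LocallyPathConnectedSpace X] (f : C(X, ℂ)) (hf : ∀ x, f x ≠ 0) :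
    ∃ G : C(X, ℂ), ∀ x, exp (G x) = f x := by
  obtain ⟨x₀⟩ : Nonempty X := inferInstance
  obtain ⟨F, ⟨-, hF⟩, -⟩ := Complex.isCoveringMapOn_exp.existsUnique_continuousMap_lifts f
    (exp_log (hf x₀)) hf
  exact ⟨F, fun x => congrFun hF x⟩

open Complex in
lemma circle_deg (f : C(Circle, ℂ)) (hf : ∀ z, f z ≠ 0) :
    ∃ (k : ℤ) (g : C(Circle, ℂ)), ∀ z : Circle, f z = (z : ℂ) ^ k * exp (g z) := by
  obtain ⟨G, hG⟩ := exists_log (f.comp Circle.exp) (fun t => hf _)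
  have hper : ∀ t, exp (G (t + 2 * Real.pi) - G t) = 1 := by
    intro t
    rw [exp_sub, hG, hG]
    have h1 : (f.comp Circle.exp) (t + 2 * Real.pi) = (f.comp Circle.exp) t :=
      congrArg f (Circle.exp_add_two_pi t)
    rw [h1]
    exact div_self (hf _)
  obtain ⟨k, hk⟩ := exp_eq_one_iff.1 (hper 0)
  have hk' : ∀ t, G (t + 2 * Real.pi) = G t + k * (2 * Real.pi * I) := by
    intro t
    have := exp_one_const (fun t => G (t + 2 * Real.pi) - G t) (by fun_prop) hper t 0
    rw [hk] at this
    linear_combination this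
  let H : C(ℝ, ℂ) := ⟨fun t => G t - k * t * I, by fun_prop⟩
  have hH : Function.Periodic H (2 * Real.pi) := by
    intro t
    simp only [H, ContinuousMap.coe_mk, hk']
    push_cast
    ring
  have hq : Topology.IsQuotientMap Circle.exp :=
    Circle.isAddQuotientCoveringMap_exp.toIsQuotientMap
  have hfac : ∀ x y, Circle.exp x = Circle.exp y → H x = H y := by
    intro x y h
    obtain ⟨m, hm⟩ := Circle.exp_eq_exp.1 h
    rw [hm]
    exact hH.int_mul m y
  let g : C(Circle, ℂ) := hq.lift (f := Circle.exp) H hfac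
  have hg : ∀ t, g (Circle.exp t) = H t := fun t => by
    have := hq.lift_comp (f := Circle.exp) H hfac
    exact congrArg (fun F : C(ℝ, ℂ) => F t) this
  refine ⟨k, g, fun z => ?_⟩
  obtain ⟨t, rfl⟩ := hq.surjective z
  rw [hg]
  have := hG t
  simp only [ContinuousMap.comp_apply] at this
  rw [← this, Circle.coe_exp, ← exp_int_mul, ← exp_add]
  simp only [H, ContinuousMap.coe_mk]
  congr 1
  ring

lemma frontier_comp {S : Set ℂ} (hS : IsClosed S) (a : ℂ) :
    closure (connectedComponentIn Sᶜ a) ⊆ connectedComponentIn Sᶜ a ∪ S := by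
  intro z hz
  by_cases hzS : z ∈ S
  · exact Or.inr hzS
  left
  have ho : IsOpen (connectedComponentIn Sᶜ z) := hS.isOpen_compl.connectedComponentIn
  obtain ⟨w, hw, hw'⟩ := mem_closure_iff.1 hz _ ho (mem_connectedComponentIn hzS)
  rw [connectedComponentIn_eq hw', ← connectedComponentIn_eq hw]
  exact mem_connectedComponentIn hzS

open Complex in
lemma no_log {S : Set ℂ} (hS : IsClosed S) {a : ℂ} (haS : a ∉ S)
    (hb : Bornology.IsBounded (connectedComponentIn Sᶜ a)) (g : C(S, ℂ))
    (hg : ∀ z : S, exp (g z) = z - a) : False := by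
  classical
  obtain ⟨G, hG⟩ := g.exists_restrict_eq hS
  set U := connectedComponentIn Sᶜ a with hU
  have haU : a ∈ U := mem_connectedComponentIn haS
  have hUo : IsOpen U := hS.isOpen_compl.connectedComponentIn
  let F : C(ℂ, ℂ) := ⟨fun z => if z ∈ U then exp (G z) else z - a, by
    refine Continuous.if ?_ (by fun_prop) (by fun_prop)
    intro z hz
    have hzU : z ∉ U := fun h => by
      exact hz.2 (hUo.interior_eq.symm ▸ h)
    have hzS : z ∈ S := (frontier_comp hS a (frontier_subset_closure hz)).resolve_left hzU
    rw [← hg ⟨z, hzS⟩, ← hG]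
    rfl⟩
  have hF : ∀ z, F z ≠ 0 := by
    intro z
    simp only [F, ContinuousMap.coe_mk]
    split_ifs with h
    · exact exp_ne_zero _
    · intro h0
      rw [sub_eq_zero] at h0
      exact h (h0 ▸ haU)
  obtain ⟨L, hL⟩ := exists_log F hF
  obtain ⟨R, hR0, hR⟩ := hb.subset_ball_lt 0 a
  have hout : ∀ t : ℝ, F (a + R * exp (t * I)) = R * exp (t * I) := by
    intro t
    have : a + R * exp (t * I) ∉ U := fun h => by
      have := hR h
      simp [norm_exp_ofReal_mul_I, abs_of_pos hR0] at this
    simp [F, this]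
  have hR' : (R : ℂ) ≠ 0 := by exact_mod_cast hR0.ne'
  have := exp_one_const (fun t : ℝ => L (a + R * exp (t * I)) - t * I - log R) (by fun_prop)
    (fun t => by rw [exp_sub, exp_sub, hL, hout, exp_log hR']; field_simp) (2 * Real.pi) 0
  simp only [ofReal_mul, ofReal_ofNat, exp_two_pi_mul_I, ofReal_zero, zero_mul, exp_zero] at this
  have h2 : (2 * Real.pi * I : ℂ) = 0 := by linear_combination -this
  exact two_pi_I_ne_zero h2

open Complex in
lemma log_near {K : Set ℂ} {q q' : ℂ} (h : ∀ z ∈ K, ‖q - q'‖ < ‖z - q‖)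
    (hq : ∃ l : C(K, ℂ), ∀ z : K, exp (l z) = z - q) :
    ∃ l : C(K, ℂ), ∀ z : K, exp (l z) = z - q' := by
  obtain ⟨l, hl⟩ := hq
  have hne : ∀ z : K, (z : ℂ) - q ≠ 0 := fun z h0 => by
    have := h z z.2
    rw [h0, norm_zero] at this
    exact absurd this (not_lt.2 (norm_nonneg _))
  have hs : ∀ z : K, 1 + (q - q') / ((z : ℂ) - q) ∈ slitPlane := fun z => by
    apply mem_slitPlane_of_norm_lt_one
    rw [norm_div]
    exact (div_lt_one (norm_pos_iff.2 (hne z))).2 (h z z.2)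
  refine ⟨⟨fun z => l z + log (1 + (q - q') / ((z : ℂ) - q)), ?_⟩, fun z => ?_⟩
  · refine (map_continuous l).add (Continuous.clog ?_ hs)
    exact continuous_const.add (continuous_const.div (by fun_prop) hne)
  · have := hne z
    simp only [ContinuousMap.coe_mk]
    rw [exp_add, hl, exp_log (slitPlane_ne_zero (hs z))]
    field_simp
    ring

open Complex in
lemma log_of_unbounded {K : Set ℂ} (hK : IsCompact K) {p : ℂ} (hp : p ∉ K)
    (hb : ¬ Bornology.IsBounded (connectedComponentIn Kᶜ p)) :
    ∃ l : C(K, ℂ), ∀ z : K, exp (l z) = z - p := by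
  by_contra hcon
  set V := connectedComponentIn Kᶜ p with hV
  let P : ℂ → Prop := fun q => ∃ l : C(K, ℂ), ∀ z : K, exp (l z) = z - q
  have key : ∀ q ∉ K, ∃ ε > 0, ∀ q', ‖q - q'‖ < ε → q' ∉ K ∧ (P q ↔ P q') := by
    intro q hq
    obtain ⟨δ, hδ, hball⟩ := Metric.isOpen_iff.1 hK.isClosed.isOpen_compl q hq
    have hfar : ∀ z ∈ K, δ ≤ ‖z - q‖ := fun z hz => by
      by_contra h
      exact hball (by simpa [dist_eq_norm] using h : z ∈ Metric.ball q δ) hz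
    refine ⟨δ / 2, by positivity, fun q' hq' => ⟨?_, ?_, ?_⟩⟩
    · intro h
      have := hfar q' h
      rw [norm_sub_rev] at this
      linarith
    · exact log_near fun z hz => by linarith [hfar z hz]
    · refine log_near fun z hz => ?_
      have h1 := hfar z hz
      have h2 : ‖z - q‖ ≤ ‖z - q'‖ + ‖q' - q‖ := norm_sub_le_norm_sub_add_norm_sub _ _ _
      rw [norm_sub_rev q'] at *
      linarith
  have hA : IsOpen {q | q ∉ K ∧ P q} := by
    rw [Metric.isOpen_iff]
    rintro q ⟨hq, hPq⟩
    obtain ⟨ε, hε, h⟩ := key q hq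
    refine ⟨ε, hε, fun q' hq' => ?_⟩
    rw [Metric.mem_ball, dist_comm, dist_eq_norm] at hq'
    exact ⟨(h q' hq').1, (h q' hq').2.1 hPq⟩
  have hB : IsOpen {q | q ∉ K ∧ ¬ P q} := by
    rw [Metric.isOpen_iff]
    rintro q ⟨hq, hPq⟩
    obtain ⟨ε, hε, h⟩ := key q hq
    refine ⟨ε, hε, fun q' hq' => ?_⟩
    rw [Metric.mem_ball, dist_comm, dist_eq_norm] at hq'
    exact ⟨(h q' hq').1, fun h' => hPq ((h q' hq').2.2 h')⟩
  obtain ⟨R, hR0, hR⟩ := hK.isBounded.subset_ball_lt 0 0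
  have hfar : ∃ q ∈ V, R < ‖q‖ := by
    by_contra! h
    exact hb ((Metric.isBounded_closedBall (x := (0 : ℂ)) (r := R)).subset fun q hq => by
      simpa using h q hq)
  obtain ⟨q, hqV, hqR⟩ := hfar
  have hVK : V ⊆ Kᶜ := connectedComponentIn_subset _ _
  have hq0 : q ≠ 0 := norm_pos_iff.1 (hR0.trans hqR)
  have hPq : P q := by
    have hs : ∀ z : K, 1 + -((z : ℂ) / q) ∈ slitPlane := fun z => by
      apply mem_slitPlane_of_norm_lt_one
      rw [norm_neg, norm_div]
      have : ‖(z : ℂ)‖ < R := by simpa using hR z.2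
      exact (div_lt_one (norm_pos_iff.2 hq0)).2 (this.trans hqR)
    refine ⟨⟨fun z => log (1 + -((z : ℂ) / q)) + log (-q), ?_⟩, fun z => ?_⟩
    · exact (Continuous.clog (by fun_prop) hs).add continuous_const
    · simp only [ContinuousMap.coe_mk]
      rw [exp_add, exp_log (slitPlane_ne_zero (hs z)), exp_log (neg_ne_zero.2 hq0)]
      field_simp
      ring
  obtain ⟨x, -, hx1, hx2⟩ := (isPreconnected_connectedComponentIn (F := Kᶜ) (x := p)) _ _ hA hB
    (fun x hx => by
      by_cases h : P x
      · exact Or.inl ⟨hVK hx, h⟩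
      · exact Or.inr ⟨hVK hx, h⟩)
    ⟨q, hqV, hVK hqV, hPq⟩ ⟨p, mem_connectedComponentIn hp, hp, hcon⟩
  exact hx2.2 hx1.2

lemma rot_comp {K : Set ℂ} (hK : IsCompact K) (hKc : IsPreconnected K) (h0 : (0 : ℂ) ∉ K)
    (hb : Bornology.IsBounded (connectedComponentIn Kᶜ 0)) {ζ : ℂ} (hζ : ‖ζ‖ = 1)
    (hdis : ∀ x ∈ K, ζ * x ∉ K) :
    ∀ u ∈ connectedComponentIn Kᶜ 0, ζ * u ∈ connectedComponentIn Kᶜ 0 := by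
  set U := connectedComponentIn Kᶜ 0 with hU
  have hζ0 : ζ ≠ 0 := by rintro rfl; simp at hζ
  have hnot : ∀ u ∈ U, ζ * u ∉ K := by
    intro u hu hk
    have hsub : (fun x => ζ⁻¹ * x) '' K ⊆ U := by
      rw [hU, connectedComponentIn_eq hu]
      refine (hKc.image _ (by fun_prop)).subset_connectedComponentIn ⟨_, hk, ?_⟩ ?_
      · simp [hζ0]
      · rintro _ ⟨x, hx, rfl⟩ hx'
        apply hdis _ hx'
        simpa [hζ0] using hx
    obtain ⟨m, hmK, hm⟩ := hK.exists_isMaxOn ⟨_, hk⟩ (f := fun x => ‖x‖) (by fun_prop)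
    have hw : ζ⁻¹ * m ∈ U := hsub ⟨m, hmK, rfl⟩
    have hm0 : 0 < ‖m‖ := norm_pos_iff.2 (by rintro rfl; exact h0 hmK)
    have hn : ∀ t : ℝ, 1 ≤ t → ‖(t : ℂ) * (ζ⁻¹ * m)‖ = t * ‖m‖ := fun t ht => by
      simp [hζ, abs_of_nonneg (zero_le_one.trans ht)]
    have hray : (fun t : ℝ => (t : ℂ) * (ζ⁻¹ * m)) '' Set.Ici 1 ⊆ U := by
      rw [hU, connectedComponentIn_eq hw]
      refine (isPreconnected_Ici.image _ (by fun_prop)).subset_connectedComponentIn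
        ⟨1, by simp, by simp⟩ ?_
      rintro _ ⟨t, ht, rfl⟩ hx
      rw [Set.mem_Ici] at ht
      have h1 := hm hx
      simp only [Set.mem_ofPred_eq] at h1
      rw [hn t ht] at h1
      have : t = 1 := le_antisymm (by nlinarith) ht
      subst this
      simp only [Complex.ofReal_one, one_mul] at hx
      exact connectedComponentIn_subset _ _ hw hx
    obtain ⟨R, hR0, hR⟩ := hb.subset_ball_lt 0 0
    have ht : (1 : ℝ) ≤ 1 + R / ‖m‖ := by
      have : 0 < R / ‖m‖ := by positivity
      linarith
    have := hR (hray ⟨_, ht, rfl⟩)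
    rw [mem_ball_zero_iff, hn _ ht, add_mul, div_mul_cancel₀ _ hm0.ne'] at this
    linarith
  intro u hu
  have : (fun x => ζ * x) '' U ⊆ U := by
    refine (isPreconnected_connectedComponentIn.image _ (by fun_prop)).subset_connectedComponentIn
      ⟨0, mem_connectedComponentIn h0, by simp⟩ ?_
    rintro _ ⟨x, hx, rfl⟩
    exact hnot x hx
  exact this ⟨u, hu, rfl⟩

lemma nested_false {K : Set ℂ} (hK : IsCompact K) (hKc : IsPreconnected K) (h0 : (0 : ℂ) ∉ K)
    (hb : Bornology.IsBounded (connectedComponentIn Kᶜ 0)) {ζ : ℂ} (hζ : ‖ζ‖ = 1)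
    (hdis : ∀ x ∈ K, ζ * x ∉ K) : False := by
  have hζ0 : ζ ≠ 0 := by rintro rfl; simp at hζ
  have h1 := rot_comp hK hKc h0 hb hζ hdis
  have h2 := rot_comp hK hKc h0 hb (ζ := ζ⁻¹) (by simp [hζ]) (fun x hx hx' => by
    apply hdis _ hx'
    simpa [hζ0] using hx)
  set U := connectedComponentIn Kᶜ 0 with hU
  have hUo : IsOpen U := hK.isClosed.isOpen_compl.connectedComponentIn
  have hne : (frontier U).Nonempty := by
    rw [nonempty_frontier_iff]
    refine ⟨⟨0, mem_connectedComponentIn h0⟩, fun h => ?_⟩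
    rw [h] at hb
    exact NormedSpace.unbounded_univ ℝ ℂ hb
  obtain ⟨x, hx⟩ := hne
  have hxU : x ∉ U := fun h => by
    exact hx.2 (hUo.interior_eq.symm ▸ h)
  have hxc := frontier_subset_closure hx
  have hxK : x ∈ K := (frontier_comp hK.isClosed 0 hxc).resolve_left hxU
  have hζx : ζ * x ∈ closure U :=
    map_mem_closure (f := fun y => ζ * y) (by fun_prop) hxc h1
  have := h2 _ ((frontier_comp hK.isClosed 0 hζx).resolve_right (hdis x hxK))
  rw [inv_mul_cancel_left₀ hζ0] at this
  exact hxU this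

open Complex in
lemma main_pos {S : Set ℂ} (h : S ≃ₜ Circle) {a : ℂ} (haS : a ∉ S)
    (hb : Bornology.IsBounded (connectedComponentIn Sᶜ a)) (n : ℕ) (g : C(Circle, ℂ))
    (hg : ∀ z : Circle, (h.symm z : ℂ) - a = (z : ℂ) ^ n * exp (g z)) :
    ∃ r : {z : ℂ // z ≠ a} → S, Continuous r ∧ ∀ x : {z : ℂ // z ≠ a}, x.1 ∈ S →
      (r x : ℂ) = x.1 := by
  have hSc : IsCompact S := by
    have : CompactSpace S := h.symm.compactSpace
    exact isCompact_iff_compactSpace.2 this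
  have hg' : ∀ x : S, (x : ℂ) - a = (h x : ℂ) ^ n * exp (g (h x)) := fun x => by
    rw [← hg, h.symm_apply_apply]
  have hlog : ∀ l : C(S, ℂ), ¬ ∀ z : S, exp (l z) = z - a :=
    fun l hl => no_log hSc.isClosed haS hb l hl
  let gS : C(S, ℂ) := ⟨fun x => g (h x), by fun_prop⟩
  obtain rfl | rfl | hn : n = 0 ∨ n = 1 ∨ 2 ≤ n := by omega
  · exact (hlog gS fun z => by rw [hg']; simp [gS]).elim
  · obtain ⟨G, hG⟩ := gS.exists_restrict_eq hSc.isClosed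
    let w : {z : ℂ // z ≠ a} → ℂ := fun x => (x.1 - a) * exp (-G x.1)
    have hw0 : ∀ x, w x ≠ 0 := fun x => mul_ne_zero (sub_ne_zero.2 x.2) (exp_ne_zero _)
    have hw : Continuous w := by fun_prop
    have hn : ∀ x, ‖w x / ‖w x‖‖ = 1 := fun x => by
      have := norm_pos_iff.2 (hw0 x)
      rw [norm_div, norm_real, norm_norm, div_self this.ne']
    let c : {z : ℂ // z ≠ a} → Circle := fun x => ⟨w x / ‖w x‖, mem_sphere_zero_iff_norm.2 (hn x)⟩
    have hc : Continuous c := by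
      refine Continuous.subtype_mk ?_ _
      refine hw.div (continuous_ofReal.comp hw.norm) fun x => ?_
      exact_mod_cast (norm_pos_iff.2 (hw0 x)).ne'
    refine ⟨fun x => h.symm (c x), h.symm.continuous.comp hc, fun x hx => ?_⟩
    have hwx : w x = h ⟨x.1, hx⟩ := by
      have h1 := hg' ⟨x.1, hx⟩
      have h2 : G x.1 = g (h ⟨x.1, hx⟩) := congrArg (fun F : C(S, ℂ) => F ⟨x.1, hx⟩) hG
      simp only [w]
      simp only at h1
      rw [h1, h2, pow_one, mul_assoc, ← exp_add]
      simp
    have : c x = h ⟨x.1, hx⟩ := by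
      apply Circle.ext
      change w x / ‖w x‖ = _
      rw [hwx, Circle.norm_coe]
      simp
    change (h.symm (c x) : ℂ) = x.1
    rw [this, h.symm_apply_apply]
  · exfalso
    have hn0 : (n : ℂ) ≠ 0 := by exact_mod_cast (by omega : n ≠ 0)
    let w : C(S, ℂ) := ⟨fun x => (h x : ℂ) * exp (g (h x) / n), by fun_prop⟩
    have hwn : ∀ x, w x ^ n = x - a := fun x => by
      simp only [w, ContinuousMap.coe_mk]
      rw [mul_pow, ← exp_nat_mul, mul_div_cancel₀ _ hn0, hg']
    have hw0 : ∀ x, w x ≠ 0 := fun x => mul_ne_zero (Circle.coe_ne_zero _) (exp_ne_zero _)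
    have : CompactSpace S := h.symm.compactSpace
    have hconnC : PreconnectedSpace Circle :=
      Circle.isAddQuotientCoveringMap_exp.toIsQuotientMap.surjective.denseRange.preconnectedSpace
        Circle.exp.continuous
    have : PreconnectedSpace S :=
      h.symm.surjective.denseRange.preconnectedSpace h.symm.continuous
    have hK : IsCompact (Set.range w) := isCompact_range w.continuous
    have hKc : IsPreconnected (Set.range w) := isPreconnected_range w.continuous
    have h0 : (0 : ℂ) ∉ Set.range w := by
      rintro ⟨x, hx⟩
      exact hw0 x hx
    have hbK : Bornology.IsBounded (connectedComponentIn (Set.range w)ᶜ 0) := by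
      by_contra hnb
      obtain ⟨l, hl⟩ := log_of_unbounded hK h0 hnb
      refine hlog ⟨fun x => n * l ⟨w x, x, rfl⟩, ?_⟩ fun x => ?_
      · exact continuous_const.mul (l.continuous.comp (w.continuous.subtype_mk _))
      · simp only [ContinuousMap.coe_mk]
        rw [exp_nat_mul, hl, sub_zero, hwn]
    have hζ := isPrimitiveRoot_exp n (by omega)
    refine nested_false hK hKc h0 hbK (hζ.norm'_eq_one (by omega)) ?_
    rintro _ ⟨x, rfl⟩ ⟨y, hy⟩
    have h1 : (y : ℂ) - a = x - a := by
      rw [← hwn, ← hwn, hy, mul_pow, hζ.pow_eq_one, one_mul]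
    have h2 : y = x := Subtype.ext (by linear_combination h1)
    rw [h2] at hy
    have h3 := mul_right_cancel₀ (hw0 x) ((one_mul (w x)).trans hy)
    exact hζ.ne_one (by omega) h3.symm

open Complex in
lemma main_complex {S : Set ℂ} (h : S ≃ₜ Circle) {a : ℂ} (haS : a ∉ S)
    (hb : Bornology.IsBounded (connectedComponentIn Sᶜ a)) :
    ∃ r : {z : ℂ // z ≠ a} → S, Continuous r ∧ ∀ x : {z : ℂ // z ≠ a}, x.1 ∈ S →
      (r x : ℂ) = x.1 := by
  obtain ⟨k, g, hg⟩ := circle_deg ⟨fun z => (h.symm z : ℂ) - a, by fun_prop⟩ (fun z h0 => by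
    simp only [ContinuousMap.coe_mk, sub_eq_zero] at h0
    exact haS (h0 ▸ (h.symm z).2))
  simp only [ContinuousMap.coe_mk] at hg
  obtain ⟨n, rfl | rfl⟩ := k.eq_nat_or_neg
  · exact main_pos h haS hb n g (fun z => by rw [hg, zpow_natCast])
  · refine main_pos (h.trans (Homeomorph.inv Circle)) haS hb n
      ⟨fun z => g z⁻¹, by fun_prop⟩ (fun z => ?_)
    have := hg z⁻¹
    simpa using this

/-- If a set `X` contains a simple closed curve `S` and misses a point of the bounded
component of the complement of `S`, then `S` is a retract of `X`. -/
theorem stmt_9 (S X : Set (EuclideanSpace ℝ (Fin 2)))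
    (hS : IsSimpleClosedCurve S) (hSX : S ⊆ X)
    (a : EuclideanSpace ℝ (Fin 2)) (haS : a ∉ S)
    (hbdd : Bornology.IsBounded (connectedComponentIn Sᶜ a))
    (haX : a ∉ X) :
    ∃ r : X → S, Continuous r ∧
      ∀ x : X, (x : EuclideanSpace ℝ (Fin 2)) ∈ S → (r x : EuclideanSpace ℝ (Fin 2)) = x := by
  obtain ⟨h⟩ := hS
  let e := Complex.orthonormalBasisOneI.repr.symm
  let E : EuclideanSpace ℝ (Fin 2) ≃ₜ ℂ := e.toHomeomorph
  have hE : ∀ x, ‖E x‖ = ‖x‖ := e.norm_map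
  let c : ↥(Metric.sphere (0 : EuclideanSpace ℝ (Fin 2)) 1) ≃ₜ Circle :=
    E.subtype (q := fun z => z ∈ Submonoid.unitSphere ℂ) (fun x => by
      rw [mem_sphere_zero_iff_norm, ← hE]
      exact mem_sphere_zero_iff_norm.symm)
  have haS' : E a ∉ E '' S := by
    rwa [E.injective.mem_set_image]
  obtain ⟨r, hr, hrS⟩ := main_complex ((E.image S).symm.trans (h.trans c)) haS' (by
    rw [← Set.image_compl_eq E.bijective, ← E.image_connectedComponentIn haS]
    exact e.lipschitz.isBounded_image hbdd)
  refine ⟨fun x => (E.image S).symm (r ⟨E x, fun hx => haX (E.injective hx ▸ x.2)⟩), ?_, ?_⟩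
  · refine (E.image S).symm.continuous.comp (hr.comp ?_)
    exact (E.continuous.comp continuous_subtype_val).subtype_mk _
  · intro x hx
    apply E.injective
    have h1 : ∀ y, E ((E.image S).symm y : EuclideanSpace ℝ (Fin 2)) = y := fun y =>
      congrArg Subtype.val ((E.image S).apply_symm_apply y)
    rw [h1, hrS]
    exact ⟨x, hx, rfl⟩
end

section
/- For a locally connected one-dimensional metric continuum X, the following conditions are equivalent: (1) X has the LPPP; (2) X has the wLPPP; (3) X is a local dendrite; (4) X has the LFPP; (5) X has the wLFPP. -/
section Helpers

open Set Filter Topology Metric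

/-- `x` and `y` lie in a common connected subset of the ball of radius `ε` about `x`. -/
def NearConn {X : Type*} [MetricSpace X] (ε : ℝ) (x y : X) : Prop :=
  ∃ C : Set X, IsPreconnected C ∧ x ∈ C ∧ y ∈ C ∧ C ⊆ ball x ε

lemma NearConn.refl {X : Type*} [MetricSpace X] {ε : ℝ} (hε : 0 < ε) (x : X) : NearConn ε x x :=
  ⟨{x}, isPreconnected_singleton, rfl, rfl, by simpa using hε⟩

lemma reflTransGen_chain {α : Type*} {r : α → α → Prop} {a b : α}
    (h : Relation.ReflTransGen r a b) (hb : r b b) :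
    ∃ n : ℕ, ∃ c : ℕ → α, c 0 = a ∧ (∀ i, n ≤ i → c i = b) ∧ ∀ i, r (c i) (c (i + 1)) := by
  induction h using Relation.ReflTransGen.head_induction_on with
  | refl => exact ⟨0, fun _ => b, rfl, fun _ _ => rfl, fun _ => hb⟩
  | head h' h ih =>
    obtain ⟨n, c, hc0, hcn, hc⟩ := ih
    rename_i a' c'
    refine ⟨n + 1, fun i => Nat.casesOn i a' c, rfl, ?_, ?_⟩
    · intro i hi
      cases i with
      | zero => omega
      | succ i => exact hcn i (by omega)
    · intro i
      cases i with
      | zero => simpa [hc0] using h'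
      | succ i => exact hc i

lemma nearConn_chain {X : Type*} [MetricSpace X] [CompactSpace X] [LocallyConnectedSpace X]
    {ε η : ℝ} (hη : 0 < η) (hηε : η ≤ ε) :
    ∃ M : ℕ, 0 < M ∧ ∀ x y : X, NearConn ε x y →
      ∃ c : ℕ → X, c 0 = x ∧ c M = y ∧ (∀ i, NearConn η (c i) (c (i + 1))) ∧
        ∀ i, dist (c i) x ≤ 2 * ε := by
  classical
  have h1 : ∀ z : X, ∃ O : Set X, IsOpen O ∧ IsPreconnected O ∧ z ∈ O ∧ O ⊆ ball z (η / 3) := by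
    intro z
    refine ⟨connectedComponentIn (ball z (η/3)) z, isOpen_ball.connectedComponentIn,
      isPreconnected_connectedComponentIn, mem_connectedComponentIn (mem_ball_self (by positivity)),
      connectedComponentIn_subset _ _⟩
  choose O hOo hOc hOm hOb using h1
  obtain ⟨t, ht⟩ := (isCompact_univ (X := X)).elim_finite_subcover O hOo
    (fun z _ => mem_iUnion.2 ⟨z, hOm z⟩)
  have hcov : ∀ z : X, ∃ w ∈ t, z ∈ O w := by
    intro z
    have := ht (mem_univ z)
    simpa using this
  let r : Finset X → X → X → Prop := fun T a b => a ∈ T ∧ b ∈ T ∧ (O a ∩ O b).Nonempty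
  have h2 : ∀ p : {T // T ∈ t.powerset} × {a // a ∈ t} × {b // b ∈ t}, ∃ n : ℕ,
      Relation.ReflTransGen (r p.1.1) p.2.1.1 p.2.2.1 → p.2.2.1 ∈ p.1.1 →
      ∃ c : ℕ → X, c 0 = p.2.1.1 ∧ (∀ i, n ≤ i → c i = p.2.2.1) ∧
        ∀ i, r p.1.1 (c i) (c (i + 1)) := by
    intro p
    by_cases h : Relation.ReflTransGen (r p.1.1) p.2.1.1 p.2.2.1 ∧ p.2.2.1 ∈ p.1.1
    · obtain ⟨n, hn⟩ := reflTransGen_chain h.1 ⟨h.2, h.2, ⟨_, hOm _, hOm _⟩⟩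
      exact ⟨n, fun _ _ => hn⟩
    · exact ⟨0, fun h1 h2 => absurd ⟨h1, h2⟩ h⟩
  choose n hn using h2
  obtain ⟨M, hM⟩ := Finite.exists_le n
  refine ⟨M + 2, by omega, ?_⟩
  rintro x y ⟨C, hC, hxC, hyC, hCb⟩
  let T : Finset X := t.filter (fun z => (O z ∩ C).Nonempty)
  have hTt : T ∈ t.powerset := by simp [T]
  have hP := hC.induction₂' (fun u v => ∃ z ∈ T, ∃ w ∈ T, u ∈ O z ∧ v ∈ O w ∧
      Relation.ReflTransGen (r T) z w) ?_ ?_ hxC hyC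
  · obtain ⟨z, hz, w, hw, hxz, hyw, hzw⟩ := hP
    have hzt : z ∈ t := (Finset.mem_filter.1 hz).1
    have hwt : w ∈ t := (Finset.mem_filter.1 hw).1
    obtain ⟨c, hc0, hcn, hcr⟩ := hn ⟨⟨T, hTt⟩, ⟨z, hzt⟩, ⟨w, hwt⟩⟩ hzw hw
    have hMn := hM ⟨⟨T, hTt⟩, ⟨z, hzt⟩, ⟨w, hwt⟩⟩
    simp only at hc0 hcn hcr
    have hcT : ∀ i, dist (c i) x ≤ 2 * ε := by
      intro i
      obtain ⟨v, hv1, hv2⟩ := (Finset.mem_filter.1 (hcr i).1).2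
      have e1 := hOb _ hv1
      have e2 := hCb hv2
      rw [mem_ball] at e1 e2
      have := dist_triangle (c i) v x
      rw [dist_comm] at e1
      linarith
    have hxy : dist y x < ε := hCb hyC
    have hx0 : 0 < ε := lt_of_lt_of_le hη hηε
    refine ⟨fun i => Nat.casesOn i x (fun j => if j ≤ M then c j else y), rfl, by simp, ?_, ?_⟩
    · intro i
      cases i with
      | zero =>
        simp only [Nat.zero_le, if_true, hc0]
        refine ⟨O z, hOc z, hxz, hOm z, ?_⟩
        intro u hu
        have e1 := hOb _ hu
        have e2 := hOb _ hxz
        rw [mem_ball] at *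
        have := dist_triangle_right u x z
        change dist u x < η
        linarith
      | succ j =>
        simp only
        by_cases h1 : j + 1 ≤ M
        · have h0 : j ≤ M := by omega
          simp only [h1, h0, if_true]
          refine ⟨O (c j) ∪ O (c (j+1)), ?_, Or.inl (hOm _), Or.inr (hOm _), ?_⟩
          · obtain ⟨v, hv1, hv2⟩ := (hcr j).2.2
            exact IsPreconnected.union v hv1 hv2 (hOc _) (hOc _)
          · obtain ⟨v, hv1, hv2⟩ := (hcr j).2.2
            have e1 := hOb _ hv1
            have e2 := hOb _ hv2
            rintro u (hu | hu)
            · have e3 := hOb _ hu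
              rw [mem_ball] at *
              linarith
            · have e3 := hOb _ hu
              rw [mem_ball] at *
              have := dist_triangle4_right u (c j) (c (j+1)) v
              have h5 := dist_triangle u (c (j+1)) v
              have h6 := dist_triangle u v (c j)
              rw [dist_comm v] at *
              linarith
        · by_cases h0 : j ≤ M
          · have : j = M := by omega
            subst this
            simp only [h1, le_refl, if_true, if_false]
            rw [hcn _ hMn]
            refine ⟨O w, hOc w, hOm w, hyw, (hOb w).trans (ball_subset_ball (by linarith))⟩
          · simp only [h1, h0, if_false]
            exact NearConn.refl hη y
    · intro i
      cases i with
      | zero => simp; linarith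
      | succ j =>
        simp only
        split_ifs
        · exact hcT j
        · linarith
  · intro u hu
    obtain ⟨z, hz, huz⟩ := hcov u
    have hzT : z ∈ T := Finset.mem_filter.2 ⟨hz, u, huz, hu⟩
    filter_upwards [mem_nhdsWithin_of_mem_nhds ((hOo z).mem_nhds huz)] with v hv
    exact ⟨⟨z, hzT, z, hzT, huz, hv, .refl⟩, ⟨z, hzT, z, hzT, hv, huz, .refl⟩⟩
  · rintro u v w hu hv hw ⟨z, hz, z', hz', huz, hvz, hr⟩ ⟨q, hq, q', hq', hvq, hwq, hr'⟩
    exact ⟨z, hz, q', hq', huz, hwq, (hr.tail ⟨hz', hq, v, hvz, hvq⟩).trans hr'⟩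

lemma nearConn_joined {X : Type*} [MetricSpace X] [CompactSpace X] [LocallyConnectedSpace X]
    {ε : ℝ} (hε : 0 < ε) {x y : X} (hxy : NearConn ε x y) :
    JoinedIn (closedBall x (5 * ε)) x y := by
  classical
  have h1 : ∀ k : ℕ, ∃ M : ℕ, 0 < M ∧ ∀ x y : X, NearConn (ε / 2 ^ k) x y →
      ∃ c : ℕ → X, c 0 = x ∧ c M = y ∧ (∀ i, NearConn (ε / 2 ^ (k+1)) (c i) (c (i + 1))) ∧
        ∀ i, dist (c i) x ≤ 2 * (ε / 2 ^ k) := by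
    intro k
    refine nearConn_chain (by positivity) ?_
    gcongr
    · norm_num
    · omega
  choose M hM0 hM using h1
  have h2 : ∀ k : ℕ, ∀ x y : X, ∃ c : ℕ → X, NearConn (ε / 2 ^ k) x y →
      c 0 = x ∧ c (M k) = y ∧ (∀ i, NearConn (ε / 2 ^ (k+1)) (c i) (c (i + 1))) ∧
        ∀ i, dist (c i) x ≤ 2 * (ε / 2 ^ k) := by
    intro k x y
    by_cases h : NearConn (ε / 2 ^ k) x y
    · obtain ⟨c, hc⟩ := hM k x y h
      exact ⟨c, fun _ => hc⟩
    · exact ⟨fun _ => x, fun h' => absurd h' h⟩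
  choose step hstep using h2
  let f : ℕ → ℕ → X := fun k => Nat.rec (fun i => if i = 0 then x else y)
    (fun k g i => step k (g (i / M k)) (g (i / M k + 1)) (i % M k)) k
  obtain ⟨L, hL0, hLs⟩ : ∃ L : ℕ → ℕ, L 0 = 1 ∧ ∀ k, L (k+1) = L k * M k :=
    ⟨fun k => Nat.rec 1 (fun k l => l * M k) k, rfl, fun k => rfl⟩
  have hf0 : ∀ i, f 0 i = if i = 0 then x else y := fun i => rfl
  have hfs : ∀ k i, f (k+1) i = step k (f k (i / M k)) (f k (i / M k + 1)) (i % M k) :=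
    fun k i => rfl
  have hLpos : ∀ k, 0 < L k := by
    intro k
    induction k with
    | zero => simp [hL0]
    | succ k ih => rw [hLs]; exact Nat.mul_pos ih (hM0 k)
  have hinv : ∀ k i, NearConn (ε / 2 ^ k) (f k i) (f k (i+1)) := by
    intro k
    induction k with
    | zero =>
      intro i
      by_cases hi : i = 0
      · simpa [hf0, hi] using hxy
      · simp only [hf0, hi, if_false]; simpa using NearConn.refl hε y
    | succ k ih =>
      intro i
      rw [hfs, hfs]
      have hs := hstep k _ _ (ih (i / M k))
      have hdm := Nat.div_add_mod i (M k)
      have hlt := Nat.mod_lt i (hM0 k)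
      by_cases hr : i % M k + 1 < M k
      · have e1 : (i + 1) / M k = i / M k := by
          rw [Nat.div_eq_iff (hM0 k)]
          constructor
          · rw [mul_comm]; omega
          · rw [mul_comm]; omega
        have e2 : (i + 1) % M k = i % M k + 1 := by
          have := Nat.div_add_mod (i+1) (M k)
          rw [e1] at this
          omega
        rw [e1, e2]
        exact hs.2.2.1 _
      · have e0 : i % M k + 1 = M k := by omega
        have e3 : i + 1 = (i / M k + 1) * M k := by
          rw [add_mul, one_mul, mul_comm]; omega
        have e1 : (i + 1) / M k = i / M k + 1 := by
          rw [e3]; exact Nat.mul_div_cancel _ (hM0 k)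
        have e2 : (i + 1) % M k = 0 := by rw [e3]; exact Nat.mul_mod_left _ _
        rw [e1, e2, (hstep k _ _ (ih (i / M k + 1))).1]
        have h3 := hs.2.2.1 (i % M k)
        rw [e0, hs.2.1] at h3
        exact h3
  have hdist : ∀ k i, dist (f (k+1) i) (f k (i / M k)) ≤ 2 * (ε / 2 ^ k) := by
    intro k i
    rw [hfs]
    exact (hstep k _ _ (hinv k _)).2.2.2 _
  have hfx : ∀ k, f k 0 = x := by
    intro k
    induction k with
    | zero => simp [hf0]
    | succ k ih =>
      rw [hfs]
      simp only [Nat.zero_div, Nat.zero_mod]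
      rw [(hstep k _ _ (hinv k _)).1, ih]
  have hfy : ∀ k, f k (L k) = y := by
    intro k
    induction k with
    | zero => simp [hf0, hL0]
    | succ k ih =>
      rw [hfs, hLs, Nat.mul_div_cancel _ (hM0 k), Nat.mul_mod_left, (hstep k _ _ (hinv k _)).1, ih]
  let F : ℕ → ℝ → X := fun k t => f k ⌊t * (L k : ℝ)⌋₊
  have hF : ∀ t k, dist (F k t) (F (k+1) t) ≤ (4 * ε) / 2 / 2 ^ k := by
    intro t k
    have e1 : ⌊t * (L k : ℝ)⌋₊ = ⌊t * (L (k+1) : ℝ)⌋₊ / M k := by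
      rw [← Nat.floor_div_natCast, hLs]
      congr 1
      have : (M k : ℝ) ≠ 0 := by exact_mod_cast (hM0 k).ne'
      push_cast
      field_simp
    simp only [F]
    rw [e1, dist_comm]
    refine (hdist k _).trans (le_of_eq ?_)
    ring
  have hlim : ∀ t, ∃ a, Tendsto (fun k => F k t) atTop (𝓝 a) := fun t =>
    cauchySeq_tendsto_of_complete (cauchySeq_of_le_geometric_two (hF t))
  choose G hG using hlim
  have hGd : ∀ t k, dist (F k t) (G t) ≤ 4 * ε / 2 ^ k := fun t k =>
    dist_le_of_le_geometric_two_of_tendsto (hF t) (hG t) k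
  have hnear : ∀ k i, dist (f k i) (f k (i+1)) < ε / 2 ^ k := by
    intro k i
    obtain ⟨C, _, _, h3, h4⟩ := hinv k i
    rw [dist_comm]; exact h4 h3
  refine JoinedIn.ofLine (f := G) ?_ ?_ ?_ ?_
  · rw [Metric.continuousOn_iff]
    intro s hs e he
    obtain ⟨k, hk⟩ : ∃ k : ℕ, 10 * ε / 2 ^ k < e := by
      have : Tendsto (fun k : ℕ => 10 * ε / 2 ^ k) atTop (𝓝 0) :=
        tendsto_const_nhds.div_atTop (tendsto_pow_atTop_atTop_of_one_lt (by norm_num))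
      exact (this.eventually (gt_mem_nhds he)).exists
    have hLr : (0:ℝ) < L k := by exact_mod_cast hLpos k
    refine ⟨1 / (L k:ℝ), by positivity, ?_⟩
    have key : ∀ a b : ℝ, 0 ≤ a → a ≤ b → b - a < 1 / (L k:ℝ) →
        dist (F k a) (F k b) ≤ ε / 2 ^ k := by
      intro a b ha hab hlt
      have h1 : a * (L k:ℝ) ≤ b * (L k:ℝ) := by gcongr
      have h2 : b * (L k:ℝ) < a * (L k:ℝ) + 1 := by
        rw [lt_div_iff₀ hLr] at hlt; linarith
      have h3 : ⌊a * (L k : ℝ)⌋₊ ≤ ⌊b * (L k : ℝ)⌋₊ := Nat.floor_mono h1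
      have h4 : ⌊b * (L k : ℝ)⌋₊ ≤ ⌊a * (L k : ℝ)⌋₊ + 1 := by
        rw [← Nat.floor_add_one (by positivity)]
        exact Nat.floor_mono h2.le
      have h5 : ⌊b * (L k : ℝ)⌋₊ = ⌊a * (L k : ℝ)⌋₊ ∨ ⌊b * (L k : ℝ)⌋₊ = ⌊a * (L k : ℝ)⌋₊ + 1 := by omega
      simp only [F]
      rcases h5 with h5 | h5
      · rw [h5, dist_self]; positivity
      · rw [h5]; exact (hnear k _).le
    intro u hu hus
    have h6 : dist (F k u) (F k s) ≤ ε / 2 ^ k := by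
      rw [Real.dist_eq] at hus
      rcases le_total u s with h | h
      · refine key u s hu.1 h ?_
        rw [abs_sub_comm, abs_of_nonneg (by linarith)] at hus; exact hus
      · rw [dist_comm]
        refine key s u hs.1 h ?_
        rw [abs_of_nonneg (by linarith)] at hus; exact hus
    have h7 := hGd u k
    have h8 := hGd s k
    have h9 := dist_triangle4 (G u) (F k u) (F k s) (G s)
    rw [dist_comm (G u) (F k u)] at h9
    have : 10 * ε / 2 ^ k = 10 * (ε / 2 ^ k) := by ring
    have : 4 * ε / 2 ^ k = 4 * (ε / 2 ^ k) := by ring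
    have : 0 < ε / 2 ^ k := by positivity
    linarith
  · refine tendsto_nhds_unique (hG 0) ?_
    simp only [F, zero_mul, Nat.floor_zero, hfx]
    exact tendsto_const_nhds
  · refine tendsto_nhds_unique (hG 1) ?_
    simp only [F, one_mul, Nat.floor_natCast, hfy]
    exact tendsto_const_nhds
  · rintro _ ⟨t, ht, rfl⟩
    have h1 := hGd t 0
    have h2 : dist (F 0 t) x ≤ ε := by
      simp only [F, hf0]
      split_ifs
      · simp [hε.le]
      · obtain ⟨C, _, _, h3, h4⟩ := hxy
        exact (h4 h3).le
    rw [mem_closedBall]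
    have := dist_triangle (G t) (F 0 t) x
    rw [dist_comm (G t) (F 0 t)] at this
    simp at h1
    linarith

lemma peano_locPathConnected {X : Type*} [MetricSpace X] [CompactSpace X]
    [LocallyConnectedSpace X] : LocallyPathConnectedSpace X := by
  rw [locallyPathConnectedSpace_iff_pathComponentIn_mem_nhds]
  intro x u hu hx
  obtain ⟨e, he, heu⟩ := Metric.isOpen_iff.1 hu x hx
  have h1 : connectedComponentIn (ball x (e/10)) x ∈ 𝓝 x :=
    connectedComponentIn_mem_nhds (ball_mem_nhds x (by positivity))
  filter_upwards [h1] with y hy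
  have : NearConn (e/10) x y := ⟨_, isPreconnected_connectedComponentIn,
    mem_connectedComponentIn (mem_ball_self (by positivity)), hy, connectedComponentIn_subset _ _⟩
  refine (nearConn_joined (by positivity) this).mono ?_
  refine Subset.trans ?_ heu
  exact closedBall_subset_ball (by linarith)


/-! ### From paths to arcs -/

/-- Closed subsets of `[0,1]` containing the end points, such that `f` takes equal values at the
two ends of each complementary gap. -/
def GapFamily {X : Type*} (f : ℝ → X) : Set (Set ℝ) :=
  {C | IsClosed C ∧ C ⊆ Icc 0 1 ∧ (0:ℝ) ∈ C ∧ (1:ℝ) ∈ C ∧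
    ∀ a ∈ C, ∀ b ∈ C, a < b → Ioo a b ∩ C = ∅ → f a = f b}

lemma gapFamily_chain {X : Type*} [MetricSpace X] {f : ℝ → X} (hf : Continuous f)
    (c : Set (Set ℝ)) (hc : c ⊆ GapFamily f) (hch : IsChain (fun x1 x2 => x1 ⊆ x2) c)
    (hne : c.Nonempty) : ∃ lb ∈ GapFamily f, ∀ s ∈ c, lb ⊆ s := by
  refine ⟨⋂₀ c, ⟨?_, ?_, ?_, ?_, ?_⟩, fun s hs => sInter_subset_of_mem hs⟩
  · exact isClosed_sInter fun s hs => (hc hs).1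
  · obtain ⟨s, hs⟩ := hne
    exact (sInter_subset_of_mem hs).trans (hc hs).2.1
  · exact fun s hs => (hc hs).2.2.1
  · exact fun s hs => (hc hs).2.2.2.1
  · intro a ha b hb hab hgap
    -- approximate the gap
    have key : ∀ e > 0, ∃ a' b' : ℝ, |a' - a| ≤ e ∧ |b' - b| ≤ e ∧ f a' = f b' := by
      intro e0 he0
      obtain ⟨e, he, hee0, hea⟩ : ∃ e > 0, e ≤ e0 ∧ a + e < b - e :=
        ⟨min e0 ((b - a) / 3), lt_min he0 (by linarith), min_le_left _ _, by
          have := min_le_right e0 ((b - a) / 3); linarith⟩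
      have h1 : ∃ s ∈ c, Icc (a + e) (b - e) ∩ s = ∅ := by
        by_contra hcon
        push Not at hcon
        have hdir : DirectedOn (· ⊇ ·) c := by
          intro x hx y hy
          rcases hch.total hx hy with h | h
          · exact ⟨x, hx, Subset.rfl, h⟩
          · exact ⟨y, hy, h, Subset.rfl⟩
        have : Nonempty c := hne.to_subtype
        have h2 := IsCompact.nonempty_iInter_of_directed_nonempty_isCompact_isClosed
          (fun s : c => Icc (a + e) (b - e) ∩ s.1) ?_ (fun s => hcon s.1 s.2)
          (fun s => isCompact_Icc.inter_right (hc s.2).1)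
          (fun s => isClosed_Icc.inter (hc s.2).1)
        · obtain ⟨x, hx⟩ := h2
          rw [mem_iInter] at hx
          have hxI := (hx (Classical.arbitrary _)).1
          have hxD : x ∈ ⋂₀ c := fun s hs => (hx ⟨s, hs⟩).2
          have : x ∈ Ioo a b ∩ ⋂₀ c := ⟨⟨by linarith [hxI.1], by linarith [hxI.2]⟩, hxD⟩
          rw [hgap] at this
          exact this
        · rintro ⟨x, hx⟩ ⟨y, hy⟩
          obtain ⟨z, hz, h1, h2⟩ := hdir x hx y hy
          exact ⟨⟨z, hz⟩, inter_subset_inter_right _ h1, inter_subset_inter_right _ h2⟩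
      obtain ⟨s, hs, hse⟩ := h1
      have has : a ∈ s := ha s hs
      have hbs : b ∈ s := hb s hs
      obtain ⟨a', ⟨ha's, ha'I⟩, ha'm⟩ := (isCompact_Icc.inter_left (hc hs).1).exists_isGreatest
        (s := s ∩ Icc a (a + e)) ⟨a, has, le_rfl, by linarith⟩
      obtain ⟨b', ⟨hb's, hb'I⟩, hb'm⟩ := (isCompact_Icc.inter_left (hc hs).1).exists_isLeast
        (s := s ∩ Icc (b - e) b) ⟨b, hbs, by linarith, le_rfl⟩
      refine ⟨a', b', ?_, ?_, ?_⟩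
      · rw [abs_le]; constructor <;> linarith [ha'I.1, ha'I.2]
      · rw [abs_le]; constructor <;> linarith [hb'I.1, hb'I.2]
      · refine (hc hs).2.2.2.2 a' ha's b' hb's (by linarith [ha'I.2, hb'I.1]) ?_
        rw [eq_empty_iff_forall_notMem]
        rintro x ⟨⟨hx1, hx2⟩, hxs⟩
        by_cases h3 : x ≤ a + e
        · have := ha'm ⟨hxs, by linarith [ha'I.1], h3⟩; linarith
        by_cases h4 : b - e ≤ x
        · have := hb'm ⟨hxs, h4, by linarith [hb'I.2]⟩; linarith
        have : x ∈ Icc (a + e) (b - e) ∩ s := ⟨⟨by linarith, by linarith⟩, hxs⟩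
        rw [hse] at this
        exact this
    by_contra hne'
    have hpos : 0 < dist (f a) (f b) := dist_pos.2 hne'
    obtain ⟨d1, hd1, h1⟩ := Metric.continuous_iff.1 hf a (dist (f a) (f b) / 2) (by linarith)
    obtain ⟨d2, hd2, h2⟩ := Metric.continuous_iff.1 hf b (dist (f a) (f b) / 2) (by linarith)
    obtain ⟨a', b', ha', hb', hab'⟩ := key (min d1 d2 / 2) (by positivity)
    have hm1 := min_le_left d1 d2
    have hm2 := min_le_right d1 d2
    have hmp : 0 < min d1 d2 := lt_min hd1 hd2
    have e1 := h1 a' (by rw [Real.dist_eq]; linarith)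
    have e2 := h2 b' (by rw [Real.dist_eq]; linarith)
    have := dist_triangle_left (f a) (f b) (f a')
    rw [hab'] at *
    linarith

lemma gapFamily_minimal {X : Type*} [MetricSpace X] {f : ℝ → X} (hf : Continuous f) :
    ∃ C ∈ GapFamily f, ∀ a ∈ C, ∀ b ∈ C, a < b → (f a = f b ↔ Ioo a b ∩ C = ∅) := by
  obtain ⟨C, -, hC⟩ := zorn_superset_nonempty (GapFamily f) (gapFamily_chain hf) (Icc 0 1)
    ⟨isClosed_Icc, Subset.rfl, by simp, by simp, by
      intro a ha b hb hab h
      exfalso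
      have : (a + b) / 2 ∈ Ioo a b ∩ Icc (0:ℝ) 1 :=
        ⟨⟨by linarith, by linarith⟩, by linarith [ha.1, hb.1], by linarith [ha.2, hb.2]⟩
      rw [h] at this
      exact this⟩
  obtain ⟨h1, h2, h3, h4, h5⟩ := hC.prop
  refine ⟨C, hC.prop, fun a ha b hb hab => ⟨fun hfab => ?_, h5 a ha b hb hab⟩⟩
  have hmem : C \ Ioo a b ∈ GapFamily f := by
    refine ⟨h1.sdiff isOpen_Ioo, sdiff_subset.trans h2, ⟨h3, ?_⟩, ⟨h4, ?_⟩, ?_⟩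
    · intro h; linarith [h.1, (h2 ha).1]
    · intro h; linarith [h.2, (h2 hb).2]
    · rintro x ⟨hx, hx'⟩ y ⟨hy, hy'⟩ hxy hgap
      by_cases hg : Ioo x y ∩ C = ∅
      · exact h5 x hx y hy hxy hg
      · obtain ⟨e, ⟨he1, he2⟩, heC⟩ := nonempty_iff_ne_empty.2 hg
        have heI : e ∈ Ioo a b := by
          by_contra h
          have : e ∈ Ioo x y ∩ (C \ Ioo a b) := ⟨⟨he1, he2⟩, heC, h⟩
          rw [hgap] at this
          exact this
        have hxa : x ≤ a := by
          by_contra h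
          exact hx' ⟨by linarith, by linarith [heI.2]⟩
        have hyb : b ≤ y := by
          by_contra h
          exact hy' ⟨by linarith [heI.1], by linarith⟩
        have hxa' : x = a := by
          by_contra h
          have : a ∈ Ioo x y ∩ (C \ Ioo a b) :=
            ⟨⟨lt_of_le_of_ne hxa h, by linarith⟩, ha, by simp⟩
          rw [hgap] at this
          exact this
        have hyb' : b = y := by
          by_contra h
          have : b ∈ Ioo x y ∩ (C \ Ioo a b) :=
            ⟨⟨by linarith, lt_of_le_of_ne hyb h⟩, hb, by simp⟩
          rw [hgap] at this
          exact this
        rw [hxa', ← hyb', hfab]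
  have hle := hC.le_of_le hmem sdiff_subset
  rw [eq_empty_iff_forall_notMem]
  rintro x ⟨hx, hxC⟩
  exact (hle hxC).2 hx

lemma runningSup_props {C : Set ℝ} (hC : IsCompact C) {φ : ℝ → ℝ} (hφ : Continuous φ) :
    (∀ t ∈ C, ∀ r ∈ C, r ≤ t → φ r ≤ sSup (φ '' (C ∩ Iic t))) ∧
    (∀ t ∈ C, ∀ y, (∀ r ∈ C, r ≤ t → φ r ≤ y) → sSup (φ '' (C ∩ Iic t)) ≤ y) ∧
    ContinuousOn (fun t => sSup (φ '' (C ∩ Iic t))) C := by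
  have hb : ∀ t, BddAbove (φ '' (C ∩ Iic t)) := fun t =>
    (hC.bddAbove_image hφ.continuousOn).mono (image_mono inter_subset_left)
  have A : ∀ t ∈ C, ∀ r ∈ C, r ≤ t → φ r ≤ sSup (φ '' (C ∩ Iic t)) :=
    fun t _ r hr hrt => le_csSup (hb t) ⟨r, ⟨hr, hrt⟩, rfl⟩
  have B : ∀ t ∈ C, ∀ y, (∀ r ∈ C, r ≤ t → φ r ≤ y) → sSup (φ '' (C ∩ Iic t)) ≤ y := by
    intro t ht y h
    refine csSup_le ⟨φ t, t, ⟨ht, mem_Iic.2 le_rfl⟩, rfl⟩ ?_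
    rintro _ ⟨r, ⟨hr, hrt⟩, rfl⟩
    exact h r hr hrt
  refine ⟨A, B, ?_⟩
  have huc := hC.uniformContinuousOn_of_continuous hφ.continuousOn
  rw [Metric.uniformContinuousOn_iff] at huc
  rw [Metric.continuousOn_iff]
  intro t ht e he
  obtain ⟨d, hd, h⟩ := huc (e/2) (by positivity)
  refine ⟨d, hd, ?_⟩
  have key : ∀ a ∈ C, ∀ b ∈ C, a ≤ b → b - a < d →
      sSup (φ '' (C ∩ Iic a)) ≤ sSup (φ '' (C ∩ Iic b)) ∧
      sSup (φ '' (C ∩ Iic b)) ≤ sSup (φ '' (C ∩ Iic a)) + e/2 := by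
    intro a ha b hb hab hd'
    refine ⟨B a ha _ fun r hr hra => A b hb r hr (hra.trans hab), B b hb _ fun r hr hrb => ?_⟩
    rcases le_total r a with h1 | h1
    · linarith [A a ha r hr h1]
    · have h2 := h r hr a ha (by rw [Real.dist_eq, abs_of_nonneg (by linarith)]; linarith)
      rw [Real.dist_eq] at h2
      linarith [A a ha a ha le_rfl, le_abs_self (φ r - φ a)]
  intro b hb hbt
  rw [Real.dist_eq] at hbt ⊢
  rcases le_total b t with h1 | h1
  · have := key b hb t ht h1 (by rw [abs_sub_comm, abs_of_nonneg (by linarith)] at hbt; exact hbt)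
    rw [abs_lt]; constructor <;> linarith
  · have := key t ht b hb h1 (by rw [abs_of_nonneg (by linarith)] at hbt; exact hbt)
    rw [abs_lt]; constructor <;> linarith


lemma exists_arc {X : Type*} [MetricSpace X] {f : ℝ → X} (hf : Continuous f) (hne : f 0 ≠ f 1) :
    ∃ α : ℝ → X, Continuous α ∧ InjOn α (Icc 0 1) ∧ α 0 = f 0 ∧ α 1 = f 1 ∧
      ∀ t, ∃ s ∈ Icc (0:ℝ) 1, α t = f s := by
  obtain ⟨C, ⟨hCc, hCI, h0, h1, -⟩, hC⟩ := gapFamily_minimal hf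
  have hCk : IsCompact C := isCompact_Icc.of_isClosed_subset hCc hCI
  have hCne : Nonempty C := ⟨⟨0, h0⟩⟩
  obtain ⟨u, hu⟩ := TopologicalSpace.exists_dense_seq C
  let φ : ℕ → ℝ → ℝ := fun n r => dist (f (max r (u n))) (f (u n))
  have hφ : ∀ n, Continuous (φ n) := fun n => by fun_prop
  let m : ℕ → ℝ → ℝ := fun n t => sSup (φ n '' (C ∩ Iic t))
  have mA : ∀ n, ∀ t ∈ C, ∀ r ∈ C, r ≤ t → φ n r ≤ m n t :=
    fun n => (runningSup_props hCk (hφ n)).1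
  have mB : ∀ n, ∀ t ∈ C, ∀ y, (∀ r ∈ C, r ≤ t → φ n r ≤ y) → m n t ≤ y :=
    fun n => (runningSup_props hCk (hφ n)).2.1
  have mC : ∀ n, ContinuousOn (m n) C := fun n => (runningSup_props hCk (hφ n)).2.2
  obtain ⟨D, hD⟩ : ∃ D, ∀ x ∈ Icc (0:ℝ) 1, ∀ y ∈ Icc (0:ℝ) 1, dist (f x) (f y) ≤ D := by
    have := (isCompact_Icc (a := (0:ℝ)) (b := 1)).image hf
    obtain ⟨D, hD⟩ := Metric.isBounded_iff.1 this.isBounded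
    exact ⟨D, fun x hx y hy => hD (mem_image_of_mem f hx) (mem_image_of_mem f hy)⟩
  have hφ0 : ∀ n, ∀ r ≤ (u n : ℝ), φ n r = 0 := by
    intro n r hr
    simp only [φ, max_eq_right hr, dist_self]
  have hm0 : ∀ n, ∀ t ∈ C, 0 ≤ m n t := fun n t ht =>
    le_trans dist_nonneg (mA n t ht t ht le_rfl)
  have hmD : ∀ n, ∀ t ∈ C, m n t ≤ D := by
    intro n t ht
    refine mB n t ht D fun r hr _ => ?_
    refine hD _ ?_ _ (hCI (u n).2)
    rcases max_choice r (u n) with h | h <;> rw [h]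
    · exact hCI hr
    · exact hCI (u n).2
  have hmono : ∀ n, ∀ a ∈ C, ∀ b ∈ C, a ≤ b → m n a ≤ m n b := fun n a ha b hb hab =>
    mB n a ha _ fun r hr hra => mA n b hb r hr (hra.trans hab)
  have hgeo : Summable (fun n : ℕ => (1/2:ℝ)^n * D) :=
    (summable_geometric_of_lt_one (by norm_num) (by norm_num)).mul_right D
  have hsum : ∀ t ∈ C, Summable (fun n => (1/2:ℝ)^n * m n t) := by
    intro t ht
    refine Summable.of_nonneg_of_le (fun n => mul_nonneg (by positivity) (hm0 n t ht))
      (fun n => ?_) hgeo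
    exact mul_le_mul_of_nonneg_left (hmD n t ht) (by positivity)
  let h : ℝ → ℝ := fun t => ∑' n, (1/2:ℝ)^n * m n t
  have hcont : ContinuousOn h C := by
    refine continuousOn_tsum (fun n => continuousOn_const.mul (mC n)) hgeo ?_
    intro n t ht
    rw [Real.norm_of_nonneg (mul_nonneg (by positivity) (hm0 n t ht))]
    exact mul_le_mul_of_nonneg_left (hmD n t ht) (by positivity)
  have hhmono : ∀ a ∈ C, ∀ b ∈ C, a ≤ b → h a ≤ h b := by
    intro a ha b hb hab
    exact Summable.tsum_le_tsum
      (fun n => mul_le_mul_of_nonneg_left (hmono n a ha b hb hab) (by positivity))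
      (hsum a ha) (hsum b hb)
  have hheq : ∀ a ∈ C, ∀ b ∈ C, a < b → f a = f b → h a = h b := by
    intro a ha b hb hab hfab
    have hgap := (hC a ha b hb hab).1 hfab
    have hg : ∀ r ∈ C, r ≤ a ∨ b ≤ r := by
      intro r hr
      by_contra hcon
      push Not at hcon
      have : r ∈ Ioo a b ∩ C := ⟨hcon, hr⟩
      rw [hgap] at this
      exact this
    have hmm : ∀ n, m n a = m n b := by
      intro n
      refine le_antisymm (hmono n a ha b hb hab.le) (mB n b hb _ fun r hr hrb => ?_)
      rcases hg r hr with h2 | h2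
      · exact mA n a ha r hr h2
      · have hrb' : r = b := le_antisymm hrb h2
        subst hrb'
        rcases hg (u n) (u n).2 with h3 | h3
        · have : φ n r = φ n a := by
            simp only [φ, max_eq_left h3, max_eq_left (h3.trans hab.le), hfab]
          rw [this]
          exact mA n a ha a ha le_rfl
        · rw [hφ0 n r h3]; exact hm0 n a ha
    simp only [h, hmm]
  have hhlt : ∀ a ∈ C, ∀ b ∈ C, a < b → f a ≠ f b → h a < h b := by
    intro a ha b hb hab hfab
    have hex : ∃ t ∈ C, a < t ∧ t < b ∧ f t ≠ f b := by
      have := mt (hC a ha b hb hab).2 hfab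
      obtain ⟨t, ⟨ht1, ht2⟩, htC⟩ := nonempty_iff_ne_empty.2 this
      by_cases hft : f t = f b
      · have h3 : f a ≠ f t := by rw [hft]; exact hfab
        have := mt (hC a ha t htC ht1).2 h3
        obtain ⟨t', ⟨ht1', ht2'⟩, htC'⟩ := nonempty_iff_ne_empty.2 this
        refine ⟨t', htC', ht1', ht2'.trans ht2, fun hcon => ?_⟩
        have h4 := (hC t' htC' b hb (ht2'.trans ht2)).1 hcon
        have : t ∈ Ioo t' b ∩ C := ⟨⟨ht2', ht2⟩, htC⟩
        rw [h4] at this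
        exact this
      · exact ⟨t, htC, ht1, ht2, hft⟩
    obtain ⟨t, htC, ht1, ht2, ht3⟩ := hex
    let O : Set C := {x | a < x.1 ∧ x.1 < b ∧ f x.1 ≠ f b}
    have hO : IsOpen O := by
      refine (isOpen_lt continuous_const continuous_subtype_val).inter
        ((isOpen_lt continuous_subtype_val continuous_const).inter ?_)
      exact isOpen_ne_fun (hf.comp continuous_subtype_val) continuous_const
    obtain ⟨n, hn1, hn2, hn3⟩ := hu.exists_mem_open hO ⟨⟨t, htC⟩, ht1, ht2, ht3⟩
    refine Summable.tsum_lt_tsum (i := n)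
      (fun n => mul_le_mul_of_nonneg_left (hmono n a ha b hb hab.le) (by positivity)) ?_
      (hsum a ha) (hsum b hb)
    refine mul_lt_mul_of_pos_left ?_ (by positivity)
    have e1 : m n a ≤ 0 := mB n a ha 0 fun r hr hra => (hφ0 n r (hra.trans hn1.le)).le
    have e2 : 0 < φ n b := by
      simp only [φ, max_eq_left hn2.le]
      exact dist_pos.2 (Ne.symm hn3)
    linarith [mA n b hb b hb le_rfl]
  have hhiff : ∀ a ∈ C, ∀ b ∈ C, (h a = h b ↔ f a = f b) := by
    intro a ha b hb
    rcases lt_trichotomy a b with hab | hab | hab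
    · refine ⟨fun e => ?_, hheq a ha b hb hab⟩
      by_contra hcon
      exact (hhlt a ha b hb hab hcon).ne e
    · rw [hab]; simp
    · refine ⟨fun e => ?_, fun e => (hheq b hb a ha hab e.symm).symm⟩
      by_contra hcon
      exact (hhlt b hb a ha hab (Ne.symm hcon)).ne e.symm
  have h01 : h 0 < h 1 := hhlt 0 h0 1 h1 one_pos hne
  have hsurj : ∀ y ∈ Icc (h 0) (h 1), ∃ t ∈ C, h t = y := by
    intro y hy
    have hcl1 : IsClosed (C ∩ h ⁻¹' Iic y) := hcont.preimage_isClosed_of_isClosed hCc isClosed_Iic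
    have hcl2 : IsClosed (C ∩ h ⁻¹' Ici y) := hcont.preimage_isClosed_of_isClosed hCc isClosed_Ici
    obtain ⟨a, ⟨haC, hay⟩, ham⟩ := (hCk.of_isClosed_subset hcl1 inter_subset_left).exists_isGreatest
      ⟨0, h0, hy.1⟩
    obtain ⟨b, ⟨hbC, hby⟩, hbm⟩ := (hCk.of_isClosed_subset hcl2 inter_subset_left).exists_isLeast
      ⟨1, h1, hy.2⟩
    simp only [mem_preimage, mem_Iic, mem_Ici] at hay hby
    rcases hay.eq_or_lt with h3 | h3
    · exact ⟨a, haC, h3⟩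
    exfalso
    have hab : a < b := by
      by_contra hcon
      have := hhmono b hbC a haC (not_lt.1 hcon)
      linarith
    have hgap : Ioo a b ∩ C = ∅ := by
      rw [eq_empty_iff_forall_notMem]
      rintro x ⟨⟨hx1, hx2⟩, hxC⟩
      rcases le_total (h x) y with h4 | h4
      · have := ham ⟨hxC, h4⟩; linarith
      · have := hbm ⟨hxC, h4⟩; linarith
    have := hheq a haC b hbC hab ((hC a haC b hbC hab).2 hgap)
    linarith
  -- normalise
  have hc : 0 < h 1 - h 0 := by linarith
  have hHmem : ∀ t : C, (h t - h 0) / (h 1 - h 0) ∈ Icc (0:ℝ) 1 := by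
    intro t
    have e1 := hhmono 0 h0 t t.2 (hCI t.2).1
    have e2 := hhmono t t.2 1 h1 (hCI t.2).2
    rw [mem_Icc, div_nonneg_iff, div_le_one hc]
    exact ⟨Or.inl ⟨by linarith, hc.le⟩, by linarith⟩
  let H : C → Icc (0:ℝ) 1 := fun t => ⟨(h t - h 0) / (h 1 - h 0), hHmem t⟩
  have hHc : Continuous H := by
    refine Continuous.subtype_mk ?_ _
    have : Continuous (fun t : C => h t) := continuousOn_iff_continuous_domRestrict.1 hcont
    exact (this.sub continuous_const).div_const _
  have hHs : Function.Surjective H := by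
    rintro ⟨y, hy⟩
    obtain ⟨t, htC, ht⟩ := hsurj (h 0 + y * (h 1 - h 0)) (by
      constructor
      · nlinarith [hy.1]
      · nlinarith [hy.2])
    refine ⟨⟨t, htC⟩, Subtype.ext ?_⟩
    simp only [H, ht]
    field_simp
    ring
  have hHiff : ∀ s t : C, H s = H t ↔ f s = f t := by
    intro s t
    rw [← hhiff s s.2 t t.2, Subtype.ext_iff]
    simp only [H]
    rw [div_left_inj' hc.ne']
    constructor <;> intro <;> linarith
  have : CompactSpace C := isCompact_iff_compactSpace.1 hCk
  have hq : IsQuotientMap H := hHc.isClosedMap.isQuotientMap hHc hHs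
  obtain ⟨σ, hσ⟩ := hHs.hasRightInverse
  have hσf : ∀ t : C, f (σ (H t)) = f t := fun t => (hHiff _ _).1 (hσ (H t))
  let β : Icc (0:ℝ) 1 → X := fun y => f (σ y)
  have hβ : Continuous β := by
    rw [hq.continuous_iff]
    have : β ∘ H = fun t : C => f t := funext hσf
    rw [this]
    exact hf.comp continuous_subtype_val
  have hβH : ∀ t : C, β (H t) = f t := hσf
  refine ⟨IccExtend zero_le_one β, hβ.Icc_extend', ?_, ?_, ?_, ?_⟩
  · intro x hx y hy hxy
    rw [IccExtend_of_mem _ _ hx, IccExtend_of_mem _ _ hy] at hxy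
    have := (hHiff _ _).2 hxy
    rw [hσ, hσ] at this
    exact Subtype.ext_iff.1 this
  · rw [IccExtend_left]
    have := hβH ⟨0, h0⟩
    simpa [H] using this
  · rw [IccExtend_right]
    have := hβH ⟨1, h1⟩
    have e : H ⟨1, h1⟩ = ⟨1, right_mem_Icc.2 zero_le_one⟩ := Subtype.ext (by simp [H, div_self hc.ne'])
    rw [e] at this
    exact this
  · intro t
    exact ⟨σ (projIcc 0 1 zero_le_one t), hCI (σ _).2, rfl⟩


/-! ### Simple closed curves -/

lemma circle_homeo_sphere :
    Nonempty (Circle ≃ₜ ↥(Metric.sphere (0 : EuclideanSpace ℝ (Fin 2)) 1)) := by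
  let e := Complex.orthonormalBasisOneI.repr
  refine ⟨⟨⟨fun z => ⟨e (z : ℂ), ?_⟩, fun v => ⟨e.symm v.1, ?_⟩, ?_, ?_⟩, ?_, ?_⟩⟩
  · rw [mem_sphere_zero_iff_norm, LinearIsometryEquiv.norm_map, Circle.norm_coe]
  · refine mem_sphere_zero_iff_norm.2 ?_
    rw [LinearIsometryEquiv.norm_map]
    exact mem_sphere_zero_iff_norm.1 v.2
  · intro z
    apply Circle.ext
    exact e.symm_apply_apply _
  · intro v
    apply Subtype.ext
    exact e.apply_symm_apply _
  · exact Continuous.subtype_mk (e.continuous.comp continuous_subtype_val) _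
  · exact Continuous.subtype_mk (e.symm.continuous.comp continuous_subtype_val) _

lemma scc_of_injective {X : Type*} [TopologicalSpace X] [T2Space X] {p : ℝ} [hp : Fact (0 < p)]
    {g : AddCircle p → X} (hg : Continuous g) (hi : Function.Injective g) :
    IsSimpleClosedCurve (range g) := by
  obtain ⟨e⟩ := circle_homeo_sphere
  have h1 : IsEmbedding g := (hg.isClosedEmbedding hi).isEmbedding
  exact ⟨(h1.toHomeomorph.symm.trans (AddCircle.homeomorphCircle hp.out.ne')).trans e⟩

lemma scc_of_theta {X : Type*} [MetricSpace X] {α β : ℝ → X} (hα : Continuous α)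
    (hβ : Continuous β) (hαi : InjOn α (Icc 0 1)) (hβi : InjOn β (Icc 0 1))
    (h0 : α 0 = β 0) (h1 : α 1 = β 1)
    (hαβ : ∀ s ∈ Icc (0:ℝ) 1, ∀ t ∈ Icc (0:ℝ) 1, α s = β t → t = 0 ∨ t = 1) :
    ∃ S ⊆ α '' Icc 0 1 ∪ β '' Icc 0 1, IsSimpleClosedCurve S := by
  have hp : Fact ((0:ℝ) < 2) := ⟨two_pos⟩
  let γ : ℝ → X := fun t => if t ≤ 1 then α t else β (2 - t)
  have hγ : Continuous γ := by
    refine Continuous.if_le hα (by fun_prop) continuous_id continuous_const ?_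
    intro x hx
    rw [hx, h1]; norm_num
  have hγi : InjOn γ (Ico 0 (0 + 2)) := by
    have key : ∀ s ∈ Ico (0:ℝ) (0+2), ∀ t ∈ Ico (0:ℝ) (0+2), s ≤ 1 → ¬ t ≤ 1 → α s ≠ β (2 - t) := by
      intro s hs t ht hs1 ht1 heq
      rcases hαβ s ⟨hs.1, hs1⟩ (2 - t) ⟨by linarith [ht.2], by linarith⟩ heq with h | h
      · linarith [ht.2]
      · linarith
    intro s hs t ht hst
    simp only [γ] at hst
    split_ifs at hst with a b b
    · exact hαi ⟨hs.1, a⟩ ⟨ht.1, b⟩ hst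
    · exact absurd hst (key s hs t ht a b)
    · exact absurd hst.symm (key t ht s hs b a)
    · have := hβi ⟨by linarith [hs.2], by linarith⟩ ⟨by linarith [ht.2], by linarith⟩ hst
      linarith
  let g : AddCircle (2:ℝ) → X := AddCircle.liftIco 2 0 γ
  have hg : Continuous g := by
    refine AddCircle.liftIco_continuous ?_ hγ.continuousOn
    simp only [γ]
    norm_num [h0]
  have hgi : Function.Injective g := by
    intro x y hxy
    simp only [g, AddCircle.liftIco, Function.comp] at hxy
    have := hγi (AddCircle.equivIco 2 0 x).2 (AddCircle.equivIco 2 0 y).2 hxy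
    exact (AddCircle.equivIco 2 0).injective (Subtype.ext this)
  refine ⟨range g, ?_, scc_of_injective hg hgi⟩
  rintro _ ⟨x, rfl⟩
  have hx := (AddCircle.equivIco (2:ℝ) 0 x).2
  have e : g x = γ (AddCircle.equivIco (2:ℝ) 0 x) := rfl
  rw [e]
  simp only [γ]
  split_ifs with a
  · exact Or.inl ⟨_, ⟨hx.1, a⟩, rfl⟩
  · exact Or.inr ⟨_, ⟨by linarith [hx.2], by linarith⟩, rfl⟩

/-- In a set without simple closed curves, interior points of an arc separate its end points. -/
lemma arc_cut {X : Type*} [MetricSpace X] {W : Set X}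
    (hW : ∀ S ⊆ W, ¬ IsSimpleClosedCurve S) {α : ℝ → X} (hα : Continuous α)
    (hαi : InjOn α (Icc 0 1)) (hαW : ∀ t ∈ Icc (0:ℝ) 1, α t ∈ W) {t : ℝ} (ht : t ∈ Icc (0:ℝ) 1) :
    ¬ JoinedIn (W \ {α t}) (α 0) (α 1) := by
  rintro ⟨b, hb⟩
  let β : ℝ → X := b.extend
  have hβ : Continuous β := b.continuous_extend
  have hβ0 : β 0 = α 0 := b.extend_zero
  have hβ1 : β 1 = α 1 := b.extend_one
  have hβW : ∀ s, β s ∈ W ∧ β s ≠ α t := by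
    intro s
    have := hb (projIcc 0 1 zero_le_one s)
    exact ⟨this.1, this.2⟩
  have hAc : IsCompact (α '' Icc 0 t) := isCompact_Icc.image hα
  have hBc : IsCompact (α '' Icc t 1) := isCompact_Icc.image hα
  obtain ⟨s1, ⟨hs1I, ⟨a, ha, hβa⟩⟩, hs1m⟩ :=
    (isCompact_Icc.inter_right (hAc.isClosed.preimage hβ)).exists_isGreatest
      (s := Icc (0:ℝ) 1 ∩ β ⁻¹' (α '' Icc 0 t)) ⟨0, by simp, ⟨0, ⟨le_rfl, ht.1⟩, hβ0.symm⟩⟩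
  obtain ⟨s2, ⟨hs2I, ⟨c, hc, hβc⟩⟩, hs2m⟩ :=
    (isCompact_Icc.inter_right (hBc.isClosed.preimage hβ)).exists_isLeast
      (s := Icc s1 1 ∩ β ⁻¹' (α '' Icc t 1))
      ⟨1, ⟨hs1I.2, le_rfl⟩, ⟨1, ⟨ht.2, le_rfl⟩, hβ1.symm⟩⟩
  have hat : a < t := by
    refine lt_of_le_of_ne ha.2 ?_
    rintro rfl
    exact (hβW s1).2 hβa.symm
  have hct : t < c := by
    refine lt_of_le_of_ne hc.1 ?_
    rintro rfl
    exact (hβW s2).2 hβc.symm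
  have haI : a ∈ Icc (0:ℝ) 1 := ⟨ha.1, by linarith [ht.2]⟩
  have hcI : c ∈ Icc (0:ℝ) 1 := ⟨by linarith [ht.1], hc.2⟩
  have hne : β s1 ≠ β s2 := by
    rw [← hβa, ← hβc]
    intro h
    have := hαi haI hcI h
    linarith
  have hs12 : s1 < s2 := by
    refine lt_of_le_of_ne hs2I.1 ?_
    rintro rfl
    exact hne rfl
  have hdis : ∀ s ∈ Icc s1 s2, ∀ r ∈ Icc (0:ℝ) 1, α r = β s → s = s1 ∨ s = s2 := by
    intro s hs r hr hrs
    rcases le_total r t with h | h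
    · left
      have := hs1m ⟨⟨by linarith [hs1I.1, hs.1], by linarith [hs2I.2, hs.2]⟩, ⟨r, ⟨hr.1, h⟩, hrs⟩⟩
      exact le_antisymm this hs.1
    · right
      have := hs2m ⟨⟨hs.1, by linarith [hs2I.2, hs.2]⟩, ⟨r, ⟨h, hr.2⟩, hrs⟩⟩
      exact le_antisymm hs.2 this
  obtain ⟨β', hβ'c, hβ'i, hβ'0, hβ'1, hβ'r⟩ := exists_arc (f := fun s => β (s1 + s * (s2 - s1)))
    (by fun_prop) (by simpa using hne)
  simp only [zero_mul, add_zero, one_mul, add_sub_cancel] at hβ'0 hβ'1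
  have hα'mem : ∀ s ∈ Icc (0:ℝ) 1, a + s * (c - a) ∈ Icc (0:ℝ) 1 := by
    intro s hs
    constructor
    · nlinarith [hs.1, ha.1]
    · nlinarith [hs.2, hc.2]
  have hth := scc_of_theta (α := fun s => α (a + s * (c - a))) (β := β') (by fun_prop)
    hβ'c ?_ hβ'i ?_ ?_ ?_
  · obtain ⟨S, hS, hS'⟩ := hth
    refine hW S (hS.trans ?_) hS'
    rintro _ (⟨s, hs, rfl⟩ | ⟨s, hs, rfl⟩)
    · exact hαW _ (hα'mem s hs)
    · obtain ⟨r, hr, h⟩ := hβ'r s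
      rw [h]
      exact (hβW _).1
  · intro x hx y hy hxy
    have := hαi (hα'mem x hx) (hα'mem y hy) hxy
    have h2 : (x - y) * (c - a) = 0 := by linarith
    rcases mul_eq_zero.1 h2 with h | h <;> linarith
  · simp [hβ'0, hβa]
  · simp [hβ'1, hβc]
  · intro s hs r hr hsr
    obtain ⟨q, hq, h⟩ := hβ'r r
    rw [h] at hsr
    rcases hdis (s1 + q * (s2 - s1)) ⟨by nlinarith [hq.1], by nlinarith [hq.2]⟩ _ (hα'mem s hs) hsr
      with e | e
    · left
      rw [e, ← hβ'0] at h
      exact hβ'i hr (by simp) h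
    · right
      rw [e, ← hβ'1] at h
      exact hβ'i hr (by simp) h


/-! ### Betweenness in an acyclic region -/

/-- The points of `W` which cannot be avoided when joining `p` to `q` in `W`. -/
def CutSet {X : Type*} [TopologicalSpace X] (W : Set X) (p q : X) : Set X :=
  {x | x ∈ W ∧ ¬ JoinedIn (W \ {x}) p q}

section BtwLemmas

lemma cutSet_left {X : Type*} [TopologicalSpace X] {W : Set X} {p : X} (q : X) (hp : p ∈ W) :
    p ∈ CutSet W p q :=
  ⟨hp, fun h => h.source_mem.2 rfl⟩

lemma cutSet_symm {X : Type*} [TopologicalSpace X] {W : Set X} {p q x : X} (h : x ∈ CutSet W p q) :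
    x ∈ CutSet W q p :=
  ⟨h.1, fun h' => h.2 h'.symm⟩

lemma cutSet_right {X : Type*} [TopologicalSpace X] {W : Set X} (p : X) {q : X} (hq : q ∈ W) :
    q ∈ CutSet W p q := cutSet_symm (cutSet_left p hq)

lemma cutSet_tri {X : Type*} [TopologicalSpace X] {W : Set X} {p q x : X} (r : X)
    (h : x ∈ CutSet W p q) : x ∈ CutSet W p r ∨ x ∈ CutSet W r q := by
  by_contra hcon
  simp only [CutSet, mem_ofPred_eq, not_or, not_and, not_not] at hcon
  exact h.2 ((hcon.1 h.1).trans (hcon.2 h.1))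

lemma cutSet_sub {X : Type*} [TopologicalSpace X] {W O : Set X} (hO : IsPathConnected O)
    (hOW : O ⊆ W) {p q : X} (hp : p ∈ O) (hq : q ∈ O) : CutSet W p q ⊆ O := by
  intro x hx
  by_contra hxO
  refine hx.2 ((hO.joinedIn p hp q hq).mono fun y hy => ⟨hOW hy, ?_⟩)
  rintro rfl
  exact hxO hy

lemma cutSet_trans {X : Type*} [TopologicalSpace X] {W : Set X} {a x y z : X}
    (hxy : x ∈ CutSet W a y) (hyz : y ∈ CutSet W a z) : x ∈ CutSet W a z := by
  refine ⟨hxy.1, ?_⟩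
  rintro ⟨γ, hγ⟩
  have hP : IsPathConnected (range γ) := by
    have hI : IsPathConnected (univ : Set unitInterval) :=
      isPathConnected_iff_pathConnectedSpace.1 ((convex_Icc (0:ℝ) 1).isPathConnected ⟨0, by simp⟩)
        |> pathConnectedSpace_iff_univ.1
    rw [← image_univ]
    exact hI.image γ.continuous
  have hPW : range γ ⊆ W := by rintro _ ⟨t, rfl⟩; exact (hγ t).1
  have ha : a ∈ range γ := ⟨0, γ.source⟩
  have hz : z ∈ range γ := ⟨1, γ.target⟩
  have hy : y ∈ range γ := cutSet_sub hP hPW ha hz hyz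
  obtain ⟨t, ht⟩ := cutSet_sub hP hPW ha hy hxy
  exact (hγ t).2 ht

lemma exists_arc_in {X : Type*} [MetricSpace X] {W : Set X} (hWc : IsPathConnected W) {p q : X}
    (hp : p ∈ W) (hq : q ∈ W) (hpq : p ≠ q) :
    ∃ α : ℝ → X, Continuous α ∧ InjOn α (Icc 0 1) ∧ α 0 = p ∧ α 1 = q ∧ ∀ t, α t ∈ W := by
  obtain ⟨γ, hγ⟩ := hWc.joinedIn p hp q hq
  obtain ⟨α, h1, h2, h3, h4, h5⟩ := exists_arc (f := γ.extend) γ.continuous_extend (by simpa using hpq)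
  refine ⟨α, h1, h2, by simpa using h3, by simpa using h4, fun t => ?_⟩
  obtain ⟨s, hs, h⟩ := h5 t
  rw [h]
  exact hγ _

lemma cutSet_eq_self {X : Type*} [TopologicalSpace X] {W : Set X} {p x : X} (hp : p ∈ W)
    (hx : x ∈ CutSet W p p) : x = p :=
  cutSet_sub (isPathConnected_singleton p) (by simpa using hp) rfl rfl hx

lemma cutSet_preconn {X : Type*} [MetricSpace X] {W : Set X} (hWc : IsPathConnected W)
    (hW : ∀ S ⊆ W, ¬ IsSimpleClosedCurve S) {p q : X}
    (hp : p ∈ W) (hq : q ∈ W) : IsPreconnected (CutSet W p q) := by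
  by_cases hpq : p = q
  · subst hpq
    have : CutSet W p p ⊆ {p} := fun x hx => cutSet_eq_self hp hx
    exact (Set.subsingleton_singleton.anti this).isPreconnected
  obtain ⟨α, h1, h2, h3, h4, h5⟩ := exists_arc_in hWc hp hq hpq
  have : CutSet W p q = α '' Icc 0 1 := by
    apply Subset.antisymm
    · refine cutSet_sub ?_ ?_ ⟨0, by simp, h3⟩ ⟨1, by simp, h4⟩
      · exact ((convex_Icc (0:ℝ) 1).isPathConnected ⟨0, by simp⟩).image h1
      · rintro _ ⟨t, _, rfl⟩; exact h5 t
    · rintro _ ⟨t, ht, rfl⟩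
      refine ⟨h5 t, ?_⟩
      rw [← h3, ← h4]
      exact arc_cut hW h1 h2 (fun t _ => h5 t) ht
  rw [this]
  exact isPreconnected_Icc.image _ h1.continuousOn

lemma cutSet_antisymm {X : Type*} [MetricSpace X] {W : Set X} (hWc : IsPathConnected W)
    {a x y : X} (ha : a ∈ W) (hxy : x ∈ CutSet W a y)
    (hyx : y ∈ CutSet W a x) : x = y := by
  by_cases hay : a = y
  · subst hay
    exact cutSet_eq_self ha hxy
  obtain ⟨α, h1, h2, h3, h4, h5⟩ := exists_arc_in hWc ha hyx.1 hay
  have sub : ∀ s ∈ Icc (0:ℝ) 1, CutSet W a (α s) ⊆ α '' Icc 0 s := by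
    intro s hs
    refine cutSet_sub ?_ ?_ ⟨0, by simp [hs.1], h3⟩ ⟨s, by simp [hs.1], rfl⟩
    · exact ((convex_Icc (0:ℝ) s).isPathConnected ⟨0, by simp [hs.1]⟩).image h1
    · rintro _ ⟨t, _, rfl⟩; exact h5 t
  have hx1 := sub 1 (by simp) (by rw [h4]; exact hxy)
  obtain ⟨s, hs, rfl⟩ := hx1
  obtain ⟨r, hr, hry⟩ := sub s hs hyx
  rw [← h4] at hry
  have := h2 ⟨hr.1, hr.2.trans hs.2⟩ (by simp) hry
  have hs1 : s = 1 := le_antisymm hs.2 (this ▸ hr.2)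
  rw [hs1, h4]

lemma exists_small {X : Type*} [TopologicalSpace X] [LocallyPathConnectedSpace X] {U : Set X} {x : X}
    (hU : IsOpen U) (hx : x ∈ U) : ∃ O ⊆ U, IsOpen O ∧ IsPathConnected O ∧ x ∈ O :=
  ⟨pathComponentIn U x, pathComponentIn_subset, hU.pathComponentIn x,
    isPathConnected_pathComponentIn hx, mem_pathComponentIn_self hx⟩

lemma cutSet_convex {X : Type*} [MetricSpace X] [LocallyPathConnectedSpace X] {W V : Set X}
    (hWo : IsOpen W) (hV : IsPathConnected V) (hVW : closure V ⊆ W)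
    {p q : X} (hp : p ∈ closure V) (hq : q ∈ closure V) : CutSet W p q ⊆ closure V := by
  have key : ∀ p ∈ closure V, ∀ v ∈ V, CutSet W p v ⊆ closure V := by
    intro p hp v hv x hx
    by_contra hxc
    have hpx : p ∈ W ∩ {x}ᶜ := ⟨hVW hp, by
      rintro rfl
      exact hxc hp⟩
    obtain ⟨O, hO, hOo, hOc, hpO⟩ := exists_small (hWo.inter isOpen_compl_singleton) hpx
    obtain ⟨w, hwO, hwV⟩ := mem_closure_iff.1 hp O hOo hpO
    rcases cutSet_tri w hx with h | h
    · exact (hO (cutSet_sub hOc (hO.trans inter_subset_left) hpO hwO h)).2 rfl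
    · exact hxc (subset_closure (cutSet_sub hV (subset_closure.trans hVW) hwV hv h))
  obtain ⟨v, hv⟩ := hV.nonempty
  intro x hx
  rcases cutSet_tri v hx with h | h
  · exact key p hp v hv h
  · exact key q hq v hv (cutSet_symm h)

lemma closure_isDendrite {X : Type*} [MetricSpace X] [CompactSpace X] [LocallyPathConnectedSpace X]
    {W V : Set X} (hWo : IsOpen W) (hWc : IsPathConnected W)
    (hW : ∀ S ⊆ W, ¬ IsSimpleClosedCurve S) (hV : IsPathConnected V) (hVW : closure V ⊆ W) :
    IsDendrite (closure V) := by
  refine ⟨isClosed_closure.isCompact, hV.isConnected.closure, ?_, fun S hS => hW S (hS.trans hVW)⟩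
  rw [locallyConnectedSpace_iff_connected_subsets]
  intro x U hU
  obtain ⟨U', hU'o, hU'⟩ := mem_nhds_subtype_iff_nhdsWithin.1 hU |> mem_nhdsWithin.1
  have hU'' : ∀ y : closure V, y.1 ∈ U' → y ∈ U := by
    intro y hy
    obtain ⟨z, hz, hzy⟩ := hU'.2 ⟨hy, y.2⟩
    rwa [← Subtype.ext hzy]
  obtain ⟨O, hO, hOo, hOc, hxO⟩ := exists_small (hU'o.inter hWo) ⟨hU'.1, hVW x.2⟩
  refine ⟨Subtype.val ⁻¹' O, (hOo.preimage continuous_subtype_val).mem_nhds hxO, ?_, ?_⟩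
  · refine isPreconnected_of_forall_pair ?_
    intro y hy z hz
    refine ⟨Subtype.val ⁻¹' (CutSet W y z), ?_, cutSet_left _ (hVW y.2), cutSet_right _ (hVW z.2), ?_⟩
    · intro w hw
      exact cutSet_sub hOc (hO.trans inter_subset_right) hy hz hw
    · rw [← IsInducing.subtypeVal.isPreconnected_image, Subtype.image_preimage_coe,
        inter_eq_right.2 (cutSet_convex hWo hV hVW y.2 z.2)]
      exact cutSet_preconn hWc hW (hVW y.2) (hVW z.2)
  · intro y hy
    exact hU'' y (hO hy).1

lemma closure_hasFPP {X : Type*} [MetricSpace X] [CompactSpace X] [LocallyPathConnectedSpace X]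
    {W V : Set X} (hWo : IsOpen W) (hWc : IsPathConnected W)
    (hW : ∀ S ⊆ W, ¬ IsSimpleClosedCurve S) (hV : IsPathConnected V) (hVW : closure V ⊆ W) :
    HasFPP (closure V) := by
  intro f hf
  obtain ⟨a, haV⟩ := hV.nonempty
  have haK : a ∈ closure V := subset_closure haV
  have haW : a ∈ W := hVW haK
  have hKW : ∀ x : closure V, x.1 ∈ W := fun x => hVW x.2
  have : CompactSpace (closure V) := isCompact_iff_compactSpace.1 isClosed_closure.isCompact
  let S : Set (closure V) := {x | x.1 ∈ CutSet W a (f x).1}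
  have hSc : IsClosed S := by
    rw [← isOpen_compl_iff, isOpen_iff_mem_nhds]
    intro x hx
    have hj : JoinedIn (W \ {x.1}) a (f x).1 := by
      by_contra hcon
      exact hx ⟨hKW x, hcon⟩
    have hxy : (f x).1 ≠ x.1 := hj.target_mem.2
    obtain ⟨γ, hγ⟩ := hj
    obtain ⟨A, B, hA, hB, hxA, hyB, hAB⟩ := t2_separation hxy.symm
    obtain ⟨O, hO, hOo, hOc, hyO⟩ := exists_small (hB.inter hWo) ⟨hyB, hKW (f x)⟩
    have hγc : IsClosed (range γ) := (isCompact_range γ.continuous).isClosed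
    have hxγ : x.1 ∉ range γ := by
      rintro ⟨t, ht⟩
      exact (hγ t).2 ht
    have n1 : ∀ᶠ z : closure V in 𝓝 x, z.1 ∈ A :=
      continuous_subtype_val.continuousAt (hA.mem_nhds hxA)
    have n2 : ∀ᶠ z : closure V in 𝓝 x, z.1 ∉ range γ :=
      continuous_subtype_val.continuousAt (hγc.isOpen_compl.mem_nhds hxγ)
    have n3 : ∀ᶠ z : closure V in 𝓝 x, (f z).1 ∈ O :=
      (continuous_subtype_val.comp hf).continuousAt (hOo.mem_nhds hyO)
    filter_upwards [n1, n2, n3] with z hz1 hz2 hz3 hzS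
    refine hzS.2 (JoinedIn.trans (y := (f x).1) ⟨γ, fun t => ⟨(hγ t).1, ?_⟩⟩ ?_)
    · intro h
      exact hz2 ⟨t, h⟩
    · refine (hOc.joinedIn _ hyO _ hz3).mono fun w hw => ⟨(hO hw).2, ?_⟩
      intro h
      rw [mem_singleton_iff] at h
      exact disjoint_left.1 hAB hz1 (h ▸ (hO hw).1)
  have hIc : ∀ c : closure V, IsClosed {x : closure V | c.1 ∈ CutSet W a x.1} := by
    intro c
    have : {x : closure V | c.1 ∈ CutSet W a x.1}ᶜ =
        Subtype.val ⁻¹' (pathComponentIn (W \ {c.1}) a) := by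
      ext x
      simp [CutSet, pathComponentIn, hKW c]
    rw [← isOpen_compl_iff, this]
    exact ((hWo.sdiff isClosed_singleton).pathComponentIn a).preimage continuous_subtype_val
  have hSne : (⟨a, haK⟩ : closure V) ∈ S := cutSet_left _ haW
  -- a maximal element
  obtain ⟨m, hmS, hm⟩ : ∃ m ∈ S, ∀ z ∈ S, m.1 ∈ CutSet W a z.1 → z = m := by
    let r : S → S → Prop := fun x y => x.1.1 ∈ CutSet W a y.1.1
    have hz := exists_maximal_of_chains_bounded (r := r) ?_ ?_
    · obtain ⟨m, hm⟩ := hz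
      refine ⟨m.1, m.2, fun z hz hmz => ?_⟩
      have := hm ⟨z, hz⟩ hmz
      exact Subtype.ext (cutSet_antisymm hWc haW this hmz)
    · intro c hc
      by_cases hcn : c.Nonempty
      · have hcne : Nonempty c := hcn.to_subtype
        have h2 := IsCompact.nonempty_iInter_of_directed_nonempty_isCompact_isClosed
          (fun s : c => S ∩ {x : closure V | s.1.1.1 ∈ CutSet W a x.1}) ?_
          (fun s => ⟨s.1.1, s.1.2, cutSet_right _ (hKW _)⟩)
          (fun s => (hSc.inter (hIc _)).isCompact)
          (fun s => hSc.inter (hIc _))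
        · obtain ⟨x, hx⟩ := h2
          rw [mem_iInter] at hx
          exact ⟨⟨x, (hx (Classical.arbitrary _)).1⟩, fun y hy => (hx ⟨y, hy⟩).2⟩
        · rintro ⟨x, hx⟩ ⟨y, hy⟩
          by_cases hxy : x = y
          · subst hxy
            exact ⟨⟨x, hx⟩, Subset.rfl, Subset.rfl⟩
          rcases hc hx hy hxy with h | h
          · exact ⟨⟨y, hy⟩, fun z hz => ⟨hz.1, cutSet_trans h hz.2⟩, Subset.rfl⟩
          · exact ⟨⟨x, hx⟩, Subset.rfl, fun z hz => ⟨hz.1, cutSet_trans h hz.2⟩⟩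
      · exact ⟨⟨_, hSne⟩, fun y hy => absurd ⟨y, hy⟩ hcn⟩
    · intro x y z hxy hyz
      exact cutSet_trans hxy hyz
  refine ⟨m, ?_⟩
  by_contra hne
  have hne' : (f m).1 ≠ m.1 := fun h => hne (Subtype.ext h)
  obtain ⟨A, B, hA, hB, hmA, hyB, hAB⟩ := t2_separation hne'.symm
  obtain ⟨O, hO, hOo, hOc, hyO⟩ := exists_small (hB.inter hWo) ⟨hyB, hKW (f m)⟩
  have n0 : {z : closure V | z.1 ∈ A ∧ (f z).1 ∈ O} ∈ 𝓝 m :=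
    inter_mem (continuous_subtype_val.continuousAt (hA.mem_nhds hmA))
      ((continuous_subtype_val.comp hf).continuousAt (hOo.mem_nhds hyO))
  obtain ⟨N, hNo, hmN, hN⟩ := mem_nhdsWithin.1 (mem_nhds_subtype_iff_nhdsWithin.1 n0)
  have hpre := cutSet_preconn hWc hW (hKW m) (hKW (f m))
  obtain ⟨z, hzB, hzN, hzm⟩ : ∃ z ∈ CutSet W m.1 (f m).1, z ∈ N ∧ z ≠ m.1 := by
    by_contra hcon
    push Not at hcon
    obtain ⟨w, hw1, hw2, hw3⟩ := hpre N {m.1}ᶜ hNo isOpen_compl_singleton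
      (fun x hx => by
        by_cases h : x = m.1
        · left; rw [h]; exact hmN
        · right; exact h)
      ⟨m.1, cutSet_left _ (hKW m), hmN⟩ ⟨(f m).1, cutSet_right _ (hKW _), hne'⟩
    exact hw3 (hcon w hw1 hw2)
  have hzK : z ∈ closure V := cutSet_convex hWo hV hVW m.2 (f m).2 hzB
  obtain ⟨z', hz', hzz⟩ := hN ⟨hzN, hzK⟩
  subst hzz
  have hzafm : z'.1 ∈ CutSet W a (f m).1 := cutSet_symm (cutSet_trans (cutSet_symm hzB) (cutSet_symm hmS))
  have hzS : z' ∈ S := by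
    rcases cutSet_tri (f z').1 hzafm with h | h
    · exact h
    · exfalso
      have := cutSet_sub hOc (hO.trans inter_subset_right) hz'.2 hyO h
      exact disjoint_left.1 hAB hz'.1 (hO this).1
  have hmz : m.1 ∈ CutSet W a z'.1 := by
    rcases cutSet_tri z'.1 hmS with h | h
    · exact h
    · exact absurd (cutSet_antisymm hWc (hKW (f m)) (cutSet_symm hzB) (cutSet_symm h)) hzm
  exact hzm (congrArg Subtype.val (hm z' hzS hmz))

end BtwLemmas


/-! ### Extending circle-valued maps when the covering dimension is at most one -/

section CircleExtension

lemma line_null (p q : ℂ) : MeasureTheory.volume ((line[ℝ, p, q] : AffineSubspace ℝ ℂ) : Set ℂ) = 0 := by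
  apply MeasureTheory.Measure.addHaar_affineSubspace
  intro h
  have h1 := collinear_pair ℝ p q
  have h2 : vectorSpan ℝ ({p, q} : Set ℂ) = ⊤ := by
    rw [← direction_affineSpan, h, AffineSubspace.direction_top]
  rw [Collinear, h2, rank_top, Complex.rank_real_complex] at h1
  norm_num at h1

lemma exists_small_avoiding {n : ℕ} (p : Fin n → ℂ) :
    ∃ w : ℂ, ‖w‖ < 1 / 4 ∧ ∀ i j, w ∉ (line[ℝ, p i, p j] : AffineSubspace ℝ ℂ) := by
  by_contra hcon
  push Not at hcon
  have h1 : ball (0 : ℂ) (1 / 4) ⊆ ⋃ i, ⋃ j, ((line[ℝ, p i, p j] : AffineSubspace ℝ ℂ) : Set ℂ) := by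
    intro w hw
    obtain ⟨i, j, h⟩ := hcon w (by simpa using hw)
    exact mem_iUnion₂.2 ⟨i, j, h⟩
  have h2 : MeasureTheory.volume (⋃ i, ⋃ j, ((line[ℝ, p i, p j] : AffineSubspace ℝ ℂ) : Set ℂ)) = 0 := by
    simp only [MeasureTheory.measure_iUnion_null_iff]
    exact fun i j => line_null _ _
  exact (measure_ball_pos MeasureTheory.volume (0 : ℂ) (by norm_num : (0:ℝ) < 1 / 4)).ne'
    (MeasureTheory.measure_mono_null h1 h2)

lemma exists_nonvanishing {X : Type*} [MetricSpace X] [CompactSpace X] (hdim : CoveringDimLE X 1)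
    (G : C(X, ℂ)) : ∃ K : C(X, ℂ), (∀ x, K x ≠ 0) ∧ ∀ x, ‖K x - G x‖ < 1 / 2 := by
  have huc := Metric.uniformContinuous_iff.1
    (CompactSpace.uniformContinuous_of_continuous G.continuous) (1 / 4) (by norm_num)
  obtain ⟨δ, hδ, hG⟩ := huc
  obtain ⟨t, _, htf, ht⟩ := finite_cover_balls_of_compact (isCompact_univ (X := X)) hδ
  obtain ⟨n, c, hc⟩ := htf.fin_param
  have hUcov : (⋃ i, ball (c i) δ) = univ := by
    rw [eq_univ_iff_forall]
    intro x
    obtain ⟨y, hy, hxy⟩ := mem_iUnion₂.1 (ht (mem_univ x))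
    rw [← hc.2] at hy
    obtain ⟨i, rfl⟩ := hy
    exact mem_iUnion.2 ⟨i, hxy⟩
  obtain ⟨V, hVo, hVU, hVcov, hVord⟩ := hdim (Fin n) (fun i => ball (c i) δ)
    (fun i => isOpen_ball) hUcov
  obtain ⟨φ, hφ⟩ := PartitionOfUnity.exists_isSubordinate (isClosed_univ (X := X)) V hVo hVcov.ge
  have hφV : ∀ i x, φ i x ≠ 0 → x ∈ V i := fun i x h => hφ i (subset_closure h)
  obtain ⟨w, hw, hwl⟩ := exists_small_avoiding (fun i => G (c i))
  let H : X → ℂ := fun x => ∑ᶠ i, φ i x • G (c i)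
  have hHc : Continuous H := by
    have : H = fun x => ∑ i, φ i x • G (c i) := by
      funext x
      exact finsum_eq_sum_of_fintype _
    rw [this]
    fun_prop
  have hHG : ∀ x, H x ∈ closedBall (G x) (1 / 4) := by
    intro x
    refine φ.finsum_smul_mem_convex (g := fun i _ => G (c i)) (mem_univ x) (fun i hi => ?_)
      (convex_closedBall _ _)
    have := hVU i (hφV i x hi)
    rw [mem_ball, dist_comm] at this
    exact (hG this).le
  have hHl : ∀ x, ∃ i j, H x ∈ (line[ℝ, G (c i), G (c j)] : AffineSubspace ℝ ℂ) := by
    intro x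
    obtain ⟨i, j, hij⟩ : ∃ i j, {k | x ∈ V k} ⊆ ({i, j} : Set (Fin n)) := by
      obtain ⟨i, hi⟩ := mem_iUnion.1 (hVcov.ge (mem_univ x))
      by_cases h : ∃ j, x ∈ V j ∧ j ≠ i
      · obtain ⟨j, hj, hji⟩ := h
        refine ⟨i, j, ?_⟩
        have hsub : ({i, j} : Set (Fin n)) ⊆ {k | x ∈ V k} := by
          rintro k (rfl | rfl)
          · exact hi
          · exact hj
        refine (Set.eq_of_subset_of_ncard_le hsub ?_ (toFinite _)).ge
        rw [Set.ncard_pair hji.symm]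
        exact hVord x
      · push Not at h
        exact ⟨i, i, fun k hk => Or.inl (h k hk)⟩
    refine ⟨i, j, φ.finsum_smul_mem_convex (g := fun i _ => G (c i)) (mem_univ x) (fun k hk => ?_)
      (AffineSubspace.convex _)⟩
    rcases hij (hφV k x hk) with h | h
    · rw [h]
      exact left_mem_affineSpan_pair ℝ _ _
    · rw [mem_singleton_iff] at h
      rw [h]
      exact right_mem_affineSpan_pair ℝ _ _
  refine ⟨⟨fun x => H x - w, by fun_prop⟩, fun x hx => ?_, fun x => ?_⟩
  · obtain ⟨i, j, h⟩ := hHl x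
    have : H x = w := sub_eq_zero.1 hx
    rw [this] at h
    exact hwl i j h
  · have h1 : ‖H x - G x‖ ≤ 1 / 4 := by
      rw [← dist_eq_norm]
      exact hHG x
    have h2 : H x - w - G x = (H x - G x) - w := by ring
    change ‖H x - w - G x‖ < _
    rw [h2]
    linarith [norm_sub_le (H x - G x) w]

lemma circle_extend {X : Type*} [MetricSpace X] [CompactSpace X] (hdim : CoveringDimLE X 1)
    {S : Set X} (hS : IsClosed S) (g : S → Circle) (hg : Continuous g) :
    ∃ r : X → Circle, Continuous r ∧ ∀ s : S, r s = g s := by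
  obtain ⟨G, hG⟩ := ContinuousMap.exists_restrict_eq hS
    (⟨fun s => (g s : ℂ), by fun_prop⟩ : C(S, ℂ))
  have hGs : ∀ s : S, G s = g s := fun s => congrArg (fun h : C(S, ℂ) => h s) hG
  obtain ⟨K, hK0, hKG⟩ := exists_nonvanishing hdim G
  let q : S → ℂ := fun s => (g s : ℂ) * (starRingEnd ℂ) (K s)
  have hqc : Continuous q := by
    have := K.continuous
    fun_prop
  have hq : ∀ s, q s ∈ Complex.slitPlane := by
    intro s
    left
    have h1 : ‖K s - g s‖ < 1 / 2 := by
      rw [← hGs]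
      exact hKG s
    have h2 : q s = 1 + (g s : ℂ) * (starRingEnd ℂ) (K s - g s) := by
      have h3 : (g s : ℂ) * (starRingEnd ℂ) (g s : ℂ) = 1 := by
        rw [Complex.mul_conj]
        simp
      simp only [q, map_sub, mul_sub, h3]
      ring
    have h4 : ‖(g s : ℂ) * (starRingEnd ℂ) (K s - g s)‖ < 1 / 2 := by
      rw [norm_mul, RCLike.norm_conj, Circle.norm_coe, one_mul]
      exact h1
    rw [h2, Complex.add_re, Complex.one_re]
    have := (abs_le.1 (Complex.abs_re_le_norm ((g s : ℂ) * (starRingEnd ℂ) (K s - g s)))).1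
    linarith
  have hθc : Continuous fun s => Complex.arg (q s) :=
    continuous_iff_continuousAt.2 fun s =>
      (Complex.continuousAt_arg (hq s)).comp hqc.continuousAt
  obtain ⟨Θ, hΘ⟩ := ContinuousMap.exists_restrict_eq hS
    (⟨fun s => Complex.arg (q s), hθc⟩ : C(S, ℝ))
  have hΘs : ∀ s : S, Θ s = Complex.arg (q s) := fun s => congrArg (fun h : C(S, ℝ) => h s) hΘ
  have hKn : ∀ x, (‖K x‖ : ℂ) ≠ 0 := fun x => by
    exact_mod_cast norm_ne_zero_iff.2 (hK0 x)
  let r0 : X → Circle := fun x => ⟨K x / ‖K x‖, mem_sphere_zero_iff_norm.2 (by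
    rw [norm_div, Complex.norm_real, norm_norm, div_self (norm_ne_zero_iff.2 (hK0 x))])⟩
  have hr0 : Continuous r0 := by
    refine Continuous.subtype_mk ?_ _
    exact K.continuous.div (Complex.continuous_ofReal.comp K.continuous.norm) hKn
  refine ⟨fun x => r0 x * Circle.exp (Θ x), by fun_prop, fun s => ?_⟩
  apply Circle.ext
  rw [Circle.coe_mul, Circle.coe_exp, hΘs]
  change K s / ‖K s‖ * _ = _
  have hqn : ‖q s‖ = ‖K s‖ := by
    simp only [q]
    rw [norm_mul, RCLike.norm_conj, Circle.norm_coe, one_mul]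
  have h1 : (‖K s‖ : ℂ) * Complex.exp (Complex.arg (q s) * Complex.I) = q s := by
    rw [← hqn]
    exact Complex.norm_mul_exp_arg_mul_I (q s)
  have h2 : Complex.exp (Complex.arg (q s) * Complex.I) = q s / ‖K s‖ := by
    rw [eq_div_iff (hKn s), mul_comm, h1]
  rw [h2]
  have h3 : K s * (starRingEnd ℂ) (K s) = (‖K s‖ : ℂ) ^ 2 := Complex.mul_conj' _
  have h4 := hKn s
  field_simp
  simp only [q]
  rw [mul_left_comm, h3, mul_comm]

lemma exists_no_periodic {X : Type*} [MetricSpace X] [CompactSpace X] (hdim : CoveringDimLE X 1)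
    {S : Set X} (hS : IsSimpleClosedCurve S) :
    ∃ f : X → X, Continuous f ∧ (∀ x, f x ∈ S) ∧ ∀ x, ∀ n : ℕ, 1 ≤ n → f^[n] x ≠ x := by
  obtain ⟨e1⟩ := hS
  obtain ⟨e2⟩ := circle_homeo_sphere
  let e : S ≃ₜ Circle := e1.trans e2.symm
  have hSk : CompactSpace S := e.symm.compactSpace
  have hSc : IsClosed S := (isCompact_iff_compactSpace.2 hSk).isClosed
  obtain ⟨r, hr, hrs⟩ := circle_extend hdim hSc e e.continuous
  let w : Circle := Circle.exp 1
  let f : X → X := fun x => (e.symm (w * r x)).1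
  have hf : Continuous f := by fun_prop
  have hrf : ∀ x, r (f x) = w * r x := by
    intro x
    simp only [f]
    rw [hrs, e.apply_symm_apply]
  have hrfn : ∀ (n : ℕ) x, r (f^[n] x) = w ^ n * r x := by
    intro n x
    induction n with
    | zero => simp
    | succ n ih => rw [Function.iterate_succ_apply', hrf, ih, pow_succ', mul_assoc]
  refine ⟨f, hf, fun x => (e.symm _).2, fun x n hn h => ?_⟩
  have h1 := hrfn n x
  rw [h] at h1
  have h2 : w ^ n = 1 := by
    simpa using h1.symm
  have h3 : Circle.exp (n : ℝ) = 1 := by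
    rw [← h2]
    simp only [w]
    rw [← Circle.exp_natCast_mul, mul_one]
  rw [Circle.exp_eq_one] at h3
  obtain ⟨m, hm⟩ := h3
  have hn0 : (n : ℝ) ≠ 0 := by positivity
  have hm0 : (m : ℝ) ≠ 0 := by
    intro h0
    rw [h0] at hm
    simp at hm
    omega
  refine irrational_pi ⟨(n : ℚ) / (2 * m), ?_⟩
  push_cast
  field_simp
  linarith

end CircleExtension


/-! ### The implications -/

section Implications

lemma good_region {X : Type*} [MetricSpace X] [CompactSpace X] [LocallyPathConnectedSpace X]
    (h : ∀ y : X, ∃ U, IsOpen U ∧ y ∈ U ∧ ∀ S ⊆ U, ¬ IsSimpleClosedCurve S)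
    {y : X} {O : Set X} (hO : IsOpen O) (hy : y ∈ O) :
    ∃ V ⊆ O, IsOpen V ∧ y ∈ V ∧ IsDendrite (closure V) ∧ HasFPP (closure V) := by
  obtain ⟨U, hU, hyU, hUS⟩ := h y
  obtain ⟨W, hW, hWo, hWc, hyW⟩ := exists_small (hU.inter hO) ⟨hyU, hy⟩
  obtain ⟨C, hC, hCc, hCW⟩ := exists_mem_nhds_isClosed_subset (hWo.mem_nhds hyW)
  obtain ⟨V, hV, hVo, hVc, hyV⟩ := exists_small isOpen_interior (mem_interior_iff_mem_nhds.2 hC)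
  have hVW : closure V ⊆ W :=
    (closure_minimal (hV.trans interior_subset) hCc).trans hCW
  have hWS : ∀ S ⊆ W, ¬ IsSimpleClosedCurve S :=
    fun S hS => hUS S (hS.trans (hW.trans inter_subset_left))
  exact ⟨V, (subset_closure.trans hVW).trans (hW.trans inter_subset_right), hVo, hyV,
    closure_isDendrite hWo hWc hWS hVc hVW, closure_hasFPP hWo hWc hWS hVc hVW⟩

lemma lfpp_lppp {X : Type*} [TopologicalSpace X] (h : HasLFPP X) : HasLPPP X := by
  obtain ⟨𝓑, hB, h⟩ := h
  refine ⟨𝓑, hB, fun B hBB f hf => ?_⟩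
  obtain ⟨x, hx⟩ := h B hBB f hf
  exact ⟨x, 1, le_rfl, hx⟩

lemma lfpp_wlfpp {X : Type*} [TopologicalSpace X] (h : HasLFPP X) : HasWLFPP X := by
  obtain ⟨𝓑, hB, h⟩ := h
  refine ⟨𝓑, hB, fun B hBB f hf hfB => ?_⟩
  have hm : ∀ x ∈ closure B, f x ∈ B := fun x hx => hfB ⟨x, hx, rfl⟩
  obtain ⟨x, hx⟩ := h B hBB (fun x => ⟨f x, subset_closure (hm x x.2)⟩) (by fun_prop)
  have hx1 : f x = x := congrArg Subtype.val hx
  exact ⟨x, hx1 ▸ hm x x.2, hx1⟩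

lemma wlfpp_wlppp {X : Type*} [TopologicalSpace X] (h : HasWLFPP X) : HasWLPPP X := by
  obtain ⟨𝓑, hB, h⟩ := h
  refine ⟨𝓑, hB, fun B hBB f hf hfB => ?_⟩
  obtain ⟨x, hxB, hx⟩ := h B hBB f hf hfB
  exact ⟨x, hxB, 1, le_rfl, hx⟩

lemma lppp_wlppp {X : Type*} [TopologicalSpace X] (h : HasLPPP X) : HasWLPPP X := by
  obtain ⟨𝓑, hB, h⟩ := h
  refine ⟨𝓑, hB, fun B hBB f hf hfB => ?_⟩
  have hm : ∀ x ∈ closure B, f x ∈ B := fun x hx => hfB ⟨x, hx, rfl⟩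
  let F : closure B → closure B := fun x => ⟨f x, subset_closure (hm x x.2)⟩
  have hF : ∀ (n : ℕ) x, (F^[n] x).1 = f^[n] x.1 := by
    intro n x
    induction n with
    | zero => rfl
    | succ n ih => rw [Function.iterate_succ_apply', Function.iterate_succ_apply', ← ih]
  obtain ⟨x, n, hn, hx⟩ := h B hBB F (by fun_prop)
  have hx1 : f^[n] x.1 = x.1 := by rw [← hF, hx]
  refine ⟨x, ?_, n, hn, hx1⟩
  obtain ⟨k, rfl⟩ : ∃ k, n = k + 1 := ⟨n - 1, by omega⟩
  rw [← hx1, Function.iterate_succ_apply', ← hF]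
  exact hm _ (F^[k] x).2

lemma wlppp_star {X : Type*} [MetricSpace X] [CompactSpace X] (hdim : CoveringDimLE X 1)
    (h : HasWLPPP X) : ∀ y : X, ∃ U, IsOpen U ∧ y ∈ U ∧ ∀ S ⊆ U, ¬ IsSimpleClosedCurve S := by
  obtain ⟨𝓑, hB, h⟩ := h
  intro y
  obtain ⟨B, hBB, hyB, _⟩ := hB.exists_subset_of_mem_open (mem_univ y) isOpen_univ
  refine ⟨B, hB.isOpen hBB, hyB, fun S hSB hS => ?_⟩
  obtain ⟨f, hf, hfS, hfp⟩ := exists_no_periodic hdim hS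
  obtain ⟨x, _, n, hn, hx⟩ := h B hBB f hf (by
    rintro _ ⟨x, _, rfl⟩
    exact hSB (hfS x))
  exact hfp x n hn hx

lemma localDendrite_star {X : Type*} [TopologicalSpace X] (h : IsLocalDendrite X) :
    ∀ y : X, ∃ U, IsOpen U ∧ y ∈ U ∧ ∀ S ⊆ U, ¬ IsSimpleClosedCurve S := by
  intro y
  obtain ⟨N, hN, _, hD⟩ := h y
  exact ⟨interior N, isOpen_interior, mem_interior_iff_mem_nhds.2 hN,
    fun S hS => hD.2.2.2 S (hS.trans interior_subset)⟩

end Implications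

end Helpers

/-- For a locally connected one-dimensional metric continuum, the properties LPPP, wLPPP,
being a local dendrite, LFPP and wLFPP are all equivalent. -/
theorem stmt_12 {X : Type*} [MetricSpace X] [CompactSpace X] [ConnectedSpace X] [Nonempty X]
    [LocallyConnectedSpace X]
    (hdim : CoveringDimLE X 1 ∧ ¬ CoveringDimLE X 0) :
    List.TFAE [HasLPPP X, HasWLPPP X, IsLocalDendrite X, HasLFPP X, HasWLFPP X] := by
  have hloc := peano_locPathConnected (X := X)
  tfae_have 1 → 2 := lppp_wlppp
  tfae_have 2 → 3 := by
    intro h y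
    obtain ⟨V, _, hVo, hyV, hD, _⟩ :=
      good_region (wlppp_star hdim.1 h) isOpen_univ (Set.mem_univ y)
    exact ⟨closure V, Filter.mem_of_superset (hVo.mem_nhds hyV) subset_closure,
      isClosed_closure, hD⟩
  tfae_have 3 → 4 := by
    intro h
    refine ⟨{B | IsOpen B ∧ HasFPP (closure B)}, ?_, fun B hB => hB.2⟩
    refine TopologicalSpace.isTopologicalBasis_of_isOpen_of_nhds (fun B hB => hB.1) ?_
    intro y O hy hO
    obtain ⟨V, hVO, hVo, hyV, _, hF⟩ := good_region (localDendrite_star h) hO hy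
    exact ⟨V, ⟨hVo, hF⟩, hyV, hVO⟩
  tfae_have 4 → 1 := lfpp_lppp
  tfae_have 4 → 5 := lfpp_wlfpp
  tfae_have 5 → 2 := wlfpp_wlppp
  tfae_finish
end

section
/- Let X be a locally connected one-dimensional metric continuum. If X has the weak local periodic point property (wLPPP), then X is a local dendrite. -/
namespace WL
open Set Topology

/-! ### Small locally connected closed neighbourhoods -/

section PropS
variable {X : Type*}

/-- The union of the members of the `n`-th family meeting `A`. -/
def star (C : ℕ → Set (Set X)) (n : ℕ) (A : Set X) : Set X :=
  ⋃₀ {U | U ∈ C n ∧ (U ∩ A).Nonempty}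

/-- Iterated stars, starting with index `n`. -/
def E (C : ℕ → Set (Set X)) : ℕ → ℕ → Set X → Set X
  | 0, _, A => A
  | k + 1, n, A => E C k (n + 1) (star C n A)

def R (C : ℕ → Set (Set X)) (n : ℕ) (A : Set X) : Set X := ⋃ k, E C k n A

theorem subset_star {C : ℕ → Set (Set X)} (hC : ∀ n, ⋃₀ (C n) = univ) (n : ℕ) (A : Set X) :
    A ⊆ star C n A := by
  intro x hx
  have : x ∈ ⋃₀ (C n) := by rw [hC]; trivial
  obtain ⟨U, hU, hxU⟩ := this
  exact ⟨U, ⟨hU, x, hxU, hx⟩, hxU⟩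

theorem subset_E {C : ℕ → Set (Set X)} (hC : ∀ n, ⋃₀ (C n) = univ) (k n : ℕ) (A : Set X) :
    A ⊆ E C k n A := by
  induction k generalizing n A with
  | zero => exact subset_rfl
  | succ k ih => exact (subset_star hC n A).trans (ih _ _)

theorem star_sUnion (C : ℕ → Set (Set X)) (n : ℕ) (T : Set (Set X)) :
    star C n (⋃₀ T) = ⋃₀ ((star C n) '' T) := by
  ext x
  simp only [star, mem_sUnion, mem_ofPred_eq, sUnion_image, mem_iUnion]
  constructor
  · rintro ⟨U, ⟨hU, y, hyU, S, hS, hyS⟩, hx⟩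
    exact ⟨S, hS, U, ⟨hU, y, hyU, hyS⟩, hx⟩
  · rintro ⟨S, hS, U, ⟨hU, y, hyU, hyS⟩, hx⟩
    exact ⟨U, ⟨hU, y, hyU, S, hS, hyS⟩, hx⟩

theorem E_sUnion (C : ℕ → Set (Set X)) (k n : ℕ) (T : Set (Set X)) :
    E C k n (⋃₀ T) = ⋃₀ ((E C k n) '' T) := by
  induction k generalizing n T with
  | zero => simp [E]
  | succ k ih =>
    simp only [E]
    rw [star_sUnion, ih, image_image]

theorem R_sUnion (C : ℕ → Set (Set X)) (n : ℕ) (T : Set (Set X)) :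
    R C n (⋃₀ T) = ⋃ A ∈ T, R C n A := by
  ext x
  simp only [R, E_sUnion, mem_iUnion, sUnion_image]
  constructor
  · rintro ⟨k, A, hA, h⟩; exact ⟨A, hA, k, h⟩
  · rintro ⟨A, hA, k, h⟩; exact ⟨k, A, hA, h⟩

theorem R_star {C : ℕ → Set (Set X)} (hC : ∀ n, ⋃₀ (C n) = univ) (n : ℕ) (A : Set X) :
    R C n A = R C (n + 1) (star C n A) := by
  apply subset_antisymm
  · apply iUnion_subset
    rintro (_ | k)
    · exact (subset_star hC n A).trans (subset_iUnion (fun k => E C k (n+1) (star C n A)) 0)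
    · exact subset_iUnion (fun k => E C k (n+1) (star C n A)) k
  · apply iUnion_subset
    intro k
    exact subset_iUnion (fun k => E C k n A) (k + 1)

theorem R_shift {C : ℕ → Set (Set X)} (hC : ∀ n, ⋃₀ (C n) = univ) (n : ℕ) (A : Set X) :
    ∃ A', R C 0 A = R C n A' := by
  induction n with
  | zero => exact ⟨A, rfl⟩
  | succ n ih =>
    obtain ⟨A', h⟩ := ih
    exact ⟨_, h.trans (R_star hC n A')⟩

theorem star_conn [TopologicalSpace X] {C : ℕ → Set (Set X)} (hC : ∀ n, ⋃₀ (C n) = univ)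
    (hp : ∀ n, ∀ U ∈ C n, IsPreconnected U) (n : ℕ) {A : Set X}
    (hA : IsConnected A) : IsConnected (star C n A) := by
  obtain ⟨a, ha⟩ := hA.nonempty
  refine ⟨⟨a, subset_star hC n A ha⟩, isPreconnected_of_forall a ?_⟩
  rintro y ⟨U, ⟨hU, z, hzU, hzA⟩, hy⟩
  refine ⟨A ∪ U, union_subset (subset_star hC n A) ?_, Or.inl ha, Or.inr hy, ?_⟩
  · exact fun x hx => ⟨U, ⟨hU, z, hzU, hzA⟩, hx⟩
  · exact IsPreconnected.union z hzA hzU hA.isPreconnected (hp n U hU)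

theorem E_conn [TopologicalSpace X] {C : ℕ → Set (Set X)} (hC : ∀ n, ⋃₀ (C n) = univ)
    (hp : ∀ n, ∀ U ∈ C n, IsPreconnected U) (k n : ℕ) {A : Set X}
    (hA : IsConnected A) : IsConnected (E C k n A) := by
  induction k generalizing n A with
  | zero => exact hA
  | succ k ih => exact ih _ (star_conn hC hp n hA)

theorem R_conn [TopologicalSpace X] {C : ℕ → Set (Set X)} (hC : ∀ n, ⋃₀ (C n) = univ)
    (hp : ∀ n, ∀ U ∈ C n, IsPreconnected U) (n : ℕ) {A : Set X}
    (hA : IsConnected A) : IsConnected (R C n A) := by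
  obtain ⟨a, ha⟩ := hA.nonempty
  refine ⟨⟨a, mem_iUnion.2 ⟨0, ha⟩⟩, isPreconnected_of_forall a ?_⟩
  intro y hy
  obtain ⟨k, hk⟩ := mem_iUnion.1 hy
  exact ⟨E C k n A, subset_iUnion (fun k => E C k n A) k, subset_E hC k n A ha, hk,
    (E_conn hC hp k n hA).isPreconnected⟩

theorem E_dist [MetricSpace X] {C : ℕ → Set (Set X)} {ε : ℝ} (hε : 0 < ε)
    (hd : ∀ n, ∀ U ∈ C n, ∀ x ∈ U, ∀ y ∈ U, dist x y ≤ ε * (1/2)^n) (k n : ℕ) (A : Set X)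
    (y : X) (hy : y ∈ E C k n A) : ∃ x ∈ A, dist y x ≤ 2 * (ε * (1/2)^n) := by
  induction k generalizing n A with
  | zero => exact ⟨y, hy, by rw [dist_self]; positivity⟩
  | succ k ih =>
    obtain ⟨x, ⟨U, ⟨hU, z, hzU, hzA⟩, hxU⟩, h⟩ := ih _ _ hy
    refine ⟨z, hzA, ?_⟩
    have h1 := hd n U hU x hxU z hzU
    have h2 := dist_triangle y x z
    rw [pow_succ] at h
    linarith

theorem exists_cover [MetricSpace X] [CompactSpace X] [LocallyConnectedSpace X] {r : ℝ}
    (hr : 0 < r) : ∃ T : Set (Set X), T.Finite ∧ ⋃₀ T = univ ∧ (∀ U ∈ T, IsOpen U ∧ IsConnected U)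
      ∧ ∀ U ∈ T, ∀ x ∈ U, ∀ y ∈ U, dist x y ≤ r := by
  have h : ∀ x : X, ∃ U : Set X, U ⊆ Metric.ball x (r/2) ∧ IsOpen U ∧ x ∈ U ∧ IsConnected U :=
    fun x => locallyConnectedSpace_iff_subsets_isOpen_isConnected.1 inferInstance x _
      (Metric.ball_mem_nhds x (by positivity))
  choose U hUb hUo hUx hUc using h
  obtain ⟨t, ht⟩ := isCompact_univ.elim_finite_subcover U hUo
    (fun x _ => mem_iUnion.2 ⟨x, hUx x⟩)
  refine ⟨U '' (t : Set X), t.finite_toSet.image _, ?_, ?_, ?_⟩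
  · rw [sUnion_image]; exact univ_subset_iff.1 ht
  · rintro _ ⟨x, -, rfl⟩; exact ⟨hUo x, hUc x⟩
  · rintro _ ⟨x, -, rfl⟩ a ha b hb
    have h1 := hUb x ha
    have h2 := hUb x hb
    rw [Metric.mem_ball] at h1 h2
    have := dist_triangle_right a b x
    linarith

theorem locConn_of_S [MetricSpace X] (N : Set X)
    (h : ∀ ε > 0, ∃ T : Set (Set X), T.Finite ∧ ⋃₀ T = N ∧
      (∀ U ∈ T, IsClosed U ∧ IsPreconnected U) ∧ ∀ U ∈ T, ∀ x ∈ U, ∀ y ∈ U, dist x y ≤ ε) :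
    LocallyConnectedSpace N := by
  rw [locallyConnectedSpace_iff_connected_subsets]
  intro x U hU
  obtain ⟨ε, hε, hb⟩ := Metric.mem_nhds_iff.1 hU
  obtain ⟨T, hT, hTN, hTc, hTd⟩ := h (ε/2) (by positivity)
  have hsub : ∀ W ∈ T, W ⊆ N := fun W hW => hTN ▸ subset_sUnion_of_mem hW
  refine ⟨((↑) : N → X) ⁻¹' (⋃₀ {W | W ∈ T ∧ (x : X) ∈ W}), ?_, ?_, ?_⟩
  · have hcl : IsClosed (⋃₀ {W | W ∈ T ∧ (x : X) ∉ W}) := by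
      rw [sUnion_eq_biUnion]
      exact (hT.subset fun W hW => hW.1).isClosed_biUnion fun W hW => (hTc W hW.1).1
    have hop : IsOpen (((↑) : N → X) ⁻¹' (⋃₀ {W | W ∈ T ∧ (x : X) ∉ W})ᶜ) :=
      hcl.isOpen_compl.preimage continuous_subtype_val
    refine Filter.mem_of_superset (hop.mem_nhds ?_) ?_
    · rintro ⟨W, hW, hx⟩; exact hW.2 hx
    · intro y hy
      have : (y : X) ∈ ⋃₀ T := hTN ▸ y.2
      obtain ⟨W, hW, hyW⟩ := this
      by_cases hx : (x : X) ∈ W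
      · exact ⟨W, ⟨hW, hx⟩, hyW⟩
      · exact (hy ⟨W, ⟨hW, hx⟩, hyW⟩).elim
  · have : IsPreconnected (⋃₀ {W | W ∈ T ∧ (x : X) ∈ W}) :=
      isPreconnected_sUnion (x : X) _ (fun W hW => hW.2) (fun W hW => (hTc W hW.1).2)
    rw [← Topology.IsInducing.subtypeVal.isPreconnected_image, Subtype.image_preimage_coe,
      inter_eq_self_of_subset_right]
    · exact this
    · exact sUnion_subset fun W hW => hsub W hW.1
  · rintro y ⟨W, hW, hy⟩
    apply hb
    rw [Metric.mem_ball, Subtype.dist_eq]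
    have := hTd W hW.1 y hy x hW.2
    linarith

theorem exists_nhd [MetricSpace X] [CompactSpace X] [LocallyConnectedSpace X] (p : X) {ε : ℝ}
    (hε : 0 < ε) : ∃ N : Set X, N ∈ 𝓝 p ∧ IsClosed N ∧ IsConnected N ∧ LocallyConnectedSpace N ∧
      N ⊆ Metric.closedBall p (2 * ε) := by
  have h : ∀ n : ℕ, _ := fun n => exists_cover (X := X) (r := ε * (1/2)^n) (by positivity)
  choose C hfin hC hoc hd using h
  have hp : ∀ n, ∀ U ∈ C n, IsPreconnected U := fun n U hU => (hoc n U hU).2.isPreconnected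
  refine ⟨closure (R C 0 {p}), ?_, isClosed_closure, (R_conn hC hp 0 isConnected_singleton).closure,
    ?_, ?_⟩
  · have : p ∈ ⋃₀ (C 0) := by rw [hC]; trivial
    obtain ⟨U, hU, hpU⟩ := this
    refine Filter.mem_of_superset ((hoc 0 U hU).1.mem_nhds hpU) (subset_closure.trans' ?_)
    intro y hy
    exact mem_iUnion.2 ⟨1, ⟨U, ⟨hU, p, hpU, rfl⟩, hy⟩⟩
  · apply locConn_of_S
    intro η hη
    obtain ⟨n, hn⟩ : ∃ n : ℕ, (1/2 : ℝ)^n < η / (3 * ε) :=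
      exists_pow_lt_of_lt_one (by positivity) (by norm_num)
    rw [lt_div_iff₀ (by positivity)] at hn
    obtain ⟨A, hA⟩ := R_shift hC n {p}
    rw [R_star hC n A, star, R_sUnion] at hA
    have hTf : {U | U ∈ C n ∧ (U ∩ A).Nonempty}.Finite := (hfin n).subset fun U hU => hU.1
    refine ⟨(fun U => closure (R C (n+1) U)) '' {U | U ∈ C n ∧ (U ∩ A).Nonempty}, hTf.image _,
      ?_, ?_, ?_⟩
    · rw [hA, hTf.closure_biUnion, sUnion_image]
    · rintro _ ⟨U, hU, rfl⟩
      exact ⟨isClosed_closure, (R_conn hC hp _ (hoc n U hU.1).2).closure.isPreconnected⟩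
    · rintro _ ⟨U, hU, rfl⟩
      have key : ∀ x ∈ R C (n+1) U, ∀ y ∈ R C (n+1) U, dist x y ≤ η := by
        intro x hx y hy
        obtain ⟨k, hk⟩ := mem_iUnion.1 hx
        obtain ⟨l, hl⟩ := mem_iUnion.1 hy
        obtain ⟨x', hx', hxd⟩ := E_dist hε hd k _ _ _ hk
        obtain ⟨y', hy', hyd⟩ := E_dist hε hd l _ _ _ hl
        have h1 := hd n U hU.1 x' hx' y' hy'
        have h2 := dist_triangle4 x x' y' y
        rw [dist_comm y' y] at h2
        rw [pow_succ] at hxd hyd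
        nlinarith
      intro x hx y hy
      have hc : IsClosed {q : X × X | dist q.1 q.2 ≤ η} :=
        isClosed_le (by fun_prop) continuous_const
      have hs : closure (R C (n+1) U ×ˢ R C (n+1) U) ⊆ {q : X × X | dist q.1 q.2 ≤ η} :=
        closure_minimal (fun q hq => key _ hq.1 _ hq.2) hc
      rw [closure_prod_eq] at hs
      exact hs (show (x, y) ∈ _ from ⟨hx, hy⟩)
  · apply closure_minimal _ Metric.isClosed_closedBall
    intro y hy
    obtain ⟨k, hk⟩ := mem_iUnion.1 hy
    obtain ⟨x, hx, h⟩ := E_dist hε hd k _ _ _ hk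
    rw [mem_singleton_iff] at hx
    subst hx
    simpa using h

end PropS

/-! ### Extension of circle-valued maps -/

theorem circle_dist (z w : Circle) : dist z w = ‖(z : ℂ) - w‖ := by
  rw [← Complex.dist_eq]; rfl

theorem circle_cont : Continuous ((↑) : Circle → ℂ) := continuous_subtype_val

/-- The point of the circle given by a complex number of norm one. -/
def mkC (z : ℂ) (h : ‖z‖ = 1) : Circle := ⟨z, mem_sphere_zero_iff_norm.2 h⟩

theorem coe_mkC (z : ℂ) (h : ‖z‖ = 1) : (mkC z h : ℂ) = z := rfl

theorem mkC_cont {Y : Type*} [TopologicalSpace Y] {f : Y → ℂ} (hf : Continuous f)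
    (h : ∀ y, ‖f y‖ = 1) : Continuous fun y => mkC (f y) (h y) :=
  Continuous.subtype_mk hf _

theorem int_pi (m k : ℤ) (h : (m : ℝ) = k * (2 * Real.pi)) : m = 0 := by
  have hk : k = 0 := by
    by_contra hk
    have hk' : (k : ℝ) ≠ 0 := by exact_mod_cast hk
    refine irrational_pi ⟨(m : ℚ) / (k * 2), ?_⟩
    push_cast
    rw [h]
    field_simp
  subst hk
  simpa using h

theorem exists_extension {X : Type*} [MetricSpace X] [CompactSpace X] (hdim : CoveringDimLE X 1)
    (A : Set X) (hA : IsClosed A) (g : A → Circle) (hg : Continuous g) :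
    ∃ r : X → Circle, Continuous r ∧ ∀ a : A, r a = g a := by
  classical
  have : CompactSpace A := isCompact_iff_compactSpace.1 hA.isCompact
  have hgu := CompactSpace.uniformContinuous_of_continuous hg
  obtain ⟨δ, hδ, hgδ⟩ := Metric.uniformContinuous_iff.1 hgu 1 one_pos
  -- the cover
  obtain ⟨t, -, htf, htc⟩ := finite_cover_balls_of_compact (isCompact_univ (X := X))
    (show 0 < δ/4 by positivity)
  have := htf.fintype
  let e := (Fintype.equivFin t).symm
  obtain ⟨V, hVo, hVU, hVc, hV2⟩ := hdim (Fin (Fintype.card t))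
    (fun i => Metric.ball (e i : X) (δ/4)) (fun i => Metric.isOpen_ball) (by
      apply univ_subset_iff.1
      intro x hx
      obtain ⟨c, hc, hxc⟩ := mem_iUnion₂.1 (htc hx)
      exact mem_iUnion.2 ⟨e.symm ⟨c, hc⟩, by simpa using hxc⟩)
  have hVd : ∀ i, ∀ x ∈ V i, ∀ y ∈ V i, dist x y < δ/2 := by
    intro i x hx y hy
    have h1 := hVU i hx
    have h2 := hVU i hy
    rw [Metric.mem_ball] at h1 h2
    have := dist_triangle_right x y (e i : X)
    linarith
  obtain ⟨φ, hφ⟩ := PartitionOfUnity.exists_isSubordinate isClosed_univ V hVo hVc.ge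
  have hφV : ∀ i x, φ i x ≠ 0 → x ∈ V i := fun i x hx => hφ i (subset_tsupport _ hx)
  have hsum : ∀ x, ∑ i, φ i x = 1 := by
    intro x
    rw [← finsum_eq_sum_of_fintype]
    exact φ.sum_eq_one (mem_univ x)
  -- the vertices
  have ha : ∀ i, ∃ z : Circle, (∃ a : A, (a : X) ∈ V i) → ∃ a : A, (a : X) ∈ V i ∧ z = g a := by
    intro i
    by_cases h : ∃ a : A, (a : X) ∈ V i
    · obtain ⟨a, ha⟩ := h
      exact ⟨g a, fun _ => ⟨a, ha, rfl⟩⟩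
    · exact ⟨1, fun h' => (h h').elim⟩
  choose z₀ hz₀ using ha
  have hinf : (univ : Set Circle).Infinite := by
    have : Function.Injective (fun n : ℕ => Circle.exp ((n : ℝ) )) := by
      intro m n hmn
      obtain ⟨k, hk⟩ := Circle.exp_eq_exp.1 hmn
      have := int_pi ((m : ℤ) - n) k (by push_cast; linarith)
      omega
    exact (infinite_range_of_injective this).mono (subset_univ _)
  have hfin : (range fun i => (-(z₀ i : ℂ))).Finite := finite_range _
  obtain ⟨w, -, hw⟩ : ∃ w ∈ (univ : Set Circle), w ∉ ((↑) : Circle → ℂ) ⁻¹'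
      (range fun i => (-(z₀ i : ℂ))) := by
    apply hinf.exists_notMem_finite
    exact hfin.preimage (Subtype.val_injective.injOn)
  let z : Fin (Fintype.card t) → Circle := fun i => if ∃ a : A, (a : X) ∈ V i then z₀ i else w
  have hzA : ∀ i x (hx : x ∈ A), x ∈ V i → dist (z i) (g ⟨x, hx⟩) < 1 := by
    intro i x hx hxi
    have h : ∃ a : A, (a : X) ∈ V i := ⟨⟨x, hx⟩, hxi⟩
    obtain ⟨a, ha, hza⟩ := hz₀ i h
    simp only [z, if_pos h, hza]
    apply hgδ
    rw [Subtype.dist_eq]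
    have := hVd i a ha x hxi
    simp only
    linarith
  have hzz : ∀ i j x, x ∈ V i → x ∈ V j → (z i : ℂ) ≠ -(z j : ℂ) := by
    intro i j x hi hj heq
    by_cases hi' : ∃ a : A, (a : X) ∈ V i <;> by_cases hj' : ∃ a : A, (a : X) ∈ V j
    · simp only [z, if_pos hi', if_pos hj'] at heq
      obtain ⟨a, ha, hza⟩ := hz₀ i hi'
      obtain ⟨b, hb, hzb⟩ := hz₀ j hj'
      have h1 := hVd i a ha x hi
      have h2 := hVd j x hj b hb
      have h3 := dist_triangle (a : X) x b
      have h4 : dist (g a) (g b) < 1 := hgδ (by rw [Subtype.dist_eq]; linarith)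
      rw [← hza, ← hzb, circle_dist, heq, ← neg_add', norm_neg, ← two_mul,
        norm_mul, Circle.norm_coe] at h4
      norm_num at h4
    · simp only [z, if_pos hi', if_neg hj'] at heq
      exact hw ⟨i, by simp [heq]⟩
    · simp only [z, if_neg hi', if_pos hj'] at heq
      exact hw ⟨j, heq.symm⟩
    · simp only [z, if_neg hi', if_neg hj'] at heq
      have : (2 : ℂ) * (w : ℂ) = 0 := by linear_combination heq
      simp at this
  let F : X → ℂ := fun x => ∑ i, (φ i x : ℂ) * (z i : ℂ)
  have hFc : Continuous F := by
    refine continuous_finsetSum _ fun i _ => ?_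
    exact (Complex.continuous_ofReal.comp (φ i).continuous).mul continuous_const
  have hF0 : ∀ x, F x ≠ 0 := by
    intro x hx0
    obtain ⟨i, hi⟩ : ∃ i, φ i x ≠ 0 := by
      by_contra hcon
      push Not at hcon
      have := hsum x
      simp [hcon] at this
    have hxi := hφV i x hi
    by_cases hj : ∃ j, j ≠ i ∧ x ∈ V j
    · obtain ⟨j, hji, hxj⟩ := hj
      have hrest : ∀ k, k ≠ i ∧ k ≠ j → (φ k x : ℂ) * (z k : ℂ) = 0 := by
        rintro k ⟨hki, hkj⟩
        by_contra hk
        have hk' : φ k x ≠ 0 := by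
          intro h; apply hk; simp [h]
        have hxk := hφV k x hk'
        have hsub : (({i, j, k} : Finset (Fin (Fintype.card t))) : Set _) ⊆ {i | x ∈ V i} := by
          intro l hl
          simp only [Finset.coe_insert, Finset.coe_singleton, mem_insert_iff,
            mem_singleton_iff] at hl
          rcases hl with rfl | rfl | rfl <;> assumption
        have hle := Set.ncard_le_ncard hsub (toFinite _)
        rw [Set.ncard_coe_finset, Finset.card_eq_three.2
          ⟨i, j, k, hji.symm, hki.symm, hkj.symm, rfl⟩] at hle
        have := hV2 x
        omega
      have hF : F x = (φ i x : ℂ) * (z i : ℂ) + (φ j x : ℂ) * (z j : ℂ) :=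
        Fintype.sum_eq_add i j hji.symm hrest
      rw [hF] at hx0
      have h1 : (φ i x : ℂ) * (z i : ℂ) = -((φ j x : ℂ) * (z j : ℂ)) := by linear_combination hx0
      have h2 : φ i x = φ j x := by
        have := congrArg norm h1
        rw [norm_neg, norm_mul, norm_mul, Circle.norm_coe, Circle.norm_coe, Complex.norm_real,
          Complex.norm_real, Real.norm_of_nonneg (φ.nonneg i x),
          Real.norm_of_nonneg (φ.nonneg j x)] at this
        simpa using this
      rw [← h2] at h1
      have h3 : (φ i x : ℂ) ≠ 0 := by exact_mod_cast hi
      exact hzz i j x hxi hxj (mul_left_cancel₀ h3 (by rw [h1]; ring))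
    · push Not at hj
      have hF : F x = (φ i x : ℂ) * (z i : ℂ) := by
        apply Fintype.sum_eq_single i
        intro j hji
        have : φ j x = 0 := by
          by_contra hne
          exact hj j hji (hφV j x hne)
        simp [this]
      rw [hF] at hx0
      have h3 : (φ i x : ℂ) ≠ 0 := by exact_mod_cast hi
      simp [h3] at hx0
  have hFA : ∀ a : A, ‖F a - g a‖ < 1 := by
    intro a
    have h1 : F a - g a = ∑ i, (φ i a : ℂ) * ((z i : ℂ) - g a) := by
      simp only [mul_sub, Finset.sum_sub_distrib, ← Finset.sum_mul]
      have : (∑ i, (φ i a : ℂ)) = 1 := by exact_mod_cast hsum a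
      rw [this, one_mul]
    have hle : ∀ i, ‖(φ i a : ℂ) * ((z i : ℂ) - g a)‖ ≤ φ i a := by
      intro i
      rw [norm_mul, Complex.norm_real, Real.norm_of_nonneg (φ.nonneg i a)]
      by_cases h0 : φ i a = 0
      · simp [h0]
      · have := hzA i a a.2 (hφV i a h0)
        rw [circle_dist] at this
        exact mul_le_of_le_one_right (φ.nonneg i a) this.le
    have hlt : ∃ i, ‖(φ i a : ℂ) * ((z i : ℂ) - g a)‖ < φ i a := by
      obtain ⟨i, hi⟩ : ∃ i, φ i (a : X) ≠ 0 := by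
        by_contra hcon
        push Not at hcon
        have := hsum a
        simp [hcon] at this
      refine ⟨i, ?_⟩
      rw [norm_mul, Complex.norm_real, Real.norm_of_nonneg (φ.nonneg i a)]
      have := hzA i a a.2 (hφV i a hi)
      rw [circle_dist] at this
      exact mul_lt_of_lt_one_right (lt_of_le_of_ne (φ.nonneg i a) (Ne.symm hi)) this
    rw [h1, ← hsum a]
    obtain ⟨i, hi⟩ := hlt
    exact (norm_sum_le _ _).trans_lt
      (Finset.sum_lt_sum (fun i _ => hle i) ⟨i, Finset.mem_univ i, hi⟩)
  -- the angle
  have hgc : Continuous fun a : A => (g a : ℂ) := circle_cont.comp hg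
  have hslit : ∀ a : A, F a / g a ∈ Complex.slitPlane := by
    intro a
    apply Complex.ball_one_subset_slitPlane
    have h0 : (g a : ℂ) ≠ 0 := Circle.coe_ne_zero _
    rw [Metric.mem_ball, Complex.dist_eq, div_sub_one h0, norm_div, Circle.norm_coe, div_one]
    exact hFA a
  have hθc : Continuous fun a : A => Complex.arg (F a / g a) := by
    rw [continuous_iff_continuousAt]
    intro a
    refine (Complex.continuousAt_arg (hslit a)).comp (f := fun a : A => F a / g a) ?_
    exact ((hFc.comp continuous_subtype_val).div hgc (fun a => Circle.coe_ne_zero _)).continuousAt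
  obtain ⟨Θ, hΘ⟩ := ContinuousMap.exists_restrict_eq hA (⟨_, hθc⟩ : C(A, ℝ))
  have hΘ' : ∀ a : A, Θ a = Complex.arg (F a / g a) := fun a => DFunLike.congr_fun hΘ a
  have hn : ∀ x, ‖F x / (‖F x‖ : ℂ) * ((Circle.exp (-Θ x) : Circle) : ℂ)‖ = 1 := by
    intro x
    rw [norm_mul, Circle.norm_coe, norm_div, Complex.norm_real, norm_norm, mul_one,
      div_self (norm_ne_zero_iff.2 (hF0 x))]
  refine ⟨fun x => mkC _ (hn x), ?_, ?_⟩
  · apply mkC_cont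
    refine Continuous.mul (hFc.div (Complex.continuous_ofReal.comp hFc.norm) ?_) ?_
    · intro x; simpa using hF0 x
    · exact circle_cont.comp (Circle.exp.continuous.comp Θ.continuous.neg)
  · intro a
    apply Circle.ext
    rw [coe_mkC]
    have h1 := Complex.norm_mul_exp_arg_mul_I (F a / g a)
    rw [norm_div, Circle.norm_coe, div_one, ← hΘ' a] at h1
    have h0 : (g a : ℂ) ≠ 0 := Circle.coe_ne_zero _
    have h2 : (‖F a‖ : ℂ) ≠ 0 := by simpa using hF0 a
    rw [eq_div_iff h0] at h1
    rw [Circle.coe_exp]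
    have h3 : Complex.exp ((Θ a : ℂ) * Complex.I) * Complex.exp (((-Θ a : ℝ) : ℂ) * Complex.I) = 1 := by
      rw [← Complex.exp_add]; simp
    rw [div_mul_eq_mul_div, div_eq_iff h2]
    generalize Complex.exp (((-Θ a : ℝ) : ℂ) * Complex.I) = u at *
    linear_combination (-u) * h1 + (‖F a‖ : ℂ) * g a * h3

theorem exp_one_pow_ne (n : ℕ) (hn : 1 ≤ n) : (Circle.exp 1) ^ n ≠ 1 := by
  intro h
  rw [← Circle.exp_nsmul, Circle.exp_eq_one] at h
  obtain ⟨k, hk⟩ := h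
  have := int_pi n k (by simpa using hk)
  omega

theorem no_scc {X : Type*} [MetricSpace X] [CompactSpace X] (hdim : CoveringDimLE X 1)
    (B : Set X) (hB : ∀ f : X → X, Continuous f → f '' closure B ⊆ B →
      ∃ x ∈ B, ∃ n : ℕ, 1 ≤ n ∧ f^[n] x = x) (S : Set X) (hS : S ⊆ B) :
    ¬ IsSimpleClosedCurve S := by
  rintro ⟨e⟩
  have : CompactSpace S := e.symm.compactSpace
  have hSc : IsClosed S := (isCompact_iff_compactSpace.2 inferInstance : IsCompact S).isClosed
  let L := Complex.orthonormalBasisOneI.repr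
  have h1 : ∀ s : Metric.sphere (0 : EuclideanSpace ℝ (Fin 2)) 1,
      ‖L.symm s‖ = 1 := by
    intro s
    rw [L.symm.norm_map]
    exact mem_sphere_zero_iff_norm.1 s.2
  have h2 : ∀ c : Circle, L (c : ℂ) ∈ Metric.sphere (0 : EuclideanSpace ℝ (Fin 2)) 1 := by
    intro c
    rw [mem_sphere_zero_iff_norm, L.norm_map, Circle.norm_coe]
  let g : S → Circle := fun x => mkC _ (h1 (e x))
  let g' : Circle → S := fun c => e.symm ⟨_, h2 c⟩
  have hg : Continuous g :=
    mkC_cont (L.symm.continuous.comp (continuous_subtype_val.comp e.continuous)) _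
  have hg' : Continuous g' :=
    e.symm.continuous.comp (Continuous.subtype_mk (L.continuous.comp circle_cont) _)
  have hgg : ∀ c, g (g' c) = c := by
    intro c
    apply Circle.ext
    simp [g, g', coe_mkC]
  obtain ⟨r, hr, hrg⟩ := exists_extension hdim S hSc g hg
  let f : X → X := fun x => g' (Circle.exp 1 * r x)
  have hf : Continuous f :=
    continuous_subtype_val.comp (hg'.comp (continuous_const.mul hr))
  have hrf : ∀ x, r (f x) = Circle.exp 1 * r x := by
    intro x
    rw [hrg (g' (Circle.exp 1 * r x)), hgg]
  have hrn : ∀ n x, r (f^[n] x) = Circle.exp 1 ^ n * r x := by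
    intro n
    induction n with
    | zero => intro x; simp
    | succ n ih => intro x; rw [Function.iterate_succ_apply, ih, hrf, pow_succ, mul_assoc]
  obtain ⟨x, -, n, hn, hx⟩ := hB f hf (by
    rintro _ ⟨x, -, rfl⟩
    exact hS (g' _).2)
  have := hrn n x
  rw [hx] at this
  exact exp_one_pow_ne n hn (by simpa using this.symm)

end WL

/-- A locally connected one-dimensional metric continuum with the weak local periodic point
property is a local dendrite. -/
theorem stmt_13 {X : Type*} [MetricSpace X] [CompactSpace X] [ConnectedSpace X] [Nonempty X]
    [LocallyConnectedSpace X]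
    (hdim : CoveringDimLE X 1 ∧ ¬ CoveringDimLE X 0)
    (h : HasWLPPP X) : IsLocalDendrite X := by
  intro y
  obtain ⟨𝓑, hbas, hB⟩ := h
  obtain ⟨B, hBm, hyB, -⟩ := hbas.exists_subset_of_mem_open (Set.mem_univ y) isOpen_univ
  obtain ⟨ε, hε, hb⟩ := Metric.nhds_basis_closedBall.mem_iff.1 ((hbas.isOpen hBm).mem_nhds hyB)
  obtain ⟨N, hN, hNc, hNconn, hNlc, hNb⟩ := WL.exists_nhd y (half_pos hε)
  rw [mul_div_cancel₀ _ (two_ne_zero)] at hNb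
  exact ⟨N, hN, hNc, hNc.isCompact, hNconn, hNlc, fun S hS =>
    WL.no_scc hdim.1 B (hB B hBm) S (hS.trans (hNb.trans hb))⟩
end

section
/- Every local dendrite has the local fixed point property (LFPP). -/
open Set Filter Topology

namespace LD


inductive GoodPath {D E : Type*} [MetricSpace D] [NormedAddCommGroup E] [NormedSpace ℝ E]
    (ι : D → E) (r : ℝ) : ∀ {u v : D}, Path (ι u) (ι v) → Prop
  | base {u v : D} (f : Path (ι u) (ι v)) (W : Set D) (hW : IsPreconnected W) (hu : u ∈ W)
      (hv : v ∈ W) (hWr : ∀ w ∈ W, dist w u ≤ r) (hf : ∀ t, dist (f t) (ι u) ≤ r) : GoodPath ι r f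
  | trans {u v w : D} (f : Path (ι u) (ι v)) (g : Path (ι v) (ι w)) :
      GoodPath ι r f → GoodPath ι r g → GoodPath ι r (f.trans g)

section paths
variable {D E : Type*} [MetricSpace D] [NormedAddCommGroup E] [NormedSpace ℝ E]

lemma GoodPath.near {ι : D → E} {r : ℝ} {u v : D} {f : Path (ι u) (ι v)}
    (h : GoodPath ι r f) : ∀ t, ∃ w, dist (f t) (ι w) ≤ r := by
  induction h with
  | base f W hW hu hv hWr hf => exact fun t => ⟨_, hf t⟩
  | trans f g _ _ ihf ihg =>
    intro t
    rw [Path.trans_apply]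
    split_ifs
    · exact ihf _
    · exact ihg _

lemma exists_path_ball (a b : E) (r : ℝ) (h : dist b a ≤ r) :
    ∃ f : Path a b, ∀ t, dist (f t) a ≤ r := by
  have hr : 0 ≤ r := dist_nonneg.trans h
  have := ((convex_closedBall a r).isPathConnected ⟨a, by simpa using hr⟩).joinedIn
    a (by simpa using hr) b (by simpa using h)
  obtain ⟨f, hf⟩ := this
  exact ⟨f, fun t => by simpa using hf t⟩

lemma exists_chain [LocallyConnectedSpace D] {ι : D → E} (hι : Isometry ι) {r : ℝ} (hr : 0 < r)
    {W : Set D} (hW : IsPreconnected W) {u v : D} (hu : u ∈ W) (hv : v ∈ W) :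
    ∃ g : Path (ι u) (ι v), GoodPath ι r g ∧ ∀ t, ∃ w ∈ W, dist (g t) (ι w) ≤ r := by
  refine hW.induction₂' (fun u v => ∃ g : Path (ι u) (ι v), GoodPath ι r g ∧
    ∀ t, ∃ w ∈ W, dist (g t) (ι w) ≤ r) ?_ ?_ hu hv
  · intro x hx
    obtain ⟨V, ⟨hVo, hxV, hVc⟩, hVs⟩ := (LocallyConnectedSpace.open_connected_basis x).mem_iff.1
      (Metric.ball_mem_nhds x (half_pos hr))
    have hd : ∀ a ∈ V, ∀ b ∈ V, dist a b ≤ r := by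
      intro a ha b hb
      have h1 := hVs ha
      have h2 := hVs hb
      simp only [Metric.mem_ball] at h1 h2
      linarith [dist_triangle_right a b x]
    have key : ∀ a ∈ V, a ∈ W → ∀ b ∈ V, ∃ g : Path (ι a) (ι b), GoodPath ι r g ∧
        ∀ t, ∃ w ∈ W, dist (g t) (ι w) ≤ r := by
      intro a ha haW b hb
      obtain ⟨f, hf⟩ := exists_path_ball (ι a) (ι b) r (by rw [hι.dist_eq]; exact hd b hb a ha)
      exact ⟨f, .base f V hVc.isPreconnected ha hb (fun w hw => hd w hw a ha) hf,
        fun t => ⟨a, haW, hf t⟩⟩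
    filter_upwards [mem_nhdsWithin_of_mem_nhds (hVo.mem_nhds hxV), self_mem_nhdsWithin] with y hy hyW
    exact ⟨key x hxV hx y hy, key y hy hyW x hxV⟩
  · rintro x y z - - - ⟨f, hf, hf'⟩ ⟨g, hg, hg'⟩
    refine ⟨f.trans g, .trans f g hf hg, fun t => ?_⟩
    rw [Path.trans_apply]
    split_ifs
    · exact hf' _
    · exact hg' _

lemma GoodPath.refine_path [LocallyConnectedSpace D] {ι : D → E} (hι : Isometry ι) {r r' : ℝ}
    (hr : 0 < r') (hrr : r' ≤ r) {u v : D} {f : Path (ι u) (ι v)} (h : GoodPath ι r f) :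
    ∃ g : Path (ι u) (ι v), GoodPath ι r' g ∧ ∀ t, dist (f t) (g t) ≤ 3 * r := by
  induction h with
  | @base u v f W hW hu hv hWr hf =>
    obtain ⟨g, hg, hg'⟩ := exists_chain hι hr hW hu hv
    refine ⟨g, hg, fun t => ?_⟩
    obtain ⟨w, hw, hd⟩ := hg' t
    have h1 := hf t
    have h2 := hWr w hw
    rw [← hι.dist_eq] at h2
    have := dist_triangle (f t) (ι u) (g t)
    have := dist_triangle_right (ι u) (g t) (ι w)
    rw [dist_comm] at h2
    linarith
  | trans f g _ _ ihf ihg =>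
    obtain ⟨f', hf', hfd⟩ := ihf
    obtain ⟨g', hg', hgd⟩ := ihg
    refine ⟨f'.trans g', .trans _ _ hf' hg', fun t => ?_⟩
    rw [Path.trans_apply, Path.trans_apply]
    split_ifs
    · exact hfd _
    · exact hgd _

lemma exists_path_of_good [CompactSpace D] [LocallyConnectedSpace D] [CompleteSpace E]
    {ι : D → E} (hι : Isometry ι) {r : ℝ} (hr : 0 < r)
    {u v : D} (f : Path (ι u) (ι v)) (h : GoodPath ι r f) :
    ∃ p : Path u v, ∀ t, dist (f t) (ι (p t)) ≤ 6 * r := by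
  have step : ∀ n : ℕ, ∀ f : {f : Path (ι u) (ι v) // GoodPath ι (r / 2 ^ n) f},
      ∃ g : {f : Path (ι u) (ι v) // GoodPath ι (r / 2 ^ (n+1)) f},
        ∀ t, dist (f.1 t) (g.1 t) ≤ 3 * (r / 2 ^ n) := by
    rintro n ⟨f, hf⟩
    obtain ⟨g, hg, hd⟩ := hf.refine_path hι (r' := r / 2 ^ (n+1)) (by positivity) (by
      gcongr <;> norm_num)
    exact ⟨⟨g, hg⟩, hd⟩
  choose nxt hnxt using step
  let F : ∀ n : ℕ, {f : Path (ι u) (ι v) // GoodPath ι (r / 2 ^ n) f} :=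
    fun n => Nat.rec ⟨f, by simpa using h⟩ nxt n
  have hF : ∀ n t, dist ((F n).1 t) ((F (n+1)).1 t) ≤ 3 * (r / 2 ^ n) := fun n t => hnxt n (F n) t
  let G : ℕ → C(unitInterval, E) := fun n => (F n).1.toContinuousMap
  have hG : ∀ n, dist (G n) (G (n+1)) ≤ (6 * r) / 2 / 2 ^ n := by
    intro n
    rw [ContinuousMap.dist_le (by positivity)]
    intro t
    refine (hF n t).trans (le_of_eq (by ring))
  obtain ⟨g, hg⟩ := cauchySeq_tendsto_of_complete (cauchySeq_of_le_geometric_two hG)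
  have hgd := dist_le_of_le_geometric_two_of_tendsto₀ hG hg
  have hpt : ∀ t, Tendsto (fun n => (F n).1 t) atTop (𝓝 (g t)) := fun t =>
    ((continuous_eval_const t).tendsto g).comp hg
  have hrange : ∀ t, g t ∈ range ι := by
    intro t
    have hc : IsClosed (range ι) := (isCompact_range hι.continuous).isClosed
    rw [← hc.closure_eq, Metric.mem_closure_iff]
    intro ε hε
    have h0 : Tendsto (fun n : ℕ => r / 2 ^ n) atTop (𝓝 0) := by
      have := (tendsto_pow_atTop_nhds_zero_of_lt_one (r := (1/2:ℝ)) (by norm_num) (by norm_num)).const_mul r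
      simpa [div_eq_mul_inv] using this
    obtain ⟨n, h1, h2⟩ := ((Metric.tendsto_nhds.1 (hpt t) (ε/2) (half_pos hε)).and
      (h0.eventually (gt_mem_nhds (half_pos hε)))).exists
    obtain ⟨w, hw⟩ := (F n).2.near t
    refine ⟨ι w, ⟨w, rfl⟩, ?_⟩
    have := dist_triangle_left (g t) (ι w) ((F n).1 t)
    linarith
  choose p hp using hrange
  have hpc : Continuous p := by
    rw [hι.isUniformInducing.isInducing.continuous_iff]
    have : ι ∘ p = g := funext hp
    rw [this]; exact g.continuous
  have e0 : g 0 = ι u := tendsto_nhds_unique (hpt 0) (by simp)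
  have e1 : g 1 = ι v := tendsto_nhds_unique (hpt 1) (by simp)
  refine ⟨⟨⟨p, hpc⟩, hι.injective (by rw [← e0]; exact hp 0), hι.injective (by rw [← e1]; exact hp 1)⟩, ?_⟩
  intro t
  change dist (f t) (ι (p t)) ≤ _
  rw [hp]
  exact (ContinuousMap.dist_apply_le_dist (f := G 0) (g := g) t).trans hgd

theorem locallyPathConnected [CompactSpace D] [LocallyConnectedSpace D] :
    LocallyPathConnectedSpace D := by
  rw [locallyPathConnectedSpace_iff_pathComponentIn_mem_nhds]
  intro x U hU hx
  obtain ⟨ε, hε, hb⟩ := Metric.isOpen_iff.1 hU x hx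
  obtain ⟨V, ⟨hVo, hxV, hVc⟩, hVs⟩ := (LocallyConnectedSpace.open_connected_basis x).mem_iff.1
      (Metric.ball_mem_nhds x (show 0 < ε / 8 by positivity))
  filter_upwards [hVo.mem_nhds hxV] with y hy
  have hι := kuratowskiEmbedding.isometry D
  have hd : ∀ w ∈ V, dist w x ≤ ε / 8 := fun w hw => (Metric.mem_ball.1 (hVs hw)).le
  obtain ⟨f, hf⟩ := exists_path_ball (kuratowskiEmbedding D x) (kuratowskiEmbedding D y) (ε/8)
    (by rw [hι.dist_eq]; exact hd y hy)
  obtain ⟨p, hp⟩ := exists_path_of_good hι (show 0 < ε / 8 by positivity) f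
    (.base f V hVc.isPreconnected hxV hy hd hf)
  refine ⟨p, fun t => hb ?_⟩
  rw [Metric.mem_ball, ← hι.dist_eq]
  have := hp t
  have := hf t
  have := dist_triangle_left (kuratowskiEmbedding D (p t)) (kuratowskiEmbedding D x) (f t)
  linarith

end paths

section arcs
variable {D : Type*} [MetricSpace D]

/-- a path with interval fibres can be reparametrised to an arc -/
lemma arc_of_monotone [CompactSpace D] (r : ℝ → D) (hr : Continuous r) (h01 : r 0 ≠ r 1)
    (hm : ∀ s ∈ Icc (0:ℝ) 1, ∀ u ∈ Icc (0:ℝ) 1, ∀ t ∈ Icc (0:ℝ) 1, s ≤ u → u ≤ t →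
      r s = r t → r u = r s) :
    ∃ γ : ℝ → D, Continuous γ ∧ InjOn γ (Icc 0 1) ∧ γ 0 = r 0 ∧ γ 1 = r 1 ∧
      γ '' Icc 0 1 ⊆ r '' Icc 0 1 := by
  have : Nonempty D := ⟨r 0⟩
  let x : ℕ → D := TopologicalSpace.denseSeq D
  have hx : DenseRange x := TopologicalSpace.denseRange_denseSeq D
  obtain ⟨C, hC⟩ : ∃ C, ∀ a b : D, dist a b ≤ C :=
    let ⟨C, hC⟩ := Metric.isBounded_iff.1 (isCompact_univ (X := D)).isBounded
    ⟨C, fun a b => hC (mem_univ a) (mem_univ b)⟩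
  have hC0 : 0 ≤ C := dist_nonneg.trans (hC (r 0) (r 0))
  let ψ : ℕ → ℝ → ℝ := fun n t => sInf ((fun u => dist (x n) (r (min u t))) '' Icc (0:ℝ) 1)
  have hψc : ∀ n, Continuous (ψ n) := by
    intro n
    refine isCompact_Icc.continuous_sInf (f := fun t u => dist (x n) (r (min u t))) ?_
    exact continuous_const.dist (hr.comp (continuous_snd.min continuous_fst))
  have hbdd : ∀ n t, BddBelow ((fun u => dist (x n) (r (min u t))) '' Icc (0:ℝ) 1) := by
    intro n t
    exact ⟨0, by rintro _ ⟨u, -, rfl⟩; exact dist_nonneg⟩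
  have hnon : ∀ n t, ((fun u => dist (x n) (r (min u t))) '' Icc (0:ℝ) 1).Nonempty :=
    fun n t => ⟨_, 0, by simp, rfl⟩
  have hψ0 : ∀ n t, 0 ≤ ψ n t := by
    intro n t
    refine le_csInf (hnon n t) ?_
    rintro _ ⟨u, -, rfl⟩; exact dist_nonneg
  have hψC : ∀ n t, ψ n t ≤ C := by
    intro n t
    exact (csInf_le (hbdd n t) ⟨0, by simp, rfl⟩).trans (hC _ _)
  have hanti : ∀ n, ∀ s ∈ Icc (0:ℝ) 1, ∀ t, s ≤ t → ψ n t ≤ ψ n s := by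
    intro n s hs t hst
    refine le_csInf (hnon n s) ?_
    rintro _ ⟨u, hu, rfl⟩
    refine csInf_le (hbdd n t) ⟨min u s, ⟨le_min hu.1 hs.1, (min_le_left _ _).trans hu.2⟩, ?_⟩
    simp only
    rw [min_eq_left ((min_le_right u s).trans hst)]
  have heq : ∀ n, ∀ s ∈ Icc (0:ℝ) 1, ∀ t ∈ Icc (0:ℝ) 1, s ≤ t → r s = r t → ψ n s = ψ n t := by
    intro n s hs t ht hst hrst
    refine le_antisymm ?_ (hanti n s hs t hst)
    refine le_csInf (hnon n t) ?_
    rintro _ ⟨u, hu, rfl⟩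
    refine csInf_le (hbdd n s) ⟨u, hu, ?_⟩
    simp only
    rcases le_total u s with h | h
    · rw [min_eq_left h, min_eq_left (h.trans hst)]
    · rw [min_eq_right h, hm s hs (min u t) ⟨le_min hu.1 ht.1, (min_le_left _ _).trans hu.2⟩ t ht
        (le_min h hst) (min_le_right _ _) hrst]
  have hlt : ∀ s ∈ Icc (0:ℝ) 1, ∀ t ∈ Icc (0:ℝ) 1, s ≤ t → r s ≠ r t → ∃ n, ψ n t < ψ n s := by
    intro s hs t ht hst hne
    let J := (fun u => r (min u s)) '' Icc (0:ℝ) 1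
    have hJ : IsClosed J :=
      (isCompact_Icc.image (hr.comp (continuous_id.min continuous_const))).isClosed
    have htJ : r t ∉ J := by
      rintro ⟨u, hu, hut⟩
      simp only at hut
      have := hm (min u s) ⟨le_min hu.1 hs.1, (min_le_left _ _).trans hu.2⟩ s hs t ht
        (min_le_right _ _) hst hut
      rw [hut] at this
      exact hne this
    obtain ⟨ε, hε, hb⟩ := Metric.isOpen_iff.1 hJ.isOpen_compl (r t) htJ
    obtain ⟨n, hn⟩ := hx.exists_dist_lt (r t) (half_pos hε)
    refine ⟨n, ?_⟩
    have h1 : ψ n t ≤ dist (x n) (r t) := csInf_le (hbdd n t) ⟨t, ht, by simp⟩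
    have h2 : ε / 2 ≤ ψ n s := by
      refine le_csInf (hnon n s) ?_
      rintro _ ⟨u, hu, rfl⟩
      by_contra! hlt
      have : r (min u s) ∈ Metric.ball (r t) ε := by
        rw [Metric.mem_ball, dist_comm]
        linarith [dist_triangle (r t) (x n) (r (min u s))]
      exact hb this ⟨u, hu, rfl⟩
    rw [dist_comm] at h1
    linarith
  let φ : ℝ → ℝ := fun t => ∑' n, (1/2:ℝ)^n * (-ψ n t)
  have hsumC : Summable (fun n : ℕ => (1/2:ℝ)^n * C) := summable_geometric_two.mul_right C
  have hbd : ∀ n t, ‖(1/2:ℝ)^n * (-ψ n t)‖ ≤ (1/2:ℝ)^n * C := by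
    intro n t
    rw [norm_mul, norm_neg, Real.norm_of_nonneg (hψ0 n t), Real.norm_of_nonneg (by positivity)]
    exact mul_le_mul_of_nonneg_left (hψC n t) (by positivity)
  have hsum : ∀ t, Summable (fun n : ℕ => (1/2:ℝ)^n * (-ψ n t)) :=
    fun t => Summable.of_norm_bounded hsumC (fun n => hbd n t)
  have hφc : Continuous φ :=
    continuous_tsum (fun n => continuous_const.mul (hψc n).neg) hsumC hbd
  have hφlt : ∀ s ∈ Icc (0:ℝ) 1, ∀ t ∈ Icc (0:ℝ) 1, s ≤ t → r s ≠ r t → φ s < φ t := by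
    intro s hs t ht hst hne
    obtain ⟨n, hn⟩ := hlt s hs t ht hst hne
    refine Summable.tsum_lt_tsum (i := n) (fun k => ?_) ?_ (hsum s) (hsum t)
    · exact mul_le_mul_of_nonneg_left (neg_le_neg (hanti k s hs t hst)) (by positivity)
    · exact mul_lt_mul_of_pos_left (neg_lt_neg hn) (by positivity)
  have hφeq : ∀ s ∈ Icc (0:ℝ) 1, ∀ t ∈ Icc (0:ℝ) 1, s ≤ t → r s = r t → φ s = φ t := by
    intro s hs t ht hst h
    exact tsum_congr fun n => by rw [heq n s hs t ht hst h]
  have hiff : ∀ s ∈ Icc (0:ℝ) 1, ∀ t ∈ Icc (0:ℝ) 1, (φ s = φ t ↔ r s = r t) := by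
    intro s hs t ht
    constructor
    · intro h
      by_contra hne
      rcases le_total s t with hst | hst
      · exact (hφlt s hs t ht hst hne).ne h
      · exact (hφlt t ht s hs hst (Ne.symm hne)).ne h.symm
    · intro h
      rcases le_total s t with hst | hst
      · exact hφeq s hs t ht hst h
      · exact (hφeq t ht s hs hst h.symm).symm
  have i0 : (0:ℝ) ∈ Icc (0:ℝ) 1 := by simp
  have i1 : (1:ℝ) ∈ Icc (0:ℝ) 1 := by simp
  have hL : φ 0 < φ 1 := hφlt 0 i0 1 i1 zero_le_one h01
  have hsurj : ∀ y : Icc (0:ℝ) 1, ∃ t ∈ Icc (0:ℝ) 1, φ t = φ 0 + y * (φ 1 - φ 0) := by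
    rintro ⟨y, hy⟩
    have := intermediate_value_Icc (zero_le_one (α := ℝ)) hφc.continuousOn
    refine this ⟨?_, ?_⟩
    · nlinarith [hy.1]
    · nlinarith [hy.2]
  choose τ hτI hτ using hsurj
  let g : Icc (0:ℝ) 1 → D := fun y => r (τ y)
  have hg : Continuous g := by
    rw [continuous_iff_isClosed]
    intro Z hZ
    have hcomp : IsCompact (Icc (0:ℝ) 1 ∩ r ⁻¹' Z) := isCompact_Icc.inter_right (hZ.preimage hr)
    have : g ⁻¹' Z = (fun y : Icc (0:ℝ) 1 => φ 0 + y * (φ 1 - φ 0)) ⁻¹' (φ '' (Icc (0:ℝ) 1 ∩ r ⁻¹' Z)) := by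
      ext y
      constructor
      · intro hy
        exact ⟨τ y, ⟨hτI y, hy⟩, hτ y⟩
      · rintro ⟨t, ⟨htI, htZ⟩, ht⟩
        have : r (τ y) = r t := (hiff _ (hτI y) _ htI).1 (by rw [hτ y]; exact ht.symm)
        change r (τ y) ∈ Z
        rw [this]; exact htZ
    rw [this]
    exact (hcomp.image hφc).isClosed.preimage (by fun_prop)
  have hgi : Function.Injective g := by
    intro y y' h
    have := (hiff _ (hτI y) _ (hτI y')).2 h
    rw [hτ, hτ] at this
    have h2 : (φ 1 - φ 0) ≠ 0 := by linarith
    exact Subtype.ext (mul_right_cancel₀ h2 (by linarith))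
  refine ⟨IccExtend zero_le_one g, hg.Icc_extend', ?_, ?_, ?_, ?_⟩
  · intro a ha b hb h
    rw [IccExtend_of_mem _ _ ha, IccExtend_of_mem _ _ hb] at h
    exact congrArg Subtype.val (hgi h)
  · rw [IccExtend_of_mem _ _ i0]
    exact (hiff _ (hτI _) _ i0).1 (by rw [hτ]; simp)
  · rw [IccExtend_of_mem _ _ i1]
    exact (hiff _ (hτI _) _ i1).1 (by rw [hτ]; simp)
  · rintro _ ⟨a, ha, rfl⟩
    rw [IccExtend_of_mem _ _ ha]
    exact ⟨_, hτI _, rfl⟩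

end arcs

section arcs
variable {D : Type*} [MetricSpace D]

/-- closed subsets of `[0,1]` containing the endpoints all of whose gaps are collapsed by `p` -/
def GapFam (p : ℝ → D) : Set (Set ℝ) :=
  {A | IsClosed A ∧ A ⊆ Icc 0 1 ∧ (0:ℝ) ∈ A ∧ (1:ℝ) ∈ A ∧
    ∀ s ∈ A, ∀ t ∈ A, s < t → Ioo s t ∩ A = ∅ → p s = p t}

lemma gapFam_chain {p : ℝ → D} (hp : Continuous p) (c : Set (Set ℝ)) (hcA : c ⊆ GapFam p)
    (hc : IsChain (· ⊆ ·) c) (hne : c.Nonempty) : ⋂₀ c ∈ GapFam p := by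
  obtain ⟨A0, hA0⟩ := hne
  refine ⟨isClosed_sInter fun A hA => (hcA hA).1, (sInter_subset_of_mem hA0).trans (hcA hA0).2.1,
    fun A hA => (hcA hA).2.2.1, fun A hA => (hcA hA).2.2.2.1, ?_⟩
  intro s hs t ht hst hgap
  by_contra hpne
  have hε : 0 < dist (p s) (p t) / 2 := half_pos (dist_pos.2 hpne)
  obtain ⟨η1, hη1, h1⟩ := Metric.continuous_iff.1 hp s _ hε
  obtain ⟨η2, hη2, h2⟩ := Metric.continuous_iff.1 hp t _ hε
  let η := min (min η1 η2) ((t - s) / 2) / 2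
  have hη : 0 < η := by
    have : 0 < (t - s) / 2 := by linarith
    positivity
  have e1 : η < η1 := by
    have : min (min η1 η2) ((t - s) / 2) ≤ η1 := (min_le_left _ _).trans (min_le_left _ _)
    change _ / 2 < _
    linarith
  have e2 : η < η2 := by
    have : min (min η1 η2) ((t - s) / 2) ≤ η2 := (min_le_left _ _).trans (min_le_right _ _)
    change _ / 2 < _
    linarith
  have e3 : η < (t - s) / 2 := by
    have : min (min η1 η2) ((t - s) / 2) ≤ (t - s) / 2 := (min_le_right _ _)
    change _ / 2 < _
    linarith
  obtain ⟨A, hA, hAe⟩ : ∃ A ∈ c, A ∩ Icc (s + η) (t - η) = ∅ := by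
    by_contra! hcon
    have : Nonempty c := ⟨⟨A0, hA0⟩⟩
    have hn := IsCompact.nonempty_iInter_of_directed_nonempty_isCompact_isClosed
      (fun A : c => (A : Set ℝ) ∩ Icc (s + η) (t - η)) ?_ ?_ ?_ ?_
    · obtain ⟨y, hy⟩ := hn
      rw [mem_iInter] at hy
      have hy1 : y ∈ Ioo s t ∩ ⋂₀ c := by
        have := (hy ⟨A0, hA0⟩).2
        refine ⟨⟨by linarith [this.1], by linarith [this.2]⟩, fun A hA => (hy ⟨A, hA⟩).1⟩
      rw [hgap] at hy1
      exact hy1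
    · intro A B
      rcases hc.total A.2 B.2 with h | h
      · exact ⟨A, subset_rfl, inter_subset_inter_left _ h⟩
      · exact ⟨B, inter_subset_inter_left _ h, subset_rfl⟩
    · exact fun A => hcon A A.2
    · exact fun A => isCompact_Icc.inter_left (hcA A.2).1
    · exact fun A => (hcA A.2).1.inter isClosed_Icc
  obtain ⟨hAc, -, -, -, hAg⟩ := hcA hA
  obtain ⟨s', ⟨hs'A, hs'I⟩, hs'⟩ := (isCompact_Icc.inter_left hAc : IsCompact (A ∩ Icc s (s + η))).exists_isGreatest
    ⟨s, hs A hA, by constructor <;> linarith⟩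
  obtain ⟨t', ⟨ht'A, ht'I⟩, ht'⟩ := (isCompact_Icc.inter_left hAc : IsCompact (A ∩ Icc (t - η) t)).exists_isLeast
    ⟨t, ht A hA, by constructor <;> linarith⟩
  have hst' : s' < t' := by linarith [hs'I.2, ht'I.1]
  have hpe := hAg s' hs'A t' ht'A hst' (by
    ext w
    simp only [mem_inter_iff, mem_empty_iff_false, iff_false]
    rintro ⟨hw, hwA⟩
    by_cases hw1 : w ≤ s + η
    · exact absurd (hs' ⟨hwA, by linarith [hw.1, hs'I.1], hw1⟩) (not_le.2 hw.1)
    by_cases hw2 : t - η ≤ w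
    · exact absurd (ht' ⟨hwA, hw2, by linarith [hw.2, ht'I.2]⟩) (not_le.2 hw.2)
    have : w ∈ A ∩ Icc (s + η) (t - η) := ⟨hwA, by linarith, by linarith⟩
    rw [hAe] at this
    exact this)
  have d1 := h1 s' (by rw [Real.dist_eq, abs_lt]; constructor <;> linarith [hs'I.1, hs'I.2])
  have d2 := h2 t' (by rw [Real.dist_eq, abs_lt]; constructor <;> linarith [ht'I.1, ht'I.2])
  rw [hpe] at d1
  have := dist_triangle_left (p s) (p t) (p t')
  linarith

lemma exists_monotone_path {p : ℝ → D} (hp : Continuous p) :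
    ∃ r : ℝ → D, Continuous r ∧ r 0 = p 0 ∧ r 1 = p 1 ∧ r '' Icc 0 1 ⊆ p '' Icc 0 1 ∧
    (∀ s ∈ Icc (0:ℝ) 1, ∀ u ∈ Icc (0:ℝ) 1, ∀ t ∈ Icc (0:ℝ) 1, s ≤ u → u ≤ t →
      r s = r t → r u = r s) := by
  have hI : Icc (0:ℝ) 1 ∈ GapFam p := by
    refine ⟨isClosed_Icc, subset_rfl, by simp, by simp, ?_⟩
    intro s hs t ht hst h
    exfalso
    have : (s + t) / 2 ∈ Ioo s t ∩ Icc (0:ℝ) 1 :=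
      ⟨⟨by linarith, by linarith⟩, by linarith [hs.1, ht.1], by linarith [hs.2, ht.2]⟩
    rw [h] at this
    exact this
  obtain ⟨A, -, hAmin⟩ := zorn_superset_nonempty (GapFam p)
    (fun c hcA hc hne => ⟨⋂₀ c, gapFam_chain hp c hcA hc hne, fun s hs => sInter_subset_of_mem hs⟩)
    _ hI
  obtain ⟨hAc, hAI, hA0, hA1, hAg⟩ := hAmin.prop
  have hgap : ∀ s ∈ A, ∀ t ∈ A, s < t → p s = p t → Ioo s t ∩ A = ∅ := by
    intro s hs t ht hst hpst
    have hmem : A \ Ioo s t ∈ GapFam p := by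
      refine ⟨hAc.inter isOpen_Ioo.isClosed_compl, sdiff_subset.trans hAI,
        ⟨hA0, fun h => absurd (hAI hs).1 (not_le.2 h.1)⟩,
        ⟨hA1, fun h => absurd (hAI ht).2 (not_le.2 h.2)⟩, ?_⟩
      rintro s' ⟨hs'A, hs'⟩ t' ⟨ht'A, ht'⟩ hst' hg
      by_cases he : Ioo s' t' ∩ A = ∅
      · exact hAg s' hs'A t' ht'A hst' he
      obtain ⟨w, hw, hwA⟩ := nonempty_iff_ne_empty.2 he
      have hwst : w ∈ Ioo s t := by
        by_contra hn
        have : w ∈ Ioo s' t' ∩ (A \ Ioo s t) := ⟨hw, hwA, hn⟩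
        rw [hg] at this; exact this
      have hs1 : s ∉ Ioo s' t' := by
        intro h
        have : s ∈ Ioo s' t' ∩ (A \ Ioo s t) := ⟨h, hs, fun h => lt_irrefl _ h.1⟩
        rw [hg] at this; exact this
      have ht1 : t ∉ Ioo s' t' := by
        intro h
        have : t ∈ Ioo s' t' ∩ (A \ Ioo s t) := ⟨h, ht, fun h => lt_irrefl _ h.2⟩
        rw [hg] at this; exact this
      simp only [mem_Ioo, not_and, not_lt] at *
      have h1 : s ≤ s' := by
        by_contra! h
        linarith [hs1 h]
      have h2 : t' ≤ t := by
        by_contra! h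
        linarith [ht1 (by linarith)]
      have h3 : s' = s := by
        rcases h1.eq_or_lt with h | h
        · exact h.symm
        · linarith [hs' h]
      have h4 : t' = t := by
        by_contra hne
        linarith [ht' (by linarith), lt_of_le_of_ne h2 hne]
      rw [h3, h4, hpst]
    have hsub := hAmin.le_of_le hmem sdiff_subset
    ext w
    simp only [mem_inter_iff, mem_empty_iff_false, iff_false]
    rintro ⟨hw, hwA⟩
    exact (hsub hwA).2 hw
  have hσ : ∀ t : Icc (0:ℝ) 1, ∃ a ∈ A, a ≤ t ∧ ∀ b ∈ A, b ≤ t → b ≤ a := by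
    rintro ⟨t, ht⟩
    obtain ⟨a, ⟨haA, haI⟩, ha⟩ := (isCompact_Icc.inter_left hAc : IsCompact (A ∩ Icc 0 t)).exists_isGreatest
      ⟨0, hA0, le_rfl, ht.1⟩
    exact ⟨a, haA, haI.2, fun b hb hbt => ha ⟨hb, (hAI hb).1, hbt⟩⟩
  choose σ hσA hσle hσmax using hσ
  have hmono : ∀ s t, s ≤ t → σ s ≤ σ t := fun s t hst =>
    hσmax t _ (hσA s) ((hσle s).trans hst)
  let r : Icc (0:ℝ) 1 → D := fun t => p (σ t)
  have hfix : ∀ t : Icc (0:ℝ) 1, (t : ℝ) ∈ A → σ t = t := fun t ht =>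
    le_antisymm (hσle t) (hσmax t _ ht le_rfl)
  have key : ∀ s t : Icc (0:ℝ) 1, s ≤ t → r s = r t ∨
      ∃ a ∈ Icc (s:ℝ) t, ∃ b ∈ Icc (s:ℝ) t, r s = p a ∧ r t = p b := by
    intro s t hst
    by_cases h : σ t ≤ s
    · left
      have : σ s = σ t := le_antisymm (hmono s t hst) (hσmax s _ (hσA t) h)
      change p _ = p _
      rw [this]
    · right
      push Not at h
      obtain ⟨a, ⟨haA, haI⟩, ha⟩ := (isCompact_Icc.inter_left hAc : IsCompact (A ∩ Icc s (σ t))).exists_isLeast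
        ⟨σ t, hσA t, h.le, le_rfl⟩
      refine ⟨a, ⟨haI.1, haI.2.trans (hσle t)⟩, σ t, ⟨h.le, hσle t⟩, ?_, rfl⟩
      change p (σ s) = p a
      rcases ((hσle s).trans haI.1).eq_or_lt with he | hlt
      · rw [he]
      · refine hAg _ (hσA s) _ haA hlt ?_
        ext w
        simp only [mem_inter_iff, mem_empty_iff_false, iff_false]
        rintro ⟨hw, hwA⟩
        rcases le_total w s with h' | h'
        · exact absurd (hσmax s w hwA h') (not_le.2 hw.1)
        · exact absurd (ha ⟨hwA, h', by linarith [hw.2, haI.2]⟩) (not_le.2 hw.2)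
  have hrc : Continuous r := by
    have huc : UniformContinuousOn p (Icc 0 1) :=
      isCompact_Icc.uniformContinuousOn_of_continuous hp.continuousOn
    rw [Metric.uniformContinuousOn_iff] at huc
    have hle : ∀ ε > 0, ∃ δ > 0, ∀ s t : Icc (0:ℝ) 1, s ≤ t → dist s t < δ → dist (r s) (r t) < ε := by
      intro ε hε
      obtain ⟨δ, hδ, h⟩ := huc ε hε
      refine ⟨δ, hδ, fun s t hst hd => ?_⟩
      rcases key s t hst with h' | ⟨a, ha, b, hb, h1, h2⟩
      · rw [h', dist_self]; exact hε
      · rw [h1, h2]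
        refine h a ⟨s.2.1.trans ha.1, ha.2.trans t.2.2⟩ b ⟨s.2.1.trans hb.1, hb.2.trans t.2.2⟩ ?_
        rw [Subtype.dist_eq, dist_comm, Real.dist_eq, abs_lt] at hd
        rw [Real.dist_eq, abs_lt]
        constructor <;> linarith [ha.1, ha.2, hb.1, hb.2, hd.2]
    rw [Metric.continuous_iff]
    intro t ε hε
    obtain ⟨δ, hδ, h⟩ := hle ε hε
    refine ⟨δ, hδ, fun s hs => ?_⟩
    rcases le_total s t with hst | hst
    · exact h s t hst hs
    · rw [dist_comm]; exact h t s hst (by rwa [dist_comm])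
  have hrm : ∀ s u t, s ≤ u → u ≤ t → r s = r t → r u = r s := by
    intro s u t hsu hut he
    rcases (hmono s t (hsu.trans hut)).eq_or_lt with h | h
    · have : σ u = σ s := le_antisymm (h ▸ hmono u t hut) (hmono s u hsu)
      change p _ = p _
      rw [this]
    · have hg := hgap _ (hσA s) _ (hσA t) h he
      have h1 := hmono s u hsu
      have h2 := hmono u t hut
      rcases h1.eq_or_lt with h1 | h1
      · change p _ = p _
        rw [h1]
      rcases h2.eq_or_lt with h2 | h2
      · rw [he]
        change p _ = p _
        rw [h2]
      have : σ u ∈ Ioo (σ s) (σ t) ∩ A := ⟨⟨h1, h2⟩, hσA u⟩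
      rw [hg] at this
      exact this.elim
  have i0 : (0:ℝ) ∈ Icc (0:ℝ) 1 := by simp
  have i1 : (1:ℝ) ∈ Icc (0:ℝ) 1 := by simp
  refine ⟨IccExtend zero_le_one r, hrc.Icc_extend', ?_, ?_, ?_, ?_⟩
  · rw [IccExtend_of_mem _ _ i0]
    change p _ = p _
    rw [hfix ⟨0, i0⟩ hA0]
  · rw [IccExtend_of_mem _ _ i1]
    change p _ = p _
    rw [hfix ⟨1, i1⟩ hA1]
  · rintro _ ⟨a, ha, rfl⟩
    rw [IccExtend_of_mem _ _ ha]
    exact ⟨_, hAI (hσA _), rfl⟩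
  · intro s hs u hu t ht hsu hut h
    rw [IccExtend_of_mem _ _ hs, IccExtend_of_mem _ _ ht] at h
    rw [IccExtend_of_mem _ _ hs, IccExtend_of_mem _ _ hu]
    exact hrm _ _ _ hsu hut h

end arcs


lemma circle_homeo : Nonempty (Circle ≃ₜ ↥(Metric.sphere (0 : EuclideanSpace ℝ (Fin 2)) 1)) := by
  let e : ℂ ≃ₗᵢ[ℝ] EuclideanSpace ℝ (Fin 2) := Complex.orthonormalBasisOneI.repr
  refine ⟨e.toHomeomorph.subtype (p := (· ∈ Submonoid.unitSphere ℂ)) ?_⟩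
  intro x
  simp [Submonoid.unitSphere]

/-- a loop injective on `[0,1)` traces out a simple closed curve -/
lemma scc_of_loop {D : Type*} [MetricSpace D] (f : ℝ → D) (hf : Continuous f)
    (h01 : f 0 = f 1) (hinj : InjOn f (Ico 0 1)) : ∃ S : Set D, IsSimpleClosedCurve S := by
  have : Fact ((0:ℝ) < 1) := ⟨one_pos⟩
  let g : AddCircle (1:ℝ) → D := AddCircle.liftIco 1 0 f
  have hg : Continuous g := AddCircle.liftIco_zero_continuous h01 hf.continuousOn
  have hgi : Function.Injective g := by
    intro a b hab
    apply (AddCircle.equivIco 1 0).injective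
    apply Subtype.ext
    have ha := (AddCircle.equivIco (1:ℝ) 0 a).2
    have hb := (AddCircle.equivIco (1:ℝ) 0 b).2
    exact hinj ⟨ha.1, ha.2.trans_eq (zero_add 1)⟩ ⟨hb.1, hb.2.trans_eq (zero_add 1)⟩ hab
  have hemb : IsEmbedding g := (hg.isClosedEmbedding hgi).isEmbedding
  obtain ⟨e⟩ := circle_homeo
  exact ⟨range g, ⟨hemb.toHomeomorph.symm.trans ((AddCircle.homeomorphCircle one_ne_zero).trans e)⟩⟩

/-- two arcs with the same endpoints and without common image produce a simple closed curve -/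
lemma scc_of_arcs {D : Type*} [MetricSpace D] (γ δ : ℝ → D) (hγ : Continuous γ) (hδ : Continuous δ)
    (hγi : InjOn γ (Icc 0 1)) (hδi : InjOn δ (Icc 0 1)) (h0 : γ 0 = δ 0) (h1 : γ 1 = δ 1)
    {t : ℝ} (ht : t ∈ Icc (0:ℝ) 1) (htn : γ t ∉ δ '' Icc 0 1) :
    ∃ S : Set D, IsSimpleClosedCurve S := by
  have hJ : IsClosed (δ '' Icc 0 1) := (isCompact_Icc.image hδ).isClosed
  have hP : IsClosed (γ ⁻¹' (δ '' Icc 0 1)) := hJ.preimage hγ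
  obtain ⟨a, ⟨haP, haI⟩, ha⟩ := (isCompact_Icc.inter_left hP :
      IsCompact (γ ⁻¹' (δ '' Icc 0 1) ∩ Icc 0 t)).exists_isGreatest
    ⟨0, ⟨0, by simp, h0.symm⟩, le_rfl, ht.1⟩
  obtain ⟨b, ⟨hbP, hbI⟩, hb⟩ := (isCompact_Icc.inter_left hP :
      IsCompact (γ ⁻¹' (δ '' Icc 0 1) ∩ Icc t 1)).exists_isLeast
    ⟨1, ⟨1, by simp, h1.symm⟩, ht.2, le_rfl⟩
  have hat : a < t := lt_of_le_of_ne haI.2 (by rintro rfl; exact htn haP)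
  have htb : t < b := lt_of_le_of_ne hbI.1 (by rintro rfl; exact htn hbP)
  have hopen : ∀ w, a < w → w < b → γ w ∉ δ '' Icc 0 1 := by
    intro w haw hwb hw
    rcases le_total w t with h | h
    · exact absurd (ha ⟨hw, haI.1.trans haw.le, h⟩) (not_le.2 haw)
    · exact absurd (hb ⟨hw, h, hwb.le.trans hbI.2⟩) (not_le.2 hwb)
  obtain ⟨c, hc, hca⟩ := haP
  obtain ⟨d, hd, hdb⟩ := hbP
  have haI' : a ∈ Icc (0:ℝ) 1 := ⟨haI.1, haI.2.trans ht.2⟩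
  have hbI' : b ∈ Icc (0:ℝ) 1 := ⟨ht.1.trans hbI.1, hbI.2⟩
  have hcd : d ≠ c := by
    rintro rfl
    have := hγi haI' hbI' (hca.symm.trans hdb)
    linarith
  let f : ℝ → D := fun s => if s ≤ 1/2 then γ (a + 2 * s * (b - a)) else δ (d + (2 * s - 1) * (c - d))
  have hf : Continuous f := by
    refine Continuous.if_le (by fun_prop) (by fun_prop) continuous_id continuous_const ?_
    intro s hs
    rw [hs]
    have e1 : a + 2 * (1/2) * (b - a) = b := by ring
    have e2 : d + (2 * (1/2) - 1) * (c - d) = d := by ring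
    rw [e1, e2, hdb]
  have hγm : ∀ s, 0 ≤ s → s ≤ 1/2 → a + 2 * s * (b - a) ∈ Icc a b := by
    intro s h0 h1
    constructor <;> nlinarith
  have hδm : ∀ s, 1/2 ≤ s → s ≤ 1 → d + (2 * s - 1) * (c - d) ∈ Icc (0:ℝ) 1 := by
    intro s h0 h1
    obtain ⟨c0, c1⟩ := hc
    obtain ⟨d0, d1⟩ := hd
    constructor <;> nlinarith
  have hsub : Icc a b ⊆ Icc (0:ℝ) 1 := Icc_subset_Icc haI'.1 hbI'.2
  have mix : ∀ s, 0 ≤ s → s ≤ 1/2 → ∀ u, 1/2 < u → u < 1 →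
      γ (a + 2 * s * (b - a)) ≠ δ (d + (2 * u - 1) * (c - d)) := by
    intro s hs0 hs1 u hu0 hu1 he
    have hm := hγm s hs0 hs1
    have hmδ := hδm u hu0.le hu1.le
    rcases hm.1.eq_or_lt with h | h
    · rw [← h, ← hca] at he
      have := hδi hc hmδ he
      have h2 : (c - d) * (2 - 2 * u) = 0 := by linarith
      rcases mul_eq_zero.1 h2 with h3 | h3
      · exact hcd (by linarith)
      · linarith
    rcases hm.2.eq_or_lt with h' | h'
    · rw [h', ← hdb] at he
      have := hδi hd hmδ he
      have h2 : (c - d) * (2 * u - 1) = 0 := by linarith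
      rcases mul_eq_zero.1 h2 with h3 | h3
      · exact hcd (by linarith)
      · linarith
    exact hopen _ h h' ⟨_, hmδ, he.symm⟩
  refine scc_of_loop f hf ?_ ?_
  · simp only [f]
    rw [if_pos (by norm_num), if_neg (by norm_num)]
    have e1 : a + 2 * 0 * (b - a) = a := by ring
    have e2 : d + (2 * 1 - 1) * (c - d) = c := by ring
    rw [e1, e2, hca]
  · intro s hs u hu he
    simp only [f] at he
    split_ifs at he with h1 h2 h2
    · have := hγi (hsub (hγm s hs.1 h1)) (hsub (hγm u hu.1 h2)) he
      have h3 : (s - u) * (2 * (b - a)) = 0 := by linarith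
      rcases mul_eq_zero.1 h3 with h3 | h3 <;> linarith
    · exact (mix s hs.1 h1 u (not_le.1 h2) hu.2 he).elim
    · exact (mix u hu.1 h2 s (not_le.1 h1) hs.2 he.symm).elim
    · have := hδi (hδm s (not_le.1 h1).le hs.2.le) (hδm u (not_le.1 h2).le hu.2.le) he
      have h3 : (s - u) * (2 * (c - d)) = 0 := by linarith
      rcases mul_eq_zero.1 h3 with h3 | h3
      · linarith
      · exact (hcd (by linarith)).elim


/-- points lying in every connected set containing `a` and `b` -/
def Btw {D : Type*} [TopologicalSpace D] (a b : D) : Set D :=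
  {z | ∀ C : Set D, IsPreconnected C → a ∈ C → b ∈ C → z ∈ C}

section btw
variable {D : Type*} [MetricSpace D]

lemma Btw.right (a b : D) : b ∈ Btw a b := fun _ _ _ h => h
lemma Btw.left (a b : D) : a ∈ Btw a b := fun _ _ h _ => h

lemma Btw.union {a b c z : D} (h : z ∈ Btw a c) : z ∈ Btw a b ∨ z ∈ Btw b c := by
  by_contra! hn
  obtain ⟨h1, h2⟩ := hn
  simp only [Btw, mem_ofPred_eq, not_forall] at h1 h2
  obtain ⟨C, hC, haC, hbC, hz⟩ := h1
  obtain ⟨C', hC', haC', hbC', hz'⟩ := h2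
  rcases h (C ∪ C') (hC.union b hbC haC' hC') (Or.inl haC) (Or.inr hbC') with h | h
  exacts [hz h, hz' h]

lemma Btw.trans {p x y z : D} (h : x ∈ Btw p y) (h' : y ∈ Btw p z) : x ∈ Btw p z :=
  fun C hC hp hz => h C hC hp (h' C hC hp hz)

lemma Btw.symm {x a b : D} (h : x ∈ Btw a b) : x ∈ Btw b a :=
  fun C hC hp hz => h C hC hz hp

lemma Btw.small [LocallyConnectedSpace D] (w : D) {ε : ℝ} (hε : 0 < ε) :
    ∀ᶠ y in 𝓝 w, ∀ z ∈ Btw w y, dist z w < ε := by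
  obtain ⟨V, ⟨hVo, hxV, hVc⟩, hVs⟩ := (LocallyConnectedSpace.open_connected_basis w).mem_iff.1
      (Metric.ball_mem_nhds w hε)
  filter_upwards [hVo.mem_nhds hxV] with y hy z hz
  exact hVs (hz V hVc.isPreconnected hxV hy)

lemma Btw.antisymm [ConnectedSpace D] [LocallyConnectedSpace D] {p x y : D}
    (h : x ∈ Btw p y) (h' : y ∈ Btw p x) : x = y := by
  by_contra hne
  by_cases hpx : p = x
  · subst hpx
    exact hne (h' {p} isPreconnected_singleton rfl rfl).symm
  set P := connectedComponentIn ({x}ᶜ) p with hP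
  have hpP : p ∈ P := mem_connectedComponentIn hpx
  have hPo : IsOpen P := isOpen_compl_singleton.connectedComponentIn
  have hPc : IsPreconnected P := isPreconnected_connectedComponentIn
  have hxP : x ∉ P := fun hx => connectedComponentIn_subset _ _ hx rfl
  have hyP : y ∉ P := fun hy => hxP (h P hPc hpP hy)
  have hxc : x ∈ closure P := by
    by_contra hx
    have : closure P ⊆ P := by
      refine hPc.closure.subset_connectedComponentIn (subset_closure hpP) ?_
      rintro z hz rfl
      exact hx hz
    have hcl : IsClopen P := ⟨isClosed_of_closure_subset this, hPo⟩
    rcases isClopen_iff.1 hcl with h | h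
    · rw [h] at hpP; exact hpP
    · rw [h] at hxP; exact hxP (mem_univ _)
  have := h' (insert x P) (hPc.subset_closure (subset_insert _ _)
    (insert_subset hxc subset_closure)) (Or.inr hpP) (Or.inl rfl)
  rcases this with h | h
  · exact hne h.symm
  · exact hyP h

lemma Btw.isClosed [ConnectedSpace D] [LocallyPathConnectedSpace D] (a b : D) :
    IsClosed (Btw a b) := by
  rw [← isOpen_compl_iff, isOpen_iff_mem_nhds]
  intro z hz
  have : ∃ C : Set D, IsPreconnected C ∧ a ∈ C ∧ b ∈ C ∧ z ∉ C := by
    simpa [Btw] using hz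
  obtain ⟨C, hC, ha, hb, hzC⟩ := this
  have hCs : C ⊆ connectedComponentIn ({z}ᶜ) a :=
    hC.subset_connectedComponentIn ha (by rintro w hw rfl; exact hzC hw)
  have hPo : IsOpen (connectedComponentIn ({z}ᶜ) a) :=
    isOpen_compl_singleton.connectedComponentIn
  have hPp : IsPathConnected (connectedComponentIn ({z}ᶜ) a) := by
    rw [← hPo.isConnected_iff_isPathConnected]
    exact ⟨⟨a, hCs ha⟩, isPreconnected_connectedComponentIn⟩
  obtain ⟨γ, hγ⟩ := hPp.joinedIn a (hCs ha) b (hCs hb)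
  have hcl : IsClosed (range γ) := (isCompact_range γ.continuous).isClosed
  have hzr : z ∉ range γ := by
    rintro ⟨t, ht⟩
    exact connectedComponentIn_subset _ _ (hγ t) (by rw [ht]; rfl)
  filter_upwards [hcl.isOpen_compl.mem_nhds hzr] with w hw hwB
  exact hw (hwB _ (isPreconnected_range γ.continuous) ⟨0, γ.source⟩ ⟨1, γ.target⟩)

theorem fpp_of_btw [ConnectedSpace D] [LocallyConnectedSpace D] [CompactSpace D]
    [LocallyPathConnectedSpace D]
    (hacc : ∀ x q : D, x ≠ q → ∀ ε > 0, ∃ z ∈ Btw x q, z ≠ x ∧ dist z x < ε)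
    (K : Set D) (hK : IsClosed K) (hKc : IsConnected K) : HasFPP K := by
  intro f hf
  have : CompactSpace K := isCompact_iff_compactSpace.1 hK.isCompact
  by_contra! hne
  obtain ⟨p, hp⟩ := hKc.nonempty
  let S : Set K := {x | (x : D) ∈ Btw p (f x : D)}
  have hS : IsClosed S := by
    rw [← isOpen_compl_iff, isOpen_iff_mem_nhds]
    intro x hx
    have hx' : (x : D) ∉ Btw p (f x : D) := hx
    have hd : 0 < dist x (f x) := dist_pos.2 (hne x).symm
    have h1 : ∀ᶠ y : K in 𝓝 x, (y : D) ∉ Btw p (f x : D) :=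
      continuous_subtype_val.continuousAt.eventually
        ((Btw.isClosed p (f x : D)).isOpen_compl.mem_nhds hx')
    have h2 : ∀ᶠ y : K in 𝓝 x, ∀ z ∈ Btw (f x : D) (f y : D), dist z (f x : D) < dist x (f x) / 2 :=
      (continuous_subtype_val.comp hf).continuousAt.eventually (Btw.small (f x : D) (half_pos hd))
    have h3 : ∀ᶠ y : K in 𝓝 x, dist y x < dist x (f x) / 2 := Metric.ball_mem_nhds x (half_pos hd)
    filter_upwards [h1, h2, h3] with y h1 h2 h3 hy
    rcases Btw.union (b := (f x : D)) hy with h | h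
    · exact h1 h
    · have h4 := h2 _ h
      have := dist_triangle_left x (f x) y
      have e : dist y (f x) = dist (y : D) (f x : D) := rfl
      linarith
  have hge : ∀ a : K, IsClosed {y : K | (a : D) ∈ Btw p (y : D)} := by
    intro a
    rw [← isOpen_compl_iff, isOpen_iff_mem_nhds]
    intro y hy
    have hy' : (a : D) ∉ Btw p (y : D) := hy
    have hay : (a : D) ≠ y := by
      intro h; rw [h] at hy'; exact hy' (Btw.right _ _)
    have h2 : ∀ᶠ y' : K in 𝓝 y, ∀ z ∈ Btw (y : D) (y' : D), dist z (y : D) < dist (a : D) y :=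
      continuous_subtype_val.continuousAt.eventually (Btw.small (y : D) (dist_pos.2 hay))
    filter_upwards [h2] with y' h2 h3
    rcases Btw.union (b := (y : D)) h3 with h | h
    · exact hy' h
    · exact lt_irrefl _ (h2 _ h)
  obtain ⟨m, hm⟩ : ∃ m : S, ∀ a : S, (m : D) ∈ Btw p (a : D) → (a : D) ∈ Btw p (m : D) := by
    refine exists_maximal_of_chains_bounded (r := fun a b : S => (a : D) ∈ Btw p (b : D)) ?_ ?_
    · intro c hc
      rcases c.eq_empty_or_nonempty with rfl | ⟨a0, ha0⟩
      · exact ⟨⟨⟨p, hp⟩, Btw.left _ _⟩, by simp⟩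
      have : Nonempty c := ⟨⟨a0, ha0⟩⟩
      have hn := IsCompact.nonempty_iInter_of_directed_nonempty_isCompact_isClosed
        (fun a : c => S ∩ {y : K | ((a : S) : D) ∈ Btw p (y : D)}) ?_ ?_ ?_ ?_
      · obtain ⟨y, hy⟩ := hn
        rw [mem_iInter] at hy
        exact ⟨⟨y, (hy ⟨a0, ha0⟩).1⟩, fun a ha => (hy ⟨a, ha⟩).2⟩
      · intro a b
        rcases eq_or_ne a b with rfl | hab
        · exact ⟨a, subset_rfl, subset_rfl⟩
        rcases hc a.2 b.2 (fun h => hab (Subtype.ext h)) with h | h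
        · exact ⟨b, fun y hy => ⟨hy.1, Btw.trans h hy.2⟩, subset_rfl⟩
        · exact ⟨a, subset_rfl, fun y hy => ⟨hy.1, Btw.trans h hy.2⟩⟩
      · exact fun a => ⟨a.1, a.1.2, Btw.right _ _⟩
      · exact fun a => (hS.inter (hge _)).isCompact
      · exact fun a => (hS.inter (hge _))
    · exact fun h h' => Btw.trans h h'
  obtain ⟨m, hmS⟩ := m
  have hd : 0 < dist m (f m) := dist_pos.2 (hne m).symm
  have hmS' : (m : D) ∈ Btw p (f m : D) := hmS
  have h2 : ∀ᶠ y : K in 𝓝 m, ∀ z ∈ Btw (f m : D) (f y : D), dist z (f m : D) < dist m (f m) / 2 :=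
    (continuous_subtype_val.comp hf).continuousAt.eventually (Btw.small (f m : D) (half_pos hd))
  have h3 : ∀ᶠ y : K in 𝓝 m, dist y m < dist m (f m) / 2 := Metric.ball_mem_nhds m (half_pos hd)
  obtain ⟨ε, hε, hball⟩ := Metric.eventually_nhds_iff.1 (h2.and h3)
  obtain ⟨z, hz, hzm, hzε⟩ := hacc m (f m) (fun h => hne m (Subtype.ext h.symm)) ε hε
  have hzK : z ∈ K := hz K hKc.isPreconnected m.2 (f m).2
  obtain ⟨h4, h5⟩ := hball (y := ⟨z, hzK⟩) hzε
  have hzfm : z ∈ Btw p (f m : D) := fun C hC hpC hfC => hz C hC (hmS' C hC hpC hfC) hfC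
  have hmz : (m : D) ∈ Btw p z := by
    rcases Btw.union (b := z) hmS' with h | h
    · exact h
    · exact absurd (Btw.antisymm (p := (f m : D)) (Btw.symm h) (Btw.symm hz)).symm hzm
  have hzS : z ∈ Btw p (f ⟨z, hzK⟩ : D) := by
    rcases Btw.union (b := (f ⟨z, hzK⟩ : D)) hzfm with h | h
    · exact h
    · have h6 := h4 _ (Btw.symm h)
      have := dist_triangle_left (m : D) (f m) z
      have e : dist m (f m) = dist (m : D) (f m : D) := rfl
      have e' : dist (⟨z, hzK⟩ : K) m = dist z (m : D) := rfl
      linarith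
  have := hm ⟨⟨z, hzK⟩, hzS⟩ hmz
  exact hzm (Btw.antisymm this hmz)
end btw

/-- path-connectedness of an open connected set upgraded to arcs -/
lemma exists_arc {D : Type*} [MetricSpace D] [CompactSpace D] [LocallyPathConnectedSpace D]
    {U : Set D} (hU : IsOpen U) (hUc : IsConnected U) {x q : D} (hx : x ∈ U) (hq : q ∈ U)
    (hne : x ≠ q) : ∃ γ : ℝ → D, Continuous γ ∧ InjOn γ (Icc 0 1) ∧ γ 0 = x ∧ γ 1 = q ∧
      γ '' Icc 0 1 ⊆ U := by
  obtain ⟨p, hp⟩ := (hU.isConnected_iff_isPathConnected.1 hUc).joinedIn x hx q hq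
  obtain ⟨r, hr, r0, r1, hrs, hrm⟩ := exists_monotone_path (p := p.extend) p.continuous_extend
  have e0 : p.extend 0 = x := p.extend_zero
  have e1 : p.extend 1 = q := p.extend_one
  obtain ⟨γ, hγ, hi, h0, h1, hs⟩ := arc_of_monotone r hr (by rw [r0, r1, e0, e1]; exact hne) hrm
  refine ⟨γ, hγ, hi, by rw [h0, r0, e0], by rw [h1, r1, e1], (hs.trans hrs).trans ?_⟩
  rintro _ ⟨t, ht, rfl⟩
  rw [Path.extend_apply _ ht]
  exact hp _

lemma btw_acc {D : Type*} [MetricSpace D] [CompactSpace D] [ConnectedSpace D]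
    [LocallyPathConnectedSpace D] (hD : ∀ S : Set D, ¬ IsSimpleClosedCurve S) (x q : D)
    (hne : x ≠ q) (ε : ℝ) (hε : ε > 0) : ∃ z ∈ Btw x q, z ≠ x ∧ dist z x < ε := by
  obtain ⟨γ, hγ, hi, h0, h1, -⟩ := exists_arc isOpen_univ isConnected_univ
    (mem_univ x) (mem_univ q) hne
  obtain ⟨δ, hδ, hd⟩ := Metric.continuous_iff.1 hγ 0 ε hε
  have hpos : 0 < min δ 1 / 2 := by positivity
  have hlt : min δ 1 / 2 < δ := by linarith [min_le_left δ 1]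
  have hlt1 : min δ 1 / 2 < 1 := by linarith [min_le_right δ 1]
  set t := min δ 1 / 2
  have htI : t ∈ Icc (0:ℝ) 1 := ⟨hpos.le, hlt1.le⟩
  have hx : γ t ≠ x := by
    intro h
    exact hpos.ne' (hi htI (by simp) (h.trans h0.symm))
  have hq : γ t ≠ q := by
    intro h
    exact hlt1.ne (hi htI (by simp) (h.trans h1.symm))
  refine ⟨γ t, ?_, hx, ?_⟩
  · intro C hC hxC hqC
    by_contra hz
    have hCs : C ⊆ connectedComponentIn ({γ t}ᶜ) x :=
      hC.subset_connectedComponentIn hxC (by intro w hw h; rw [mem_singleton_iff.1 h] at hw; exact hz hw)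
    obtain ⟨η, hη, hηi, e0, e1, hηs⟩ := exists_arc
      (U := connectedComponentIn ({γ t}ᶜ) x) isOpen_compl_singleton.connectedComponentIn
      ⟨⟨x, hCs hxC⟩, isPreconnected_connectedComponentIn⟩ (hCs hxC) (hCs hqC) hne
    obtain ⟨S, hS⟩ := scc_of_arcs γ η hγ hη hi hηi (h0.trans e0.symm) (h1.trans e1.symm) htI
      (fun h => connectedComponentIn_subset _ _ (hηs h) rfl)
    exact hD S hS
  · rw [← h0]
    exact hd t (by rw [Real.dist_eq, sub_zero, abs_of_pos hpos]; exact hlt)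

lemma HasFPP.of_homeo {Y Z : Type*} [TopologicalSpace Y] [TopologicalSpace Z] (e : Y ≃ₜ Z)
    (h : HasFPP Y) : HasFPP Z := by
  intro f hf
  obtain ⟨x, hx⟩ := h (e.symm ∘ f ∘ e) (e.symm.continuous.comp (hf.comp e.continuous))
  refine ⟨e x, ?_⟩
  have := congrArg e hx
  simpa using this

end LD

/-- Every local dendrite (a metric continuum all of whose points have closed dendrite
neighborhoods) has the local fixed point property. -/
theorem stmt_14 {X : Type*} [MetricSpace X] [CompactSpace X] [ConnectedSpace X] [Nonempty X]
    (h : IsLocalDendrite X) : HasLFPP X := by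
  refine ⟨{B | IsOpen B ∧ HasFPP ↥(closure B)}, ?_, fun B hB => hB.2⟩
  refine TopologicalSpace.isTopologicalBasis_of_isOpen_of_nhds (fun B hB => hB.1) ?_
  intro a U ha hU
  obtain ⟨N, hN, hNcl, hNc, hNconn, hNl, hNs⟩ := h a
  have : CompactSpace N := isCompact_iff_compactSpace.1 hNc
  have : ConnectedSpace N := isConnected_iff_connectedSpace.1 hNconn
  have : LocallyPathConnectedSpace N := LD.locallyPathConnected
  have hemb : IsClosedEmbedding (Subtype.val : N → X) := hNcl.isClosedEmbedding_subtypeVal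
  have hD : ∀ S : Set N, ¬ IsSimpleClosedCurve S := by
    rintro S ⟨e⟩
    refine hNs (Subtype.val '' S) (by rintro _ ⟨y, -, rfl⟩; exact y.2) ⟨?_⟩
    exact (hemb.isEmbedding.homeomorphImage S).symm.trans e
  have haN : a ∈ interior N := mem_interior_iff_mem_nhds.2 hN
  let V : Set N := Subtype.val ⁻¹' (U ∩ interior N)
  have hV : IsOpen V := (hU.inter isOpen_interior).preimage continuous_subtype_val
  let a' : N := ⟨a, interior_subset haN⟩
  have haV : a' ∈ V := ⟨ha, haN⟩
  let B' : Set N := connectedComponentIn V a'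
  have hB'o : IsOpen B' := hV.connectedComponentIn
  have hB'c : IsConnected B' := ⟨⟨a', mem_connectedComponentIn haV⟩, isPreconnected_connectedComponentIn⟩
  have hB'V : B' ⊆ V := connectedComponentIn_subset _ _
  have hfpp : HasFPP ↥(closure B') :=
    LD.fpp_of_btw (LD.btw_acc hD) (closure B') isClosed_closure hB'c.closure
  refine ⟨Subtype.val '' B', ⟨?_, ?_⟩, ⟨a', mem_connectedComponentIn haV, rfl⟩, ?_⟩
  · obtain ⟨O, hO, hOB⟩ := isOpen_induced_iff.1 hB'o
    have : Subtype.val '' B' = O ∩ interior N := by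
      ext y
      constructor
      · rintro ⟨z, hz, rfl⟩
        exact ⟨by rw [← hOB] at hz; exact hz, (hB'V hz).2⟩
      · rintro ⟨hyO, hyN⟩
        exact ⟨⟨y, interior_subset hyN⟩, by rw [← hOB]; exact hyO, rfl⟩
    rw [this]
    exact hO.inter isOpen_interior
  · rw [hemb.closure_image_eq]
    exact LD.HasFPP.of_homeo (hemb.isEmbedding.homeomorphImage _) hfpp
  · rintro _ ⟨z, hz, rfl⟩
    exact (hB'V hz).1
end
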